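/- Let (ζ_n)_{n≥1} ⊆ (0,1/2) with limsup_n ζ_n < 1/2, let E = E_{(ζ_n)} be the associated generalized Cantor set, and assume ∫_0^1 dt/|E_t| < ∞ (equivalently, E has positive logarithmic capacity), where E_t = {ζ ∈ 𝕋 : dist(ζ,E) ≤ t}. Let ω : (0,π] → (0,∞) be continuous and increasing, with t ↦ ω(t^γ) concave for some γ > 2, t ↦ tω'(t)/ω(t) increasing, and log ω(dist(·,E)) ∈ L¹(𝕋). Then the following are equivalent: (1) f_{ω,E} ∈ 𝒟; (2) f_{ω,E} is a multiplier of 𝒟; (3) ∫_𝕋 dist(ζ,E) ω'(dist(ζ,E))² |dζ| < ∞. -/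

import Mathlib

open MeasureTheory Real Set

noncomputable section

/-- The unit circle in `ℂ`. -/
def circleT : Set ℂ := Metric.sphere (0 : ℂ) 1

/-- Arc-length parametrization of the unit circle. -/
def cpt (θ : ℝ) : ℂ := Complex.exp (θ * Complex.I)

/-- Distance from a point to a set. -/
def dE (E : Set ℂ) (ζ : ℂ) : ℝ := Metric.infDist ζ E

/-- Arc-length integral over the whole circle. -/
def circInt (f : ℂ → ℝ) : ℝ := ∫ θ in Set.Ioc 0 (2 * π), f (cpt θ)

/-- Arc-length integral over a subset `Λ` of the circle. -/
def circIntOn (Λ : Set ℂ) (f : ℂ → ℝ) : ℝ :=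
  ∫ θ in {θ ∈ Set.Ioc 0 (2 * π) | cpt θ ∈ Λ}, f (cpt θ)

/-- `E` has arc-length (Lebesgue) measure zero. -/
def MeasureZeroOnCircle (E : Set ℂ) : Prop :=
  volume {θ ∈ Set.Ioc 0 (2 * π) | cpt θ ∈ E} = 0

/-- `E` is a Carleson set: `∫_𝕋 log dist(ζ,E) |dζ| > -∞`. -/
def CarlesonSet (E : Set ℂ) : Prop :=
  IntegrableOn (fun θ => Real.log (dE E (cpt θ))) (Set.Ioc 0 (2 * π)) volume

/-- `I(ζ,E)`: the connected component of `𝕋 \ E` containing `ζ`. -/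
def compArc (E : Set ℂ) (ζ : ℂ) : Set ℂ := connectedComponentIn (circleT \ E) ζ

/-- `Γ(ζ,E)`. -/
def GammaSet (E : Set ℂ) (ζ : ℂ) : Set ℂ :=
  {ζ' ∈ circleT \ compArc E ζ | dE E ζ' ≤ dE E ζ}

/-- `Σ(ζ,E)`. -/
def SigmaSet (E : Set ℂ) (ζ : ℂ) : Set ℂ :=
  {ζ' ∈ circleT \ compArc E ζ | dE E ζ ≤ dE E ζ'}

/-- The Richter–Sundberg integrand for the outer function with boundary modulus
`ω(dist(·,E))`. -/
def RSker (ω : ℝ → ℝ) (E : Set ℂ) (ζ ζ' : ℂ) : ℝ :=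
  ((ω (dE E ζ')) ^ 2 - (ω (dE E ζ)) ^ 2
    - 2 * (ω (dE E ζ)) ^ 2 * Real.log (ω (dE E ζ') / ω (dE E ζ))) / ‖ζ - ζ'‖ ^ 2

/-- Local Dirichlet integral `D_ζ(f_{ω,E})` (Richter–Sundberg formula). -/
def locDir (ω : ℝ → ℝ) (E : Set ℂ) (ζ : ℂ) : ℝ :=
  (1 / (2 * π)) * circInt (fun ζ' => RSker ω E ζ ζ')

/-- Local Dirichlet integral restricted to `Λ`. -/
def locDirOn (ω : ℝ → ℝ) (E : Set ℂ) (Λ : Set ℂ) (ζ : ℂ) : ℝ :=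
  (1 / (2 * π)) * circIntOn Λ (fun ζ' => RSker ω E ζ ζ')

/-- `E` is an `𝓛₁`-set. -/
def L1Set (E : Set ℂ) : Prop :=
  ∃ C > 0, ∀ ζ ∈ circleT \ E,
    circIntOn (GammaSet E ζ)
      (fun ζ' => Real.log (dE E ζ / dE E ζ') / ‖ζ - ζ'‖ ^ 2) ≤ C / dE E ζ

/-- The `𝓛₂` inequality with constant `C`. -/
def L2With (E : Set ℂ) (C : ℝ) : Prop :=
  ∀ ζ ∈ circleT \ E,
    circIntOn (GammaSet E ζ)
      (fun ζ' => (Real.log (dE E ζ / dE E ζ')) ^ 2 / ‖ζ - ζ'‖ ^ 2) ≤ C / dE E ζ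

/-- `E` is an `𝓛₂`-set. -/
def L2Set (E : Set ℂ) : Prop := ∃ C > 0, L2With E C

/-- Supremum of `dist(·,E)` over the arc `cpt '' (a,b]`. -/
def arcSup (E : Set ℂ) (a b : ℝ) : ℝ := sSup ((fun θ => dE E (cpt θ)) '' Set.Ioc a b)

/-- `E` is a `𝒦`-set (Kotochigov). -/
def KSet (E : Set ℂ) : Prop :=
  ∃ c > 0, ∀ a b : ℝ, a < b → b ≤ a + 2 * π → c * (b - a) ≤ arcSup E a b

/-- Integral of a weight over the arc `cpt '' (a,b]` (with respect to arc length). -/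
def arcInt (w : ℂ → ℝ) (a b : ℝ) : ℝ := ∫ θ in Set.Ioc a b, w (cpt θ)

/-- Double logarithmic integral of a weight over an arc. -/
def arcDouble (w : ℂ → ℝ) (a b : ℝ) : ℝ :=
  ∫ θ in Set.Ioc a b, (∫ θ' in Set.Ioc a b,
    Real.log (1 / ‖cpt θ - cpt θ'‖) * w (cpt θ) * w (cpt θ'))

/-- Arc-length measure of `{ζ ∈ I : dist(ζ,E) ≤ t}` for the arc `cpt '' (a,b]`. -/
def sublevelMeas (E : Set ℂ) (a b t : ℝ) : ℝ :=
  (volume {θ ∈ Set.Ioc a b | dE E (cpt θ) ≤ t}).toReal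

/-- Arc-length measure of `E_t = {ζ ∈ 𝕋 : dist(ζ,E) ≤ t}`. -/
def EtMeas (E : Set ℂ) (t : ℝ) : ℝ := sublevelMeas E 0 (2 * π) t

/-- The open unit disc. -/
def unitDisc : Set ℂ := Metric.ball (0 : ℂ) 1

/-- Membership in the (holomorphic) Dirichlet space `𝒟`. -/
def MemDirichlet (f : ℂ → ℂ) : Prop :=
  DifferentiableOn ℂ f unitDisc ∧
  (∃ M : ℝ, ∀ r ∈ Set.Ioo (0 : ℝ) 1,
    (∫ θ in Set.Ioc 0 (2 * π), ‖f ((r : ℂ) * cpt θ)‖ ^ 2) ≤ M) ∧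
  IntegrableOn (fun z => ‖deriv f z‖ ^ 2) unitDisc volume

/-- `f` is a multiplier of the Dirichlet space `𝒟`. -/
def IsMultiplierD (f : ℂ → ℂ) : Prop :=
  ∀ g : ℂ → ℂ, MemDirichlet g → MemDirichlet (fun z => f z * g z)

/-- The outer function `f_{ω,E}` with boundary modulus `ω(dist(·,E))`. -/
def outerFun (ω : ℝ → ℝ) (E : Set ℂ) (z : ℂ) : ℂ :=
  Complex.exp ((((2 * π)⁻¹ : ℝ) : ℂ) * ∫ θ in Set.Ioc 0 (2 * π),
    ((cpt θ + z) / (cpt θ - z)) * ((Real.log (ω (dE E (cpt θ))) : ℝ) : ℂ))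

/-- `log ω(dist(·,E)) ∈ L¹(𝕋)`. -/
def LogOmegaInt (ω : ℝ → ℝ) (E : Set ℂ) : Prop :=
  IntegrableOn (fun θ => Real.log (ω (dE E (cpt θ)))) (Set.Ioc 0 (2 * π)) volume

/-- Standing hypotheses on `ω` (with derivative `ω'`): continuous, positive, increasing on
`(0,π]`, differentiable with derivative `ω'`, `t ↦ ω(t^γ)` concave, and `t ↦ tω'(t)/ω(t)`
increasing. -/
def OmegaHyp (ω ω' : ℝ → ℝ) (γ : ℝ) : Prop :=
  ContinuousOn ω (Set.Ioc 0 π) ∧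
  (∀ t ∈ Set.Ioc (0 : ℝ) π, 0 < ω t) ∧
  MonotoneOn ω (Set.Ioc 0 π) ∧
  (∀ t ∈ Set.Ioo (0 : ℝ) π, HasDerivAt ω (ω' t) t) ∧
  ConcaveOn ℝ (Set.Ioc 0 (π ^ γ⁻¹)) (fun t => ω (t ^ γ)) ∧
  MonotoneOn (fun t => t * ω' t / ω t) (Set.Ioo 0 π)

/-- The generalized Cantor set `E_{(ζ_n)}` (with `ξ k` playing the role of `ζ_{k+1}`). -/
def gCantorSet (ξ : ℕ → ℝ) : Set ℂ :=
  {z | ∃ ε : ℕ → Bool, z = Complex.exp (((2 * π : ℝ) : ℂ) * Complex.I *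
    ((∑' n : ℕ, (if ε n then (1 : ℝ) else 0) * (∏ k ∈ Finset.range n, ξ k) * (1 - ξ n) : ℝ) : ℂ))}

end

section

open Filter Topology
open scoped ENNReal

/-- Arc-length measure on the circle, in the angular variable. -/
noncomputable abbrev circMeas : Measure ℝ := volume.restrict (Ioc 0 (2 * π))

lemma cpt_def (θ : ℝ) : cpt θ = Complex.exp (θ * Complex.I) := rfl

@[fun_prop]
lemma continuous_cpt : Continuous cpt := by
  unfold cpt; fun_prop

@[fun_prop]
lemma measurable_cpt : Measurable cpt := continuous_cpt.measurable

lemma norm_cpt (θ : ℝ) : ‖cpt θ‖ = 1 := Complex.norm_exp_ofReal_mul_I θ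

lemma cpt_ne_zero (θ : ℝ) : cpt θ ≠ 0 := Complex.exp_ne_zero _

lemma cpt_periodic : Function.Periodic cpt (2 * π) := by
  intro θ
  simp only [cpt]
  push_cast
  rw [add_mul, Complex.exp_add, Complex.exp_two_pi_mul_I, mul_one]

lemma cpt_add (θ φ : ℝ) : cpt (θ + φ) = cpt θ * cpt φ := by
  simp [cpt, add_mul, Complex.exp_add]

lemma norm_cpt_sub (θ φ : ℝ) : ‖cpt θ - cpt φ‖ = 2 * |sin ((θ - φ) / 2)| := by
  have h : cpt θ - cpt φ = cpt φ * (Complex.exp (Complex.I * ((θ - φ : ℝ) : ℂ)) - 1) := by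
    rw [mul_sub, mul_one, cpt, cpt, ← Complex.exp_add]
    congr 2
    push_cast
    ring
  rw [h, norm_mul, norm_cpt, one_mul, Complex.norm_exp_I_mul_ofReal_sub_one]
  rw [norm_mul, Real.norm_eq_abs, Real.norm_eq_abs, abs_of_pos (by norm_num : (0:ℝ) < 2)]

lemma norm_cpt_sub_le (θ φ : ℝ) : ‖cpt θ - cpt φ‖ ≤ |θ - φ| := by
  rw [norm_cpt_sub]
  have := abs_sin_le_abs (x := (θ - φ) / 2)
  rw [abs_div, abs_of_pos (by norm_num : (0:ℝ) < 2)] at this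
  linarith

/-- Points close on the circle are close in angle, up to a full turn. -/
lemma angle_close {θ φ R : ℝ} (h : |θ - φ| ≤ 2 * π) (hR : ‖cpt θ - cpt φ‖ ≤ R) :
    |θ - φ| ≤ π / 2 * R ∨ |θ - φ - 2 * π| ≤ π / 2 * R ∨ |θ - φ + 2 * π| ≤ π / 2 * R := by
  have key : ∀ y : ℝ, 0 ≤ y → y ≤ 2 * π → 2 * sin (y / 2) ≤ R →
      y ≤ π / 2 * R ∨ 2 * π - y ≤ π / 2 * R := by
    intro y h0 h1 h2
    have hp := pi_pos
    rcases le_total y π with hy | hy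
    · left
      have := mul_le_sin (x := y / 2) (by linarith) (by linarith)
      have h3 : 2 / π * y ≤ R := by linarith
      have h4 : y = π / 2 * (2 / π * y) := by field_simp
      rw [h4]; gcongr
    · right
      have := mul_le_sin (x := (2 * π - y) / 2) (by linarith) (by linarith)
      have h5 : sin ((2 * π - y) / 2) = sin (y / 2) := by
        rw [← sin_pi_sub]; congr 1; ring
      rw [h5] at this
      have h3 : 2 / π * (2 * π - y) ≤ R := by linarith
      have h4 : 2 * π - y = π / 2 * (2 / π * (2 * π - y)) := by field_simp
      rw [h4]; gcongr
  rw [norm_cpt_sub] at hR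
  have hs : 2 * sin (|θ - φ| / 2) ≤ R := by
    refine le_trans ?_ hR
    gcongr
    rcases abs_cases (θ - φ) with ⟨h1, _⟩ | ⟨h1, _⟩
    · rw [h1]; exact le_abs_self _
    · rw [h1, neg_div, sin_neg]; exact neg_le_abs _
  rcases key _ (abs_nonneg _) h hs with h1 | h1
  · exact Or.inl h1
  · rcases abs_cases (θ - φ) with ⟨h2, _⟩ | ⟨h2, _⟩
    · right; left
      rw [abs_sub_comm, abs_of_nonneg (by linarith)]; linarith
    · right; right
      rw [abs_of_nonneg (by linarith)]; linarith

lemma circMeas_closedBall_le (v : ℂ) {R : ℝ} (hR : 0 ≤ R) :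
    circMeas {φ | ‖cpt φ - v‖ ≤ R} ≤ ENNReal.ofReal (6 * π * R) := by
  rw [Measure.restrict_apply (by
    exact measurableSet_le (by fun_prop) measurable_const)]
  rcases Set.eq_empty_or_nonempty ({φ | ‖cpt φ - v‖ ≤ R} ∩ Ioc 0 (2 * π)) with h | ⟨x, hx, hx'⟩
  · rw [h]; simp
  have hsub : {φ | ‖cpt φ - v‖ ≤ R} ∩ Ioc 0 (2 * π) ⊆
      (Icc (x - π * R) (x + π * R) ∪ Icc (x + 2 * π - π * R) (x + 2 * π + π * R)) ∪
        Icc (x - 2 * π - π * R) (x - 2 * π + π * R) := by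
    rintro y ⟨hy, hy'⟩
    have h1 : |y - x| ≤ 2 * π := by
      rw [abs_le]; constructor <;> linarith [hy'.1, hy'.2, hx'.1, hx'.2]
    have h2 : ‖cpt y - cpt x‖ ≤ 2 * R := by
      have : cpt y - cpt x = (cpt y - v) - (cpt x - v) := by ring
      rw [this]
      refine (norm_sub_le _ _).trans ?_
      simp only [mem_ofPred_eq] at hx hy
      linarith
    rcases angle_close h1 h2 with h | h | h
    · left; left; rw [abs_le] at h; constructor <;> linarith
    · left; right; rw [abs_le] at h; constructor <;> linarith
    · right; rw [abs_le] at h; constructor <;> linarith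
  refine (measure_mono hsub).trans ?_
  refine (measure_union_le _ _).trans ?_
  refine (add_le_add_left (measure_union_le _ _) _).trans ?_
  simp only [Real.volume_Icc]
  have hp : 0 ≤ π * R := by positivity
  rw [← ENNReal.ofReal_add (by linarith) (by linarith),
    ← ENNReal.ofReal_add (by linarith) (by linarith)]
  apply ENNReal.ofReal_le_ofReal
  linarith

lemma le_circMeas_closedBall {x t : ℝ} (hx : x ∈ Icc 0 (2 * π)) (ht : t ≤ 1) :
    ENNReal.ofReal t ≤ circMeas {φ | ‖cpt φ - cpt x‖ ≤ t} := by
  rcases le_or_gt t 0 with h0 | h0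
  · rw [ENNReal.ofReal_of_nonpos h0]; exact zero_le
  rw [Measure.restrict_apply (by
    exact measurableSet_le (by fun_prop) measurable_const)]
  have hp : 3 < π := pi_gt_three
  rcases le_total x π with h | h
  · have : Ioc x (x + t) ⊆ {φ | ‖cpt φ - cpt x‖ ≤ t} ∩ Ioc 0 (2 * π) := by
      rintro y ⟨h1, h2⟩
      refine ⟨(norm_cpt_sub_le _ _).trans ?_, ?_, ?_⟩
      · rw [abs_of_nonneg] <;> linarith
      · linarith [hx.1]
      · linarith
    refine le_trans ?_ (measure_mono this)
    simp
  · have : Ioc (x - t) x ⊆ {φ | ‖cpt φ - cpt x‖ ≤ t} ∩ Ioc 0 (2 * π) := by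
      rintro y ⟨h1, h2⟩
      refine ⟨(norm_cpt_sub_le _ _).trans ?_, ?_, ?_⟩
      · rw [abs_of_nonpos] <;> linarith
      · linarith
      · linarith [hx.2]
    refine le_trans ?_ (measure_mono this)
    simp

lemma circMeas_univ : circMeas univ = ENNReal.ofReal (2 * π) := by
  simp

lemma dE_nonneg (E : Set ℂ) (z : ℂ) : 0 ≤ dE E z := Metric.infDist_nonneg

lemma dE_le_add (E : Set ℂ) (z w : ℂ) : dE E z ≤ dE E w + ‖z - w‖ := by
  rw [← dist_eq_norm]; exact Metric.infDist_le_infDist_add_dist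

@[fun_prop]
lemma continuous_dE (E : Set ℂ) : Continuous (dE E) := Metric.continuous_infDist_pt E

@[fun_prop]
lemma measurable_dE (E : Set ℂ) : Measurable (dE E) := (continuous_dE E).measurable

lemma continuous_dE_cpt (E : Set ℂ) : Continuous fun θ => dE E (cpt θ) :=
  (continuous_dE E).comp continuous_cpt

/-- Arc-length measure of the `t`-neighbourhood of `E` in the circle, as an extended real. -/
noncomputable def nbhdMeas (E : Set ℂ) (t : ℝ) : ℝ≥0∞ := circMeas {φ | dE E (cpt φ) ≤ t}

lemma nbhdMeas_mono (E : Set ℂ) : Monotone (nbhdMeas E) := fun _ _ h =>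
  measure_mono fun _ hφ => le_trans hφ h

lemma nbhdMeas_le (E : Set ℂ) (t : ℝ) : nbhdMeas E t ≤ ENNReal.ofReal (2 * π) :=
  (measure_mono (subset_univ _)).trans circMeas_univ.le

section Cantor

/-- Length of the intervals of generation `n` in the Cantor construction. -/
noncomputable def ell (ξ : ℕ → ℝ) (n : ℕ) : ℝ := ∏ k ∈ Finset.range n, ξ k

/-- The `n`-th digit contribution of a Cantor point. -/
noncomputable def cantorTerm (ξ : ℕ → ℝ) (ε : ℕ → Bool) (n : ℕ) : ℝ :=
  (if ε n then (1 : ℝ) else 0) * (∏ k ∈ Finset.range n, ξ k) * (1 - ξ n)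

/-- The left endpoint of the interval of generation `n` containing the point coded by `ε`. -/
noncomputable def cantorPre (ξ : ℕ → ℝ) (ε : ℕ → Bool) (n : ℕ) : ℝ :=
  ∑ k ∈ Finset.range n, cantorTerm ξ ε k

/-- The Cantor point coded by `ε`. -/
noncomputable def cantorPt (ξ : ℕ → ℝ) (ε : ℕ → Bool) : ℝ := ∑' n, cantorTerm ξ ε n

lemma ell_zero (ξ : ℕ → ℝ) : ell ξ 0 = 1 := by simp [ell]

lemma ell_succ (ξ : ℕ → ℝ) (n : ℕ) : ell ξ (n + 1) = ell ξ n * ξ n := by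
  simp [ell, Finset.prod_range_succ]

variable {ξ : ℕ → ℝ}

lemma ell_pos (hξ : ∀ n, ξ n ∈ Ioo (0:ℝ) (1/2)) (n : ℕ) : 0 < ell ξ n :=
  Finset.prod_pos fun k _ => (hξ k).1

lemma two_mul_ell_succ_le (hξ : ∀ n, ξ n ∈ Ioo (0:ℝ) (1/2)) (n : ℕ) :
    2 * ell ξ (n + 1) ≤ ell ξ n := by
  rw [ell_succ]
  nlinarith [ell_pos hξ n, (hξ n).2]

lemma ell_antitone (hξ : ∀ n, ξ n ∈ Ioo (0:ℝ) (1/2)) : Antitone (ell ξ) :=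
  antitone_nat_of_succ_le fun n => by
    have := two_mul_ell_succ_le hξ n
    linarith [ell_pos hξ (n + 1)]

lemma cantorTerm_mem (hξ : ∀ n, ξ n ∈ Ioo (0:ℝ) (1/2)) (ε : ℕ → Bool) (n : ℕ) :
    cantorTerm ξ ε n ∈ Icc 0 (ell ξ n - ell ξ (n + 1)) := by
  have h1 := ell_pos hξ n
  have h2 := hξ n
  unfold cantorTerm
  rw [ell_succ]
  change (if ε n then (1 : ℝ) else 0) * ell ξ n * (1 - ξ n) ∈ _
  split_ifs
  · constructor <;> nlinarith [h2.1, h2.2]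
  · constructor <;> nlinarith [h2.1, h2.2]

lemma cantorPre_sub_mem (hξ : ∀ n, ξ n ∈ Ioo (0:ℝ) (1/2)) (ε : ℕ → Bool) {m n : ℕ}
    (h : m ≤ n) :
    cantorPre ξ ε n - cantorPre ξ ε m ∈ Icc 0 (ell ξ m - ell ξ n) := by
  induction n, h using Nat.le_induction with
  | base => simp
  | succ n _ ih =>
    have h1 : cantorPre ξ ε (n + 1) = cantorPre ξ ε n + cantorTerm ξ ε n := by
      simp [cantorPre, Finset.sum_range_succ]
    have h2 := cantorTerm_mem hξ ε n
    rw [h1]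
    constructor <;> linarith [ih.1, ih.2, h2.1, h2.2]

lemma ell_le_pow (hξ : ∀ n, ξ n ∈ Ioo (0:ℝ) (1/2)) (n : ℕ) : ell ξ n ≤ (1/2) ^ n := by
  unfold ell
  calc _ ≤ ∏ k ∈ Finset.range n, (1/2 : ℝ) :=
        Finset.prod_le_prod (fun k _ => (hξ k).1.le) fun k _ => (hξ k).2.le
    _ = _ := by simp

lemma tendsto_ell (hξ : ∀ n, ξ n ∈ Ioo (0:ℝ) (1/2)) : Tendsto (ell ξ) atTop (𝓝 0) :=
  squeeze_zero (fun n => (ell_pos hξ n).le) (ell_le_pow hξ)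
    (tendsto_pow_atTop_nhds_zero_of_lt_one (by norm_num) (by norm_num))

lemma summable_ell (hξ : ∀ n, ξ n ∈ Ioo (0:ℝ) (1/2)) : Summable (ell ξ) :=
  Summable.of_nonneg_of_le (fun n => (ell_pos hξ n).le) (ell_le_pow hξ)
    (summable_geometric_of_lt_one (by norm_num) (by norm_num))

lemma cantorTerm_norm_le (hξ : ∀ n, ξ n ∈ Ioo (0:ℝ) (1/2)) (ε : ℕ → Bool) (n : ℕ) :
    ‖cantorTerm ξ ε n‖ ≤ ell ξ n := by
  have := cantorTerm_mem hξ ε n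
  rw [Real.norm_of_nonneg this.1]
  linarith [this.2, ell_pos hξ (n + 1)]

lemma cantorPt_sub_pre_mem (hξ : ∀ n, ξ n ∈ Ioo (0:ℝ) (1/2)) (ε : ℕ → Bool) (n : ℕ) :
    cantorPt ξ ε - cantorPre ξ ε n ∈ Icc 0 (ell ξ n) := by
  have hs : Summable (cantorTerm ξ ε) :=
    Summable.of_norm_bounded (summable_ell hξ) (cantorTerm_norm_le hξ ε)
  have ht : Tendsto (fun m => cantorPre ξ ε m - cantorPre ξ ε n) atTop
      (𝓝 (cantorPt ξ ε - cantorPre ξ ε n)) :=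
    (hs.hasSum.tendsto_sum_nat).sub_const _
  constructor
  · exact ge_of_tendsto ht (eventually_atTop.2 ⟨n, fun m hm => (cantorPre_sub_mem hξ ε hm).1⟩)
  · refine le_of_tendsto ht (eventually_atTop.2 ⟨n, fun m hm => ?_⟩)
    linarith [(cantorPre_sub_mem hξ ε hm).2, ell_pos hξ m]

lemma cantorPt_mem (hξ : ∀ n, ξ n ∈ Ioo (0:ℝ) (1/2)) (ε : ℕ → Bool) :
    cantorPt ξ ε ∈ Icc (0:ℝ) 1 := by
  have := cantorPt_sub_pre_mem hξ ε 0
  simpa [cantorPre, ell_zero] using this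

lemma continuous_cantorPt (hξ : ∀ n, ξ n ∈ Ioo (0:ℝ) (1/2)) : Continuous (cantorPt ξ) := by
  refine continuous_tsum (fun n => ?_) (summable_ell hξ) (fun n ε => cantorTerm_norm_le hξ ε n)
  have : (fun ε : ℕ → Bool => cantorTerm ξ ε n) =
      (fun b : Bool => (if b then (1 : ℝ) else 0) * (∏ k ∈ Finset.range n, ξ k) * (1 - ξ n)) ∘
        fun ε : ℕ → Bool => ε n := rfl
  rw [this]
  exact continuous_of_discreteTopology.comp (continuous_apply n)

/-- Left endpoints of distinct intervals of generation `n` are `ell ξ n`-separated. -/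
lemma cantorPre_separated (hξ : ∀ n, ξ n ∈ Ioo (0:ℝ) (1/2)) (ε ε' : ℕ → Bool) (n : ℕ)
    (h : |cantorPre ξ ε n - cantorPre ξ ε' n| < ell ξ n) : ∀ k < n, ε k = ε' k := by
  induction n with
  | zero => intro k hk; omega
  | succ n ih =>
    have h1 : ∀ ε, cantorPre ξ ε (n + 1) = cantorPre ξ ε n + cantorTerm ξ ε n := by
      intro ε; simp [cantorPre, Finset.sum_range_succ]
    have h2 := cantorTerm_mem hξ ε n
    have h2' := cantorTerm_mem hξ ε' n
    have h3 := two_mul_ell_succ_le hξ n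
    rw [h1, h1, abs_lt] at h
    have hn : ∀ k < n, ε k = ε' k := by
      apply ih
      rw [abs_lt]
      constructor <;> linarith [h.1, h.2, h2.1, h2.2, h2'.1, h2'.2]
    intro k hk
    rcases Nat.lt_succ_iff_lt_or_eq.1 hk with hk | rfl
    · exact hn k hk
    have h4 : cantorPre ξ ε k = cantorPre ξ ε' k := by
      refine Finset.sum_congr rfl fun j hj => ?_
      simp only [cantorTerm, hn j (Finset.mem_range.1 hj)]
    rw [h4] at h
    have h5 : ell ξ k * (1 - ξ k) = ell ξ k - ell ξ (k + 1) := by rw [ell_succ]; ring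
    unfold cantorTerm at h
    change -ell ξ (k + 1) < cantorPre ξ ε' k + (if ε k then (1 : ℝ) else 0) * ell ξ k * (1 - ξ k) -
      (cantorPre ξ ε' k + (if ε' k then (1 : ℝ) else 0) * ell ξ k * (1 - ξ k)) ∧
      cantorPre ξ ε' k + (if ε k then (1 : ℝ) else 0) * ell ξ k * (1 - ξ k) -
      (cantorPre ξ ε' k + (if ε' k then (1 : ℝ) else 0) * ell ξ k * (1 - ξ k)) < ell ξ (k + 1) at h
    rcases hb : ε k <;> rcases hb' : ε' k <;> simp only [hb, hb'] at h <;> simp at h ⊢ <;> linarith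

/-- The fair coin. -/
noncomputable def coin : Measure Bool := (2⁻¹ : ℝ≥0∞) • Measure.count

lemma coin_singleton (b : Bool) : coin {b} = 2⁻¹ := by simp [coin]

instance : IsProbabilityMeasure coin := ⟨by
  rw [coin, Measure.smul_apply, Measure.count_univ]
  simp [ENNReal.inv_mul_cancel]⟩

/-- Infinite sequence of fair coin tosses. -/
noncomputable def tosses : Measure (ℕ → Bool) := Measure.infinitePi fun _ => coin

instance : IsProbabilityMeasure tosses := by unfold tosses; infer_instance

lemma tosses_cylinder (ε₀ : ℕ → Bool) (n : ℕ) :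
    tosses {ε | ∀ k < n, ε k = ε₀ k} = (2⁻¹ : ℝ≥0∞) ^ n := by
  have : {ε : ℕ → Bool | ∀ k < n, ε k = ε₀ k} =
      Set.pi (Finset.range n : Finset ℕ) (fun k => {ε₀ k}) := by
    ext ε; simp [Set.mem_pi]
  rw [this, tosses, Measure.infinitePi_pi _ (fun i _ => measurableSet_singleton _)]
  simp [coin_singleton]

/-- The tosses landing in an interval of length comparable to `ell ξ k`. -/
lemma tosses_interval_le (hξ : ∀ n, ξ n ∈ Ioo (0:ℝ) (1/2)) (x : ℝ) (k M : ℕ) :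
    tosses {ε | |cantorPt ξ ε - x| ≤ M * ell ξ k} ≤ (2 * M + 2) * (2⁻¹ : ℝ≥0∞) ^ k := by
  have hl := ell_pos hξ k
  let F : (ℕ → Bool) → ℤ := fun ε => ⌊(cantorPre ξ ε k - x) / ell ξ k⌋
  have hsub : {ε | |cantorPt ξ ε - x| ≤ M * ell ξ k} ⊆
      ⋃ j ∈ Finset.Icc (-(M:ℤ) - 1) M, {ε | F ε = j} := by
    intro ε hε
    simp only [mem_ofPred_eq, abs_le] at hε
    have h := cantorPt_sub_pre_mem hξ ε k
    simp only [mem_iUnion, mem_ofPred_eq, exists_prop, exists_eq_right', Finset.mem_Icc]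
    constructor
    · rw [Int.le_floor]; push_cast
      rw [le_div_iff₀ hl]; linarith [h.1, h.2]
    · rw [← Int.lt_add_one_iff, Int.floor_lt]; push_cast
      rw [div_lt_iff₀ hl]; linarith [h.1, h.2]
  refine (measure_mono hsub).trans ((measure_biUnion_finset_le _ _).trans ?_)
  have hj : ∀ j ∈ Finset.Icc (-(M:ℤ) - 1) M, tosses {ε | F ε = j} ≤ (2⁻¹ : ℝ≥0∞) ^ k := by
    intro j _
    rcases Set.eq_empty_or_nonempty {ε | F ε = j} with h | ⟨ε₀, h₀⟩
    · rw [h]; simp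
    rw [← tosses_cylinder ε₀ k]
    refine measure_mono fun ε hε => cantorPre_separated hξ ε ε₀ k ?_
    have h1 : F ε = F ε₀ := by rw [h₀, hε]
    have h2 := Int.abs_sub_lt_one_of_floor_eq_floor h1
    rw [← sub_div, abs_div, abs_of_pos hl, div_lt_one hl] at h2
    have h3 : cantorPre ξ ε k - x -
        (cantorPre ξ ε₀ k - x) = cantorPre ξ ε k - cantorPre ξ ε₀ k := by
      ring
    rwa [h3] at h2
  refine (Finset.sum_le_sum hj).trans ?_
  simp only [Finset.sum_const, Int.card_Icc, nsmul_eq_mul]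
  gcongr
  have : (↑M + 1 - (-(M:ℤ) - 1)).toNat = 2 * M + 2 := by omega
  rw [this]; push_cast; exact le_rfl

/-- The point of the circle coded by `ε`. -/
noncomputable def cantorCirc (ξ : ℕ → ℝ) (ε : ℕ → Bool) : ℂ := cpt (2 * π * cantorPt ξ ε)

lemma continuous_cantorCirc (hξ : ∀ n, ξ n ∈ Ioo (0:ℝ) (1/2)) : Continuous (cantorCirc ξ) := by
  have := continuous_cantorPt hξ
  unfold cantorCirc; fun_prop

lemma gCantorSet_eq_range (ξ : ℕ → ℝ) : gCantorSet ξ = range (cantorCirc ξ) := by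
  ext z
  simp only [gCantorSet, mem_ofPred_eq, mem_range, cantorCirc, cpt, cantorPt, cantorTerm]
  refine exists_congr fun ε => ?_
  rw [eq_comm]
  have : ∀ x : ℝ, ((2 * π : ℝ) : ℂ) * Complex.I * (x : ℂ) = ((2 * π * x : ℝ) : ℂ) * Complex.I := by
    intro x; push_cast; ring
  rw [← this]

lemma isCompact_gCantorSet (hξ : ∀ n, ξ n ∈ Ioo (0:ℝ) (1/2)) : IsCompact (gCantorSet ξ) := by
  rw [gCantorSet_eq_range]; exact isCompact_range (continuous_cantorCirc hξ)

lemma gCantorSet_nonempty (ξ : ℕ → ℝ) : (gCantorSet ξ).Nonempty := by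
  rw [gCantorSet_eq_range]; exact range_nonempty _

lemma gCantorSet_norm {z : ℂ} (hz : z ∈ gCantorSet ξ) : ‖z‖ = 1 := by
  rw [gCantorSet_eq_range] at hz
  obtain ⟨ε, rfl⟩ := hz
  exact norm_cpt _

lemma tosses_ball_le (hξ : ∀ n, ξ n ∈ Ioo (0:ℝ) (1/2)) (z : ℂ) (k M : ℕ) {r : ℝ}
    (hr : r ≤ M * ell ξ k) :
    tosses {ε | ‖cantorCirc ξ ε - z‖ ≤ r} ≤ 3 * (2 * M + 2) * (2⁻¹ : ℝ≥0∞) ^ k := by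
  rcases Set.eq_empty_or_nonempty {ε | ‖cantorCirc ξ ε - z‖ ≤ r} with h | ⟨ε₀, h₀⟩
  · rw [h]; simp
  have hp := pi_pos
  set x := cantorPt ξ ε₀ with hx
  have hsub : {ε | ‖cantorCirc ξ ε - z‖ ≤ r} ⊆
      ({ε | |cantorPt ξ ε - x| ≤ M * ell ξ k} ∪ {ε | |cantorPt ξ ε - (x + 1)| ≤ M * ell ξ k}) ∪
        {ε | |cantorPt ξ ε - (x - 1)| ≤ M * ell ξ k} := by
    intro ε hε
    simp only [mem_ofPred_eq] at hε h₀
    have h1 : ‖cantorCirc ξ ε - cantorCirc ξ ε₀‖ ≤ 2 * r := by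
      have : cantorCirc ξ ε - cantorCirc ξ ε₀ =
        (cantorCirc ξ ε - z) - (cantorCirc ξ ε₀ - z) := by ring
      rw [this]
      refine (norm_sub_le _ _).trans ?_
      linarith
    have e1 := cantorPt_mem hξ ε
    have e2 := cantorPt_mem hξ ε₀
    have aux : ∀ y : ℝ, |2 * π * y| ≤ π / 2 * (2 * r) → |y| ≤ M * ell ξ k := by
      intro y hy
      have hr0 : 0 ≤ r := (norm_nonneg _).trans h₀
      rw [abs_mul, abs_of_pos (by positivity)] at hy
      have : |y| ≤ r / 2 := by
        refine le_of_mul_le_mul_left (a := 2 * π) ?_ (by positivity)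
        linarith
      linarith
    have h2 : |2 * π * cantorPt ξ ε - 2 * π * x| ≤ 2 * π := by
      rw [← mul_sub, abs_mul, abs_of_pos (by positivity)]
      have : |cantorPt ξ ε - x| ≤ 1 := by
        rw [abs_le]; constructor <;> linarith [e1.1, e1.2, e2.1, e2.2]
      nlinarith
    rcases angle_close h2 h1 with h | h | h
    · left; left; apply aux; convert h using 2; ring
    · left; right; apply aux; convert h using 2; ring
    · right; apply aux; convert h using 2; ring
  refine (measure_mono hsub).trans ((measure_union_le _ _).trans ?_)
  refine (add_le_add (measure_union_le _ _) le_rfl).trans ?_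
  refine (add_le_add (add_le_add (tosses_interval_le hξ _ k M) (tosses_interval_le hξ _ k M))
    (tosses_interval_le hξ _ k M)).trans ?_
  apply le_of_eq; ring

lemma le_tosses_ball (hξ : ∀ n, ξ n ∈ Ioo (0:ℝ) (1/2)) (ε₀ : ℕ → Bool) (n : ℕ) {r : ℝ}
    (hr : 7 * ell ξ n ≤ r) :
    (2⁻¹ : ℝ≥0∞) ^ n ≤ tosses {ε | ‖cantorCirc ξ ε - cantorCirc ξ ε₀‖ ≤ r} := by
  rw [← tosses_cylinder ε₀ n]
  refine measure_mono fun ε hε => ?_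
  have h4 : cantorPre ξ ε n = cantorPre ξ ε₀ n := by
    refine Finset.sum_congr rfl fun j hj => ?_
    simp only [cantorTerm, hε j (Finset.mem_range.1 hj)]
  have h1 := cantorPt_sub_pre_mem hξ ε n
  have h2 := cantorPt_sub_pre_mem hξ ε₀ n
  rw [h4] at h1
  refine (norm_cpt_sub_le _ _).trans (le_trans ?_ hr)
  rw [← mul_sub, abs_mul, abs_of_pos (by positivity)]
  have h3 : |cantorPt ξ ε - cantorPt ξ ε₀| ≤ ell ξ n := by
    rw [abs_le]; constructor <;> linarith [h1.1, h1.2, h2.1, h2.2]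
  have := pi_lt_d2
  have := pi_pos
  nlinarith [abs_nonneg (cantorPt ξ ε - cantorPt ξ ε₀)]

end Cantor

section CantorRegularity

variable {ξ : ℕ → ℝ}

lemma lintegral_tosses_ball (hξ : ∀ n, ξ n ∈ Ioo (0:ℝ) (1/2)) (A : Set ℝ) (r : ℝ) :
    ∫⁻ φ in A, tosses {ε | ‖cantorCirc ξ ε - cpt φ‖ ≤ r} ∂circMeas =
      ∫⁻ ε, circMeas (A ∩ {φ | ‖cpt φ - cantorCirc ξ ε‖ ≤ r}) ∂tosses := by
  have hc := continuous_cantorCirc hξ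
  have hS : MeasurableSet {p : ℝ × (ℕ → Bool) | ‖cantorCirc ξ p.2 - cpt p.1‖ ≤ r} := by
    refine (isClosed_le ?_ continuous_const).measurableSet
    have := continuous_cpt
    fun_prop
  have h1 := Measure.prod_apply (μ := circMeas.restrict A) (ν := tosses) hS
  have h2 := Measure.prod_apply_symm (μ := circMeas.restrict A) (ν := tosses) hS
  rw [h1] at h2
  refine Eq.trans h2 (lintegral_congr fun ε => ?_)
  have hB : MeasurableSet {φ | ‖cpt φ - cantorCirc ξ ε‖ ≤ r} :=
    measurableSet_le (by fun_prop) measurable_const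
  have : (fun φ => (φ, ε)) ⁻¹' {p : ℝ × (ℕ → Bool) | ‖cantorCirc ξ p.2 - cpt p.1‖ ≤ r} =
      {φ | ‖cpt φ - cantorCirc ξ ε‖ ≤ r} := by
    ext φ; simp [norm_sub_rev]
  rw [this, Measure.restrict_apply hB, inter_comm]

lemma measurableSet_dE_le (E : Set ℂ) (t : ℝ) : MeasurableSet {φ | dE E (cpt φ) ≤ t} :=
  measurableSet_le (by fun_prop) measurable_const

lemma measurableSet_cptBall (z : ℂ) (t : ℝ) : MeasurableSet {φ | ‖cpt φ - z‖ ≤ t} :=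
  measurableSet_le (by fun_prop) measurable_const

lemma dE_le_norm {E : Set ℂ} {z w : ℂ} (hw : w ∈ E) : dE E z ≤ ‖z - w‖ := by
  rw [← dist_eq_norm]; exact Metric.infDist_le_dist_of_mem hw

lemma cantorCirc_mem (ε : ℕ → Bool) : cantorCirc ξ ε ∈ gCantorSet ξ := by
  rw [gCantorSet_eq_range]; exact mem_range_self _

lemma exists_nearest (hξ : ∀ n, ξ n ∈ Ioo (0:ℝ) (1/2)) (z : ℂ) :
    ∃ ε, ‖cantorCirc ξ ε - z‖ = dE (gCantorSet ξ) z := by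
  obtain ⟨w, hw, h⟩ := (isCompact_gCantorSet hξ).exists_infDist_eq_dist (gCantorSet_nonempty ξ) z
  rw [gCantorSet_eq_range] at hw
  obtain ⟨ε, rfl⟩ := hw
  exact ⟨ε, by rw [dE, h, dist_eq_norm, norm_sub_rev]⟩

lemma ofReal_le_nbhdMeas (hξ : ∀ n, ξ n ∈ Ioo (0:ℝ) (1/2)) {n : ℕ} {t : ℝ} (ht : t ≤ ell ξ n) :
    ENNReal.ofReal t ≤ 12 * (2⁻¹ : ℝ≥0∞) ^ n * nbhdMeas (gCantorSet ξ) t := by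
  have ht1 : t ≤ 1 := ht.trans ((ell_antitone hξ (Nat.zero_le n)).trans_eq (ell_zero ξ))
  have hF := lintegral_tosses_ball hξ {φ | dE (gCantorSet ξ) (cpt φ) ≤ t} t
  have h1 : ENNReal.ofReal t ≤ ∫⁻ ε, circMeas ({φ | dE (gCantorSet ξ) (cpt φ) ≤ t} ∩
      {φ | ‖cpt φ - cantorCirc ξ ε‖ ≤ t}) ∂tosses := by
    calc ENNReal.ofReal t = ∫⁻ ε, ENNReal.ofReal t ∂tosses := by simp
      _ ≤ _ := by
        refine lintegral_mono fun ε => ?_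
        have hx : 2 * π * cantorPt ξ ε ∈ Icc 0 (2 * π) := by
          have := cantorPt_mem hξ ε
          have := pi_pos
          constructor <;> nlinarith [this, (cantorPt_mem hξ ε).1, (cantorPt_mem hξ ε).2]
        refine (le_circMeas_closedBall hx ht1).trans (measure_mono fun φ hφ => ⟨?_, hφ⟩)
        exact (dE_le_norm (cantorCirc_mem ε)).trans hφ
  rw [← hF] at h1
  refine h1.trans ?_
  calc _ ≤ ∫⁻ φ in {φ | dE (gCantorSet ξ) (cpt φ) ≤ t}, 12 * (2⁻¹ : ℝ≥0∞) ^ n ∂circMeas := by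
        refine lintegral_mono fun φ => ?_
        refine (tosses_ball_le hξ (cpt φ) n 1 (by simpa using ht)).trans (le_of_eq ?_)
        congr 1; norm_num
    _ = _ := by rw [setLIntegral_const]; rfl

lemma local_upper_aux (hξ : ∀ n, ξ n ∈ Ioo (0:ℝ) (1/2)) {n : ℕ} {t : ℝ}
    (ht : ell ξ (n + 1) < t) {A : Set ℝ} (hA : MeasurableSet A)
    (hAt : A ⊆ {φ | dE (gCantorSet ξ) (cpt φ) ≤ t}) {B : Set (ℕ → Bool)} (hB : MeasurableSet B)
    (hAB : ∀ φ ∈ A, ∀ ε, ‖cpt φ - cantorCirc ξ ε‖ ≤ 8 * t → ε ∈ B) :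
    circMeas A * (2⁻¹ : ℝ≥0∞) ^ (n + 1) ≤ ENNReal.ofReal (48 * π * t) * tosses B := by
  have ht0 : 0 < t := (ell_pos hξ _).trans ht
  have hF := lintegral_tosses_ball hξ A (8 * t)
  have h1 : circMeas A * (2⁻¹ : ℝ≥0∞) ^ (n + 1) ≤
      ∫⁻ φ in A, tosses {ε | ‖cantorCirc ξ ε - cpt φ‖ ≤ 8 * t} ∂circMeas := by
    rw [mul_comm, ← setLIntegral_const]
    refine setLIntegral_mono' hA fun φ hφ => ?_
    obtain ⟨ε₀, h₀⟩ := exists_nearest hξ (cpt φ)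
    refine (le_tosses_ball hξ ε₀ (n + 1) (r := 7 * t) (by linarith)).trans
      (measure_mono fun ε hε => ?_)
    have h2 : dE (gCantorSet ξ) (cpt φ) ≤ t := hAt hφ
    simp only [mem_ofPred_eq] at hε ⊢
    have := norm_sub_le_norm_sub_add_norm_sub (cantorCirc ξ ε) (cantorCirc ξ ε₀) (cpt φ)
    linarith
  refine h1.trans (hF.le.trans ?_)
  rw [← setLIntegral_const, ← lintegral_indicator hB]
  refine lintegral_mono fun ε => ?_
  rcases Set.eq_empty_or_nonempty (A ∩ {φ | ‖cpt φ - cantorCirc ξ ε‖ ≤ 8 * t}) with h | ⟨φ, h, h'⟩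
  · rw [h]; simp
  · rw [indicator_of_mem (hAB φ h ε h')]
    refine (measure_mono inter_subset_right).trans
      ((circMeas_closedBall_le _ (by positivity)).trans (le_of_eq ?_))
    congr 1; ring

lemma local_upper (hξ : ∀ n, ξ n ∈ Ioo (0:ℝ) (1/2)) {n k : ℕ} {t R : ℝ}
    (ht : ell ξ (n + 1) < t) (htR : t ≤ R) (hR : R ≤ ell ξ k) (z : ℂ) :
    circMeas {φ | dE (gCantorSet ξ) (cpt φ) ≤ t ∧ ‖cpt φ - z‖ ≤ R} * (2⁻¹ : ℝ≥0∞) ^ (n + 1) ≤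
      ENNReal.ofReal (48 * π * t) * (60 * (2⁻¹ : ℝ≥0∞) ^ k) := by
  have hc := continuous_cantorCirc hξ
  refine (local_upper_aux hξ ht (A := {φ | dE (gCantorSet ξ) (cpt φ) ≤ t ∧ ‖cpt φ - z‖ ≤ R})
    ((measurableSet_dE_le _ t).inter (measurableSet_cptBall z R)) (fun φ hφ => hφ.1)
    (B := {ε | ‖cantorCirc ξ ε - z‖ ≤ 9 * R}) ?_ ?_).trans ?_
  · exact (isClosed_le (by fun_prop) continuous_const).measurableSet
  · intro φ hφ ε hε
    have := norm_sub_le_norm_sub_add_norm_sub (cantorCirc ξ ε) (cpt φ) z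
    rw [norm_sub_rev] at hε
    simp only [mem_ofPred_eq] at hφ ⊢
    linarith [hφ.2]
  · gcongr
    refine (tosses_ball_le hξ z k 9 (r := 9 * R) (by push_cast; linarith)).trans (le_of_eq ?_)
    congr 1; norm_num

lemma nbhdMeas_upper (hξ : ∀ n, ξ n ∈ Ioo (0:ℝ) (1/2)) {n : ℕ} {t : ℝ}
    (ht : ell ξ (n + 1) < t) :
    nbhdMeas (gCantorSet ξ) t * (2⁻¹ : ℝ≥0∞) ^ (n + 1) ≤ ENNReal.ofReal (48 * π * t) := by
  refine (local_upper_aux hξ ht (measurableSet_dE_le (gCantorSet ξ) t) subset_rfl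
    MeasurableSet.univ fun _ _ _ _ => mem_univ _).trans ?_
  simp

lemma exists_generation (hξ : ∀ n, ξ n ∈ Ioo (0:ℝ) (1/2)) {t : ℝ} (h0 : 0 < t) (h1 : t ≤ 1) :
    ∃ n, ell ξ (n + 1) < t ∧ t ≤ ell ξ n := by
  have hex : ∃ n, ell ξ n < t := ((tendsto_ell hξ).eventually (gt_mem_nhds h0)).exists
  classical
  have hs := Nat.find_spec hex
  have hpos : Nat.find hex ≠ 0 := by
    intro h; rw [h, ell_zero] at hs; linarith
  obtain ⟨n, hn⟩ := Nat.exists_eq_succ_of_ne_zero hpos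
  refine ⟨n, ?_, ?_⟩
  · rw [hn] at hs; exact hs
  · exact not_lt.1 (Nat.find_min hex (by omega))

lemma exists_ratio_lt_half (hξ : ∀ n, ξ n ∈ Ioo (0:ℝ) (1/2))
    (hlim : limsup ξ atTop < 1/2) : ∃ l ∈ Ioo (0:ℝ) (1/2), ∀ n, ξ n ≤ l := by
  obtain ⟨c, hc1, hc2⟩ := exists_between hlim
  have hb : IsBoundedUnder (· ≤ ·) atTop ξ :=
    ⟨1/2, eventually_map.2 (Eventually.of_forall fun n => (hξ n).2.le)⟩
  obtain ⟨N, hN⟩ := eventually_atTop.1 (eventually_lt_of_limsup_lt hc1 hb)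
  have : ∀ N : ℕ, ∃ l ∈ Ioo (0:ℝ) (1/2), ∀ n < N, ξ n ≤ l := by
    intro N
    induction N with
    | zero => exact ⟨1/4, by norm_num, by simp⟩
    | succ N ih =>
      obtain ⟨l, hl, h⟩ := ih
      refine ⟨max l (ξ N), ⟨lt_max_of_lt_left hl.1, max_lt hl.2 (hξ N).2⟩, fun n hn => ?_⟩
      rcases Nat.lt_succ_iff_lt_or_eq.1 hn with h1 | rfl
      · exact (h n h1).trans (le_max_left _ _)
      · exact le_max_right _ _
  obtain ⟨l, hl, h⟩ := this N
  refine ⟨max l c, ⟨lt_max_of_lt_left hl.1, max_lt hl.2 hc2⟩, fun n => ?_⟩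
  rcases lt_or_ge n N with h1 | h1
  · exact (h n h1).trans (le_max_left _ _)
  · exact (hN n h1).le.trans (le_max_right _ _)

lemma ell_ratio_le (hξ : ∀ n, ξ n ∈ Ioo (0:ℝ) (1/2)) {l : ℝ} (hl : 0 < l) (hle : ∀ n, ξ n ≤ l)
    (k j : ℕ) : ell ξ (k + j) ≤ l ^ j * ell ξ k := by
  induction j with
  | zero => simp
  | succ j ih =>
    rw [← add_assoc, ell_succ, pow_succ]
    have := mul_le_mul ih (hle (k + j)) (hξ _).1.le (by have := ell_pos hξ k; positivity)
    linarith

/-- Upper regularity of the neighbourhoods of the Cantor set, at all scales. -/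
lemma local_le_nbhdMeas (hξ : ∀ n, ξ n ∈ Ioo (0:ℝ) (1/2)) {t R : ℝ} (ht : 0 < t) (hR : 0 < R)
    (z : ℂ) :
    circMeas {φ | dE (gCantorSet ξ) (cpt φ) ≤ t ∧ ‖cpt φ - z‖ ≤ R} * nbhdMeas (gCantorSet ξ) R ≤
      ENNReal.ofReal (10000000 * π ^ 2 * R) * nbhdMeas (gCantorSet ξ) t := by
  set E := gCantorSet ξ
  have hp3 := pi_gt_three
  rcases lt_or_ge R t with h | h
  · have h1 : circMeas {φ | dE E (cpt φ) ≤ t ∧ ‖cpt φ - z‖ ≤ R} ≤ ENNReal.ofReal (6 * π * R) :=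
      (measure_mono fun φ hφ => hφ.2).trans (circMeas_closedBall_le z hR.le)
    refine mul_le_mul' (h1.trans (ENNReal.ofReal_le_ofReal ?_)) (nbhdMeas_mono E h.le)
    nlinarith [mul_pos (pi_pos) hR, mul_pos (mul_pos pi_pos pi_pos) hR]
  rcases lt_or_ge 1 R with h1 | h1
  · rw [mul_comm]
    refine mul_le_mul' ((nbhdMeas_le E R).trans (ENNReal.ofReal_le_ofReal ?_))
      (measure_mono fun φ hφ => hφ.1)
    nlinarith [sq_nonneg π]
  obtain ⟨n, hn1, hn2⟩ := exists_generation hξ ht (h.trans h1)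
  obtain ⟨k, hk1, hk2⟩ := exists_generation hξ hR h1
  have a := local_upper hξ hn1 h hk2 z
  have b := nbhdMeas_upper hξ hk1
  have c := ofReal_le_nbhdMeas hξ hn2
  set X := circMeas {φ | dE E (cpt φ) ≤ t ∧ ‖cpt φ - z‖ ≤ R}
  set Y := nbhdMeas E R
  set Z := nbhdMeas E t
  set p := (2⁻¹ : ℝ≥0∞) ^ n with hp
  set q := (2⁻¹ : ℝ≥0∞) ^ k with hq
  rw [pow_succ, ← hp] at a
  rw [pow_succ, ← hq] at b
  rw [ENNReal.ofReal_mul (by positivity)] at a b ⊢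
  have hp0 : p ≠ 0 := by simp [hp]
  have hpt : p ≠ ⊤ := ENNReal.pow_ne_top (by simp)
  have hq0 : q ≠ 0 := by simp [hq]
  have hqt : q ≠ ⊤ := ENNReal.pow_ne_top (by simp)
  have h2 : (2⁻¹ : ℝ≥0∞) * 4 = 2 := by
    rw [show (4 : ℝ≥0∞) = 2 * 2 by norm_num, ← mul_assoc, ENNReal.inv_mul_cancel (by simp)
        (by simp),
      one_mul]
  have hm := mul_le_mul' a b
  have hm2 : X * Y * (p * q) ≤ ENNReal.ofReal (10000000 * π ^ 2) * ENNReal.ofReal R * Z * (p *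
      q) := by
    calc X * Y * (p * q) = (X * (p * 2⁻¹)) * (Y * (q * 2⁻¹)) * (2 * 2) := by
          have : (2⁻¹ : ℝ≥0∞) * 2 = 1 := ENNReal.inv_mul_cancel (by simp) (by simp)
          calc _ = X * Y * (p * q) * (2⁻¹ * 2) * (2⁻¹ * 2) := by rw [this]; simp
            _ = _ := by ring
      _ ≤ (ENNReal.ofReal (48 * π) * ENNReal.ofReal t * (60 * q)) *
          (ENNReal.ofReal (48 * π) * ENNReal.ofReal R) * (2 * 2) := by gcongr
      _ ≤ (ENNReal.ofReal (48 * π) * (12 * p * Z) * (60 * q)) *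
          (ENNReal.ofReal (48 * π) * ENNReal.ofReal R) * (2 * 2) := by gcongr
      _ = (ENNReal.ofReal (48 * π) * ENNReal.ofReal (48 * π) * 2880) *
          (ENNReal.ofReal R * Z * (p * q)) := by ring
      _ ≤ ENNReal.ofReal (10000000 * π ^ 2) * (ENNReal.ofReal R * Z * (p * q)) := by
        gcongr
        rw [show (2880 : ℝ≥0∞) = ENNReal.ofReal 2880 by simp, ← ENNReal.ofReal_mul (by positivity),
          ← ENNReal.ofReal_mul (by positivity)]
        apply ENNReal.ofReal_le_ofReal
        nlinarith [sq_nonneg π]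
      _ = _ := by ring
  exact (ENNReal.mul_le_mul_iff_left (mul_ne_zero hp0 hq0) (ENNReal.mul_ne_top hpt hqt)).1 hm2

lemma exists_local_power (hξ : ∀ n, ξ n ∈ Ioo (0:ℝ) (1/2)) (hlim : limsup ξ atTop < 1/2) :
    ∃ C > 0, ∃ η ∈ Ioo (0:ℝ) 1, ∀ t R : ℝ, 0 < t → t ≤ R → ∀ z : ℂ,
      circMeas {φ | dE (gCantorSet ξ) (cpt φ) ≤ t ∧ ‖cpt φ - z‖ ≤ R} ≤
        ENNReal.ofReal (C * (R * (t / R) ^ η)) := by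
  obtain ⟨l, hl, hle⟩ := exists_ratio_lt_half hξ hlim
  set E := gCantorSet ξ
  have hll : 0 < log l⁻¹ := log_pos ((one_lt_inv₀ hl.1).2 (by linarith [hl.2]))
  have hl2 : log 2 < log l⁻¹ := log_lt_log (by norm_num) (by
    rw [lt_inv_comm₀ (by norm_num) hl.1]; linarith [hl.2])
  set s := log 2 / log l⁻¹ with hs
  have hs0 : 0 < s := div_pos (log_pos (by norm_num)) hll
  have hs1 : s < 1 := (div_lt_one hll).2 hl2
  have hls : (l⁻¹) ^ s = 2 := by
    rw [rpow_def_of_pos (inv_pos.2 hl.1), hs, mul_div_cancel₀ _ hll.ne', exp_log (by norm_num)]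
  have hp := pi_gt_three
  -- the estimate at small scales
  have small : ∀ t R : ℝ, 0 < t → t ≤ R → R ≤ 1 → ∀ z : ℂ,
      circMeas {φ | dE E (cpt φ) ≤ t ∧ ‖cpt φ - z‖ ≤ R} ≤
        ENNReal.ofReal (12000 * π * (R * (t / R) ^ (1 - s))) := by
    intro t R ht htR hR z
    have hR0 := ht.trans_le htR
    obtain ⟨n, hn1, hn2⟩ := exists_generation hξ ht (htR.trans hR)
    obtain ⟨k, hk1, hk2⟩ := exists_generation hξ hR0 hR
    have hkn : k ≤ n := by
      by_contra! h
      have := ell_antitone hξ (show n + 1 ≤ k from h)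
      linarith
    obtain ⟨j, rfl⟩ := Nat.exists_eq_add_of_le hkn
    have a := local_upper hξ hn1 htR hk2 z
    have hpow : (2:ℝ) ^ j ≤ 2 * (R / t) ^ s := by
      have hRt : 1 ≤ R / t := (one_le_div ht).2 htR
      rcases j with _ | j
      · have := one_le_rpow hRt hs0.le
        simp; linarith
      have h1 := ell_ratio_le hξ hl.1 hle (k + 1) j
      have h2 : (l⁻¹) ^ j ≤ R / t := by
        rw [inv_pow, le_div_iff₀ ht, inv_mul_le_iff₀ (pow_pos hl.1 j)]
        have h3 : k + (j + 1) = k + 1 + j := by ring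
        rw [h3] at hn2
        refine hn2.trans (h1.trans ?_)
        gcongr
        exact pow_pos hl.1 j |>.le
      have h4 := rpow_le_rpow (by have := hl.1; positivity) h2 hs0.le
      rw [← rpow_natCast, ← rpow_mul (inv_pos.2 hl.1).le, mul_comm, rpow_mul (inv_pos.2 hl.1).le,
          hls,
        rpow_natCast] at h4
      rw [pow_succ]; linarith
    set X := circMeas {φ | dE E (cpt φ) ≤ t ∧ ‖cpt φ - z‖ ≤ R}
    have key : X ≤ ENNReal.ofReal (48 * π * t) * 60 * 2 * ENNReal.ofReal (2 ^ j) := by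
      have hq0 : (2⁻¹ : ℝ≥0∞) ^ (k + j + 1) ≠ 0 := by simp
      have hqt : (2⁻¹ : ℝ≥0∞) ^ (k + j + 1) ≠ ⊤ := ENNReal.pow_ne_top (by simp)
      refine (ENNReal.mul_le_mul_iff_left hq0 hqt).1 (a.trans (le_of_eq ?_))
      have h5 : (2⁻¹ : ℝ≥0∞) * 2 = 1 := ENNReal.inv_mul_cancel (by simp) (by simp)
      have h6 : (2⁻¹ : ℝ≥0∞) ^ j * 2 ^ j = 1 := by rw [← mul_pow, h5, one_pow]
      rw [ENNReal.ofReal_pow (by norm_num), ENNReal.ofReal_ofNat, pow_succ, pow_add]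
      calc _ = ENNReal.ofReal (48 * π * t) * (60 * 2⁻¹ ^ k) * ((2⁻¹ : ℝ≥0∞) ^ j * 2 ^ j) *
            (2⁻¹ * 2) := by rw [h5, h6]; simp
        _ = _ := by ring
    refine key.trans ?_
    rw [show (60 : ℝ≥0∞) = ENNReal.ofReal 60 by simp, show (2 : ℝ≥0∞) = ENNReal.ofReal 2 by simp,
      ← ENNReal.ofReal_mul (by positivity), ← ENNReal.ofReal_mul (by positivity),
      ← ENNReal.ofReal_mul (by positivity)]
    apply ENNReal.ofReal_le_ofReal
    have h7 : R * (t / R) ^ (1 - s) = t * (R / t) ^ s := by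
      rw [rpow_sub (by positivity), rpow_one, ← inv_div t R, inv_rpow (by positivity)]
      field_simp
    rw [h7]
    have : 0 < π * t := by positivity
    have h8 : 0 ≤ (R / t) ^ s := by positivity
    nlinarith [mul_le_mul_of_nonneg_left hpow this.le, mul_nonneg this.le h8]
  refine ⟨12000 * π * 4, by positivity, 1 - s, ⟨by linarith, by linarith⟩, ?_⟩
  intro t R ht htR z
  have hR0 := ht.trans_le htR
  have hpw : t / R ≤ (t / R) ^ (1 - s) := by
    have := rpow_le_rpow_of_exponent_ge (x := t / R) (by positivity) ((div_le_one hR0).2 htR)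
      (show 1 - s ≤ 1 by linarith)
    rwa [rpow_one] at this
  rcases le_or_gt R 1 with hR | hR
  · refine (small t R ht htR hR z).trans (ENNReal.ofReal_le_ofReal ?_)
    have : 0 ≤ R * (t / R) ^ (1 - s) := by positivity
    nlinarith
  rcases le_or_gt t 1 with h1 | h1
  · -- cover the circle by balls of radius one about four points
    have hcov : ∀ φ, ∃ w ∈ ({1, -1, Complex.I, -Complex.I} : Finset ℂ), ‖cpt φ - w‖ ≤ 1 := by
      intro φ
      by_contra! h
      simp only [Finset.mem_insert, Finset.mem_singleton, forall_eq_or_imp, forall_eq] at h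
      have e : cpt φ = cos φ + sin φ * Complex.I := by
        rw [cpt, Complex.exp_mul_I]; push_cast; rfl
      have hn : ∀ w : ℂ, 1 < ‖cpt φ - w‖ → 1 < (cos φ - w.re) ^ 2 + (sin φ - w.im) ^ 2 := by
        intro w hw
        have h2 : 1 < ‖cpt φ - w‖ ^ 2 := by nlinarith
        rw [← Complex.normSq_eq_norm_sq, Complex.normSq_apply] at h2
        have e1 : (cpt φ - w).re = cos φ - w.re := by
          simp [cpt, Complex.exp_ofReal_mul_I_re]
        have e2 : (cpt φ - w).im = sin φ - w.im := by
          simp [cpt, Complex.exp_ofReal_mul_I_im]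
        rw [e1, e2] at h2
        nlinarith
      have h1 := hn _ h.1
      have h2 := hn _ h.2.1
      have h3 := hn _ h.2.2.1
      have h4 := hn _ h.2.2.2
      simp at h1 h2 h3 h4
      have h5 := sin_sq_add_cos_sq φ
      have a1 : cos φ < 1/2 := by nlinarith
      have a2 : -(1/2) < cos φ := by nlinarith
      have a3 : sin φ < 1/2 := by nlinarith
      have a4 : -(1/2) < sin φ := by nlinarith
      nlinarith
    have hsub : {φ | dE E (cpt φ) ≤ t ∧ ‖cpt φ - z‖ ≤ R} ⊆
        ⋃ w ∈ ({1, -1, Complex.I, -Complex.I} : Finset ℂ),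
          {φ | dE E (cpt φ) ≤ t ∧ ‖cpt φ - w‖ ≤ 1} := by
      intro φ hφ
      obtain ⟨w, hw, h⟩ := hcov φ
      exact mem_biUnion hw ⟨hφ.1, h⟩
    refine (measure_mono hsub).trans ((measure_biUnion_finset_le _ _).trans ?_)
    refine (Finset.sum_le_sum fun w _ => small t 1 ht h1 le_rfl w).trans ?_
    rw [Finset.sum_const, ← ENNReal.ofReal_nsmul]
    apply ENNReal.ofReal_le_ofReal
    have hcard : (({1, -1, Complex.I, -Complex.I} : Finset ℂ).card : ℝ) ≤ 4 := by
      exact_mod_cast Finset.card_le_four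
    rw [nsmul_eq_mul]
    have h2 : t ^ (1 - s) ≤ R * (t / R) ^ (1 - s) := by
      rw [div_rpow ht.le hR0.le, mul_div_assoc', le_div_iff₀ (by positivity), mul_comm]
      gcongr
      have := rpow_le_rpow_of_exponent_le hR.le (show 1 - s ≤ 1 by linarith)
      rwa [rpow_one] at this
    have h3 : 0 ≤ t ^ (1 - s) := by positivity
    rw [div_one, one_mul]
    calc _ ≤ 4 * (12000 * π * t ^ (1 - s)) := by gcongr
      _ ≤ 4 * (12000 * π * (R * (t / R) ^ (1 - s))) := by gcongr
      _ = _ := by ring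
  · refine (measure_mono (subset_univ _)).trans (circMeas_univ.le.trans
      (ENNReal.ofReal_le_ofReal ?_))
    have : 1 ≤ R * (t / R) ^ (1 - s) := by
      calc 1 ≤ R * (t / R) := by field_simp; linarith
        _ ≤ _ := by gcongr
    nlinarith

end CantorRegularity

section Regular

/-- The geometric properties of the set `E` used in the argument: `E` is a nonempty compact subset
of the circle whose neighbourhoods are regular at all scales. -/
structure RegularSet (E : Set ℂ) (C η : ℝ) : Prop where
  pos : 0 < C
  exp_mem : η ∈ Ioo (0:ℝ) 1
  compact : IsCompact E
  nonempty : E.Nonempty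
  norm_eq : ∀ z ∈ E, ‖z‖ = 1
  box : ∀ t R : ℝ, 0 < t → 0 < R → ∀ z : ℂ,
    circMeas {φ | dE E (cpt φ) ≤ t ∧ ‖cpt φ - z‖ ≤ R} * nbhdMeas E R ≤
      ENNReal.ofReal (C * R) * nbhdMeas E t
  power : ∀ t R : ℝ, 0 < t → t ≤ R → ∀ z : ℂ,
    circMeas {φ | dE E (cpt φ) ≤ t ∧ ‖cpt φ - z‖ ≤ R} ≤ ENNReal.ofReal (C * (R * (t / R) ^ η))

lemma exists_regularSet {ξ : ℕ → ℝ} (hξ : ∀ n, ξ n ∈ Ioo (0:ℝ) (1/2))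
    (hlim : limsup ξ atTop < 1/2) : ∃ C η, RegularSet (gCantorSet ξ) C η := by
  obtain ⟨C, hC, η, hη, h⟩ := exists_local_power hξ hlim
  have hp := pi_pos
  refine ⟨max C (10000000 * π ^ 2), η, lt_max_of_lt_left hC, hη, isCompact_gCantorSet hξ,
    gCantorSet_nonempty ξ, fun z hz => gCantorSet_norm hz, fun t R ht hR z => ?_,
    fun t R ht htR z => ?_⟩
  · refine (local_le_nbhdMeas hξ ht hR z).trans ?_
    gcongr
    exact le_max_right _ _
  · refine (h t R ht htR z).trans ?_
    have := ht.trans_le htR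
    gcongr
    exact le_max_left _ _

variable {E : Set ℂ} {C η : ℝ}

lemma dE_cpt_le_two (hE : RegularSet E C η) (θ : ℝ) : dE E (cpt θ) ≤ 2 := by
  obtain ⟨w, hw⟩ := hE.nonempty
  refine (dE_le_norm hw).trans ((norm_sub_le _ _).trans ?_)
  rw [norm_cpt, hE.norm_eq w hw]; norm_num

lemma dE_cpt_lt_pi (hE : RegularSet E C η) (θ : ℝ) : dE E (cpt θ) < π :=
  (dE_cpt_le_two hE θ).trans_lt (by linarith [pi_gt_three])

lemma RegularSet.null (hE : RegularSet E C η) : circMeas {φ | dE E (cpt φ) = 0} = 0 := by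
  have h1 : ∀ t ∈ Ioc (0:ℝ) 1, circMeas {φ | dE E (cpt φ) = 0} ≤ ENNReal.ofReal (C * t ^ η) := by
    intro t ht
    have := hE.power t 1 ht.1 ht.2 0
    simp only [div_one, one_mul] at this
    refine (measure_mono fun φ hφ => ?_).trans this
    simp only [mem_ofPred_eq] at hφ ⊢
    exact ⟨hφ.trans_le ht.1.le, by simp [norm_cpt]⟩
  have h2 : Tendsto (fun t : ℝ => ENNReal.ofReal (C * t ^ η)) (𝓝[>] 0) (𝓝 0) := by
    have h3 : Continuous fun t : ℝ => ENNReal.ofReal (C * t ^ η) :=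
      ENNReal.continuous_ofReal.comp
        (continuous_const.mul (continuous_id.rpow_const fun _ => Or.inr hE.exp_mem.1.le))
    have := (h3.tendsto 0).mono_left (nhdsWithin_le_nhds (s := Ioi 0))
    simpa [zero_rpow hE.exp_mem.1.ne'] using this
  have h4 : ∀ᶠ t : ℝ in 𝓝[>] 0, t ∈ Ioc (0:ℝ) 1 := Ioc_mem_nhdsGT one_pos
  exact le_antisymm (ge_of_tendsto h2 (h4.mono h1)) (zero_le)

lemma RegularSet.ae_pos (hE : RegularSet E C η) : ∀ᵐ φ ∂circMeas, 0 < dE E (cpt φ) := by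
  have := hE.null
  rw [ae_iff]
  refine measure_mono_null (fun φ hφ => ?_) this
  simp only [mem_ofPred_eq, not_lt] at hφ ⊢
  exact le_antisymm hφ (dE_nonneg _ _)

lemma RegularSet.box_lt (hE : RegularSet E C η) {R : ℝ} (t : ℝ) (hR : 0 < R) (z : ℂ) :
    circMeas {φ | dE E (cpt φ) < t ∧ ‖cpt φ - z‖ ≤ R} * nbhdMeas E R ≤
      ENNReal.ofReal (C * R) * circMeas {φ | dE E (cpt φ) < t} := by
  rcases le_or_gt t 0 with ht | ht
  · have : {φ | dE E (cpt φ) < t ∧ ‖cpt φ - z‖ ≤ R} = ∅ := by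
      ext φ; simp only [mem_ofPred_eq, mem_empty_iff_false, iff_false, not_and]
      intro h; linarith [dE_nonneg E (cpt φ)]
    rw [this]; simp
  let τ : ℕ → ℝ := fun n => t * (1 - 1 / (n + 2))
  have hU : {φ | dE E (cpt φ) < t ∧ ‖cpt φ - z‖ ≤ R} =
      ⋃ n, {φ | dE E (cpt φ) ≤ τ n ∧ ‖cpt φ - z‖ ≤ R} := by
    ext φ
    simp only [mem_ofPred_eq, mem_iUnion]
    constructor
    · rintro ⟨h1, h2⟩
      obtain ⟨n, hn⟩ := exists_nat_one_div_lt (show 0 < (t - dE E (cpt φ)) / t by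
        apply div_pos _ ht; linarith)
      refine ⟨n, ?_, h2⟩
      rw [lt_div_iff₀ ht] at hn
      have : (1:ℝ) / (n + 2) ≤ 1 / (n + 1) := by gcongr; norm_num
      simp only [τ]; nlinarith
    · rintro ⟨n, h1, h2⟩
      refine ⟨h1.trans_lt ?_, h2⟩
      have : (0:ℝ) < 1 / (n + 2) := by positivity
      simp only [τ]; nlinarith
  have hmono : Monotone fun n => {φ | dE E (cpt φ) ≤ τ n ∧ ‖cpt φ - z‖ ≤ R} := by
    intro m n hmn φ hφ
    refine ⟨hφ.1.trans ?_, hφ.2⟩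
    simp only [τ]; gcongr
  rw [hU, hmono.measure_iUnion, ENNReal.iSup_mul]
  refine iSup_le fun n => ?_
  have hn : (1:ℝ) / (n + 2) ≤ 1 / 2 := by
    gcongr; linarith [(Nat.cast_nonneg n : (0:ℝ) ≤ n)]
  have hn0 : (0:ℝ) < 1 / (n + 2) := by positivity
  refine (hE.box (τ n) R (by simp only [τ]; nlinarith) hR z).trans ?_
  gcongr
  refine measure_mono fun φ hφ => ?_
  simp only [mem_ofPred_eq, τ] at hφ ⊢
  nlinarith

/-- Box estimate for decreasing functions of the distance to `E`. -/
lemma RegularSet.lintegral_box (hE : RegularSet E C η) {w : ℝ → ℝ} (hw : Measurable w)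
    (hw0 : ∀ s, 0 ≤ w s) (hwa : AntitoneOn w (Ioo 0 π)) {R : ℝ} (hR : 0 < R) (z : ℂ) :
    (∫⁻ φ in {φ | ‖cpt φ - z‖ ≤ R}, ENNReal.ofReal (w (dE E (cpt φ))) ∂circMeas) * nbhdMeas E R ≤
      ENNReal.ofReal (C * R) * ∫⁻ φ, ENNReal.ofReal (w (dE E (cpt φ))) ∂circMeas := by
  have hm : Measurable fun φ => w (dE E (cpt φ)) := by fun_prop
  rw [lintegral_eq_lintegral_meas_lt _ (Eventually.of_forall fun φ => hw0 _) hm.aemeasurable,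
    lintegral_eq_lintegral_meas_lt _ (Eventually.of_forall fun φ => hw0 _) hm.aemeasurable,
    ← lintegral_mul_const' _ _ ((nbhdMeas_le E R).trans_lt ENNReal.ofReal_lt_top).ne,
    ← lintegral_const_mul' _ _ ENNReal.ofReal_ne_top]
  refine lintegral_mono fun a => ?_
  have hms : MeasurableSet {φ | a < w (dE E (cpt φ))} := measurableSet_lt measurable_const hm
  rw [Measure.restrict_apply hms]
  -- reduce to the two kinds of lower sets
  set A : Set ℝ := {s ∈ Ioo 0 π | a < w s}
  have hA : ∀ s ∈ A, ∀ r, 0 < r → r ≤ s → r ∈ A := fun s hs r hr hrs =>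
    ⟨⟨hr, hrs.trans_lt hs.1.2⟩, hs.2.trans_le (hwa ⟨hr, hrs.trans_lt hs.1.2⟩ hs.1 hrs)⟩
  have hae1 : ∀ S : Set ℝ, circMeas ({φ | a < w (dE E (cpt φ))} ∩ S) ≤
      circMeas ({φ | dE E (cpt φ) ∈ A} ∩ S) := by
    intro S
    refine measure_mono_ae ?_
    filter_upwards [hE.ae_pos] with φ h1 h2
    exact ⟨⟨⟨h1, dE_cpt_lt_pi hE φ⟩, h2.1⟩, h2.2⟩
  have h2 : circMeas {φ | dE E (cpt φ) ∈ A} ≤ circMeas {φ | a < w (dE E (cpt φ))} :=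
    measure_mono fun φ hφ => hφ.2
  refine le_trans (mul_le_mul_left (hae1 _) _) (le_trans ?_ (mul_le_mul_right h2 _))
  rcases Set.eq_empty_or_nonempty A with hAe | hAne
  · have : {φ | dE E (cpt φ) ∈ A} = ∅ := by simp [hAe]
    rw [this]; simp
  have hbdd : BddAbove A := ⟨π, fun s hs => hs.1.2.le⟩
  obtain ⟨s0, hs0⟩ := hAne
  have hτ : 0 < sSup A := hs0.1.1.trans_le (le_csSup hbdd hs0)
  by_cases hmem : sSup A ∈ A
  · have e1 : circMeas {φ | dE E (cpt φ) ∈ A} = nbhdMeas E (sSup A) := by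
      refine measure_congr ?_
      filter_upwards [hE.ae_pos] with φ h1
      exact propext ⟨fun h => le_csSup hbdd h, fun h => hA _ hmem _ h1 h⟩
    rw [e1]
    refine le_trans ?_ (hE.box (sSup A) R hτ hR z)
    gcongr
    exact fun φ hφ => ⟨le_csSup hbdd hφ.1, hφ.2⟩
  · have hlt : ∀ s ∈ A, s < sSup A := fun s hs =>
      lt_of_le_of_ne (le_csSup hbdd hs) fun h => hmem (h ▸ hs)
    have e1 : circMeas {φ | dE E (cpt φ) ∈ A} = circMeas {φ | dE E (cpt φ) < sSup A} := by
      refine measure_congr ?_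
      filter_upwards [hE.ae_pos] with φ h1
      refine propext ⟨fun h => hlt _ h, fun h => ?_⟩
      obtain ⟨s, hs, hs'⟩ := exists_lt_of_lt_csSup ⟨s0, hs0⟩ h
      exact hA s hs _ h1 hs'.le
    rw [e1]
    refine le_trans ?_ (hE.box_lt (sSup A) hR z)
    gcongr
    exact fun φ hφ => ⟨hlt _ hφ.1, hφ.2⟩

lemma lintegral_Ioi_exp_neg_mul {c : ℝ} (hc : 0 < c) :
    ∫⁻ a in Ioi (0:ℝ), ENNReal.ofReal (exp (-c * a)) = ENNReal.ofReal c⁻¹ := by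
  have h := integrableOn_exp_mul_Ioi (show -c < 0 by linarith) 0
  rw [← ofReal_integral_eq_lintegral_ofReal h (Eventually.of_forall fun _ => (exp_pos _).le),
    integral_exp_mul_Ioi (show -c < 0 by linarith)]
  simp

lemma RegularSet.lintegral_log (hE : RegularSet E C η) {R : ℝ} (hR : 0 < R) (z : ℂ) :
    ∫⁻ φ in {φ | ‖cpt φ - z‖ ≤ R}, ENNReal.ofReal (log (R / dE E (cpt φ))) ∂circMeas ≤
      ENNReal.ofReal (C / η * R) := by
  have hη := hE.exp_mem.1
  have hm : Measurable fun φ => max 0 (log (R / dE E (cpt φ))) := by fun_prop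
  calc _ = ∫⁻ φ in {φ | ‖cpt φ - z‖ ≤ R},
        ENNReal.ofReal (max 0 (log (R / dE E (cpt φ)))) ∂circMeas := by simp
    _ = ∫⁻ a in Ioi (0:ℝ), circMeas.restrict {φ | ‖cpt φ - z‖ ≤ R}
          {φ | a < max 0 (log (R / dE E (cpt φ)))} :=
        lintegral_eq_lintegral_meas_lt _ (Eventually.of_forall fun φ => le_max_left _ _)
          hm.aemeasurable
    _ ≤ ∫⁻ a in Ioi (0:ℝ), ENNReal.ofReal (C * R) * ENNReal.ofReal (exp (-η * a)) := by
        refine setLIntegral_mono' measurableSet_Ioi fun a ha => ?_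
        rw [Measure.restrict_apply (measurableSet_lt measurable_const hm)]
        have he : 0 < exp (-a) := exp_pos _
        have he1 : exp (-a) ≤ 1 := exp_le_one_iff.2 (by have : 0 < a := ha; linarith)
        have := hE.power (R * exp (-a)) R (by positivity) (by nlinarith) z
        refine (measure_mono ?_).trans (this.trans (le_of_eq ?_))
        · rintro φ ⟨h1, h2⟩
          refine ⟨?_, h2⟩
          simp only [mem_ofPred_eq] at h1
          have ha' : 0 < a := ha
          have h3 : a < log (R / dE E (cpt φ)) := by
            rcases lt_max_iff.1 h1 with h | h
            · linarith
            · exact h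
          have h4 : 0 < dE E (cpt φ) := by
            refine lt_of_le_of_ne (dE_nonneg _ _) fun h => ?_
            rw [← h] at h3; simp at h3; linarith
          rw [lt_log_iff_exp_lt (by positivity), lt_div_iff₀ h4] at h3
          rw [exp_neg, ← div_eq_mul_inv, le_div_iff₀ (exp_pos _)]
          linarith
        · rw [← ENNReal.ofReal_mul (by have := hE.pos; positivity), mul_div_cancel_left₀ _ hR.ne',
            ← exp_mul]
          congr 1
          rw [← mul_assoc]; congr 2; ring
    _ = ENNReal.ofReal (C * R) * ENNReal.ofReal η⁻¹ := by
        rw [lintegral_const_mul' _ _ ENNReal.ofReal_ne_top, lintegral_Ioi_exp_neg_mul hη]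
    _ = _ := by
        rw [← ENNReal.ofReal_mul (by have := hE.pos; positivity)]; congr 1; field_simp

lemma lintegral_Ioi_rpow {p δ : ℝ} (hp : p < -1) (hδ : 0 < δ) :
    ∫⁻ R in Ioi δ, ENNReal.ofReal (R ^ p) = ENNReal.ofReal (δ ^ (p + 1) / (-p - 1)) := by
  rw [← ofReal_integral_eq_lintegral_ofReal (integrableOn_Ioi_rpow_of_lt hp hδ)
    ((ae_restrict_mem measurableSet_Ioi).mono fun x hx => by
      have : 0 < x := hδ.trans hx
      positivity), integral_Ioi_rpow_of_lt hp hδ]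
  congr 1
  rw [neg_div, ← div_neg]; congr 1; ring

/-- Integration against a power of the radius by summing over shells. -/
lemma lintegral_shell {μ : Measure ℝ} [SFinite μ] {G : ℝ → ℝ≥0∞} (hG : Measurable G)
    {ρ : ℝ → ℝ} (hρ : Measurable ρ) {δ A p : ℝ} (hδ : 0 < δ) (hp : 1 < p) (hA : 0 ≤ A)
    (hsupp : ∀ φ, G φ ≠ 0 → δ ≤ ρ φ)
    (hball : ∀ R, δ ≤ R → ∫⁻ φ in {φ | ρ φ ≤ R}, G φ ∂μ ≤ ENNReal.ofReal (A * R)) :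
    ∫⁻ φ, G φ * ENNReal.ofReal (ρ φ ^ (-p)) ∂μ ≤
      ENNReal.ofReal (A * (p / (p - 1)) * δ ^ (1 - p)) := by
  have hp0 : 0 < p := by linarith
  have h1 : ∀ φ, G φ * ENNReal.ofReal (ρ φ ^ (-p)) ≤ ∫⁻ R in Ioi δ,
      ({x : ℝ × ℝ | ρ x.1 ≤ x.2}.indicator (fun x => G x.1 * ENNReal.ofReal (p * x.2 ^ (-p - 1))))
        (φ, R) := by
    intro φ
    by_cases hφ : G φ = 0
    · rw [hφ]; simp
    have hr := hsupp φ hφ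
    have hr0 := hδ.trans_le hr
    calc G φ * ENNReal.ofReal (ρ φ ^ (-p))
        = ∫⁻ R in Ioi (ρ φ), G φ * (ENNReal.ofReal p * ENNReal.ofReal (R ^ (-p - 1))) := by
          have e : -p - 1 + 1 = -p := by ring
          have e2 : -(-p - 1) - 1 = p := by ring
          rw [lintegral_const_mul _ (by fun_prop),
            lintegral_const_mul' _ _ ENNReal.ofReal_ne_top, lintegral_Ioi_rpow (by linarith) hr0,
            ← ENNReal.ofReal_mul hp0.le, e, e2, mul_div_cancel₀ _ hp0.ne']
      _ = ∫⁻ R in Ioi (ρ φ), ({x : ℝ × ℝ | ρ x.1 ≤ x.2}.indicator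
            (fun x => G x.1 * ENNReal.ofReal (p * x.2 ^ (-p - 1)))) (φ, R) := by
          refine setLIntegral_congr_fun measurableSet_Ioi fun R hR => ?_
          have hR' : ρ φ < R := hR
          simp only [indicator, mem_ofPred_eq, hR'.le, if_true]
          rw [ENNReal.ofReal_mul hp0.le]
      _ ≤ _ := lintegral_mono_set (Ioi_subset_Ioi hr)
  have hS : MeasurableSet {x : ℝ × ℝ | ρ x.1 ≤ x.2} := measurableSet_le (by fun_prop) (by fun_prop)
  refine (lintegral_mono h1).trans ?_
  rw [lintegral_lintegral_swap]
  swap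
  · exact (Measurable.indicator (by fun_prop) hS).aemeasurable
  calc _ ≤ ∫⁻ R in Ioi δ, ENNReal.ofReal (A * p) * ENNReal.ofReal (R ^ (-p)) := by
        refine setLIntegral_mono' measurableSet_Ioi fun R hR => ?_
        have hR' : δ < R := hR
        have hR0 := hδ.trans hR'
        have h2 : ∀ φ, ({x : ℝ × ℝ | ρ x.1 ≤ x.2}.indicator
            (fun x => G x.1 * ENNReal.ofReal (p * x.2 ^ (-p - 1)))) (φ, R) =
            ({φ | ρ φ ≤ R}.indicator (fun φ => G φ)) φ * ENNReal.ofReal (p * R ^ (-p - 1)) := by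
          intro φ
          by_cases h : ρ φ ≤ R <;> simp [indicator, h]
        simp_rw [h2]
        rw [lintegral_mul_const' _ _ ENNReal.ofReal_ne_top,
          lintegral_indicator (measurableSet_le hρ measurable_const)]
        refine (mul_le_mul_left (hball R hR'.le) _).trans (le_of_eq ?_)
        rw [← ENNReal.ofReal_mul (by positivity), ← ENNReal.ofReal_mul (by positivity),
          rpow_sub hR0, rpow_one]
        congr 1; field_simp
    _ = _ := by
        rw [lintegral_const_mul' _ _ ENNReal.ofReal_ne_top, lintegral_Ioi_rpow (by linarith) hδ,
          ← ENNReal.ofReal_mul (by positivity)]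
        congr 1
        rw [neg_neg, show -p + 1 = 1 - p by ring]
        field_simp

end Regular

namespace OmegaHyp

variable {ω ω' : ℝ → ℝ} {γ : ℝ}

lemma pos (hω : OmegaHyp ω ω' γ) {t : ℝ} (h0 : 0 < t) (h1 : t ≤ π) : 0 < ω t := hω.2.1 t ⟨h0, h1⟩

lemma mono (hω : OmegaHyp ω ω' γ) {s t : ℝ} (h0 : 0 < s) (hst : s ≤ t) (h1 : t ≤ π) : ω s ≤ ω t :=
  hω.2.2.1 ⟨h0, hst.trans h1⟩ ⟨h0.trans_le hst, h1⟩ hst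

lemma hasDeriv (hω : OmegaHyp ω ω' γ) {t : ℝ} (ht : t ∈ Ioo 0 π) : HasDerivAt ω (ω' t) t :=
  hω.2.2.2.1 t ht

lemma deriv_nonneg (hω : OmegaHyp ω ω' γ) {t : ℝ} (ht : t ∈ Ioo 0 π) : 0 ≤ ω' t := by
  have h := (hω.hasDeriv ht).hasDerivWithinAt (s := Ioo 0 π)
  refine h.nonneg_of_monotoneOn ?_ (hω.2.2.1.mono Ioo_subset_Ioc_self)
  rw [accPt_principal_iff_nhdsWithin, sdiff_eq, nhdsWithin_inter,
      nhdsWithin_eq_nhds.2 (Ioo_mem_nhds ht.1 ht.2),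
    inf_eq_right.2 nhdsWithin_le_nhds]
  infer_instance

lemma kappa_mono (hω : OmegaHyp ω ω' γ) {s t : ℝ} (h0 : 0 < s) (hst : s ≤ t) (h1 : t < π) :
    s * ω' s / ω s ≤ t * ω' t / ω t :=
  hω.2.2.2.2.2 ⟨h0, hst.trans_lt h1⟩ ⟨h0.trans_le hst, h1⟩ hst

lemma tangent (hω : OmegaHyp ω ω' γ) (hγ : 2 < γ) {s t : ℝ} (hs : s ∈ Ioo 0 π) (ht : t ∈ Ioc 0 π) :
    ω t - ω s ≤ γ * (s ^ (1 - γ⁻¹) * ω' s) * (t ^ γ⁻¹ - s ^ γ⁻¹) := by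
  have hγ0 : 0 < γ := by linarith
  have hβ : 0 < γ⁻¹ := inv_pos.2 hγ0
  have hc := hω.2.2.2.2.1
  have hinv : ∀ x : ℝ, 0 < x → (x ^ γ⁻¹) ^ γ = x := fun x hx => by
    rw [← rpow_mul hx.le, inv_mul_cancel₀ hγ0.ne', rpow_one]
  have hmem : ∀ x ∈ Ioc 0 π, x ^ γ⁻¹ ∈ Ioc 0 (π ^ γ⁻¹) := fun x hx =>
    ⟨rpow_pos_of_pos hx.1 _, rpow_le_rpow hx.1.le hx.2 hβ.le⟩
  have hd : HasDerivAt (fun x => ω (x ^ γ)) (γ * (s ^ (1 - γ⁻¹) * ω' s)) (s ^ γ⁻¹) := by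
    have h1 : HasDerivAt (fun x : ℝ => x ^ γ) (γ * (s ^ γ⁻¹) ^ (γ - 1)) (s ^ γ⁻¹) :=
      Real.hasDerivAt_rpow_const (Or.inl (rpow_pos_of_pos hs.1 _).ne')
    have h2 : HasDerivAt ω (ω' s) ((s ^ γ⁻¹) ^ γ) := by rw [hinv s hs.1]; exact hω.hasDeriv hs
    have h3 := HasDerivAt.comp (h₂ := ω) (h := fun x : ℝ => x ^ γ) (s ^ γ⁻¹) h2 h1
    refine h3.congr_deriv ?_
    rw [← rpow_mul hs.1.le, mul_sub, inv_mul_cancel₀ hγ0.ne', mul_one]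
    ring
  have hs' : s ∈ Ioc 0 π := ⟨hs.1, hs.2.le⟩
  rcases lt_trichotomy s t with h | h | h
  · have hlt : s ^ γ⁻¹ < t ^ γ⁻¹ := rpow_lt_rpow hs.1.le h hβ
    have := hc.slope_le_of_hasDerivAt (hmem s hs') (hmem t ht) hlt hd
    rw [slope_def_field, div_le_iff₀ (by linarith), hinv s hs.1, hinv t ht.1] at this
    exact this
  · rw [h]; simp
  · have hlt : t ^ γ⁻¹ < s ^ γ⁻¹ := rpow_lt_rpow ht.1.le h hβ
    have := hc.le_slope_of_hasDerivAt (hmem t ht) (hmem s hs') hlt hd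
    rw [slope_def_field, le_div_iff₀ (by linarith), hinv s hs.1, hinv t ht.1] at this
    linarith

lemma tangent' (hω : OmegaHyp ω ω' γ) (hγ : 2 < γ) {s t : ℝ} (hs : s ∈ Ioo 0 π) (ht : t ∈ Ioc 0 π) :
    ω t - ω s ≤ γ * (s * ω' s) * ((t / s) ^ γ⁻¹ - 1) := by
  refine (hω.tangent hγ hs ht).trans (le_of_eq ?_)
  have := rpow_pos_of_pos hs.1 γ⁻¹
  rw [div_rpow ht.1.le hs.1.le, rpow_sub hs.1, rpow_one]
  generalize s ^ γ⁻¹ = a at *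
  field_simp

lemma deriv_anti (hω : OmegaHyp ω ω' γ) (hγ : 2 < γ) {s t : ℝ} (h0 : 0 < s) (hst : s ≤ t)
    (h1 : t < π) : t ^ (1 - γ⁻¹) * ω' t ≤ s ^ (1 - γ⁻¹) * ω' s := by
  rcases hst.eq_or_lt with rfl | hlt
  · rfl
  have ht0 := h0.trans hlt
  have a := hω.tangent hγ (s := s) (t := t) ⟨h0, hlt.trans h1⟩ ⟨ht0, h1.le⟩
  have b := hω.tangent hγ (s := t) (t := s) ⟨ht0, h1⟩ ⟨h0, (hlt.trans h1).le⟩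
  have hγ0 : 0 < γ := by linarith
  have hp : 0 < t ^ γ⁻¹ - s ^ γ⁻¹ := sub_pos.2 (rpow_lt_rpow h0.le hlt (inv_pos.2 hγ0))
  by_contra! h
  have := mul_pos (mul_pos hγ0 (sub_pos.2 h)) hp
  nlinarith

lemma deriv_le (hω : OmegaHyp ω ω' γ) (hγ : 2 < γ) {s t : ℝ} (h0 : 0 < s) (hst : s ≤ t)
    (h1 : t < π) : ω' t ≤ ω' s * (s / t) ^ (1 - γ⁻¹) := by
  have := hω.deriv_anti hγ h0 hst h1
  have ht0 := h0.trans_le hst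
  have hp := rpow_pos_of_pos ht0 (1 - γ⁻¹)
  rw [div_rpow h0.le ht0.le, mul_div_assoc', le_div_iff₀ hp]
  linarith

lemma tangent_line (hω : OmegaHyp ω ω' γ) (hγ : 2 < γ) {s t : ℝ} (hs : s ∈ Ioo 0 π)
    (ht : t ∈ Ioc 0 π) : ω t - ω s ≤ ω' s * (t - s) := by
  have hγ0 : 0 < γ := by linarith
  refine (hω.tangent' hγ hs ht).trans ?_
  have h1 : γ⁻¹ ≤ 1 := inv_le_one_of_one_le₀ (by linarith)
  have h2 := rpow_one_add_le_one_add_mul_self (s := t / s - 1)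
    (by have : 0 < t / s := div_pos ht.1 hs.1
        linarith) (inv_pos.2 hγ0).le h1
  rw [add_sub_cancel] at h2
  have h3 : 0 ≤ γ * (s * ω' s) := mul_nonneg hγ0.le (mul_nonneg hs.1.le (hω.deriv_nonneg hs))
  refine (mul_le_mul_of_nonneg_left (show (t / s) ^ γ⁻¹ - 1 ≤ γ⁻¹ * (t / s - 1) by linarith)
    h3).trans (le_of_eq ?_)
  have := hs.1.ne'
  field_simp

lemma kappa_le_one (hω : OmegaHyp ω ω' γ) (hγ : 2 < γ) {s : ℝ} (hs : s ∈ Ioo 0 π) :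
    s * ω' s / ω s ≤ 1 := by
  rw [div_le_one (hω.pos hs.1 hs.2.le)]
  by_contra! h
  have h0 := hω.pos hs.1 hs.2.le
  have hd : 0 < ω' s := by
    by_contra! h'
    nlinarith [hs.1]
  have hlt : (s * ω' s - ω s) / ω' s < s := by
    rw [div_lt_iff₀ hd]; linarith
  have ht0 : 0 < (s * ω' s - ω s) / ω' s := div_pos (by linarith) hd
  have := hω.tangent_line hγ hs (t := (s * ω' s - ω s) / ω' s) ⟨ht0, by linarith [hs.2]⟩
  have h2 := hω.pos ht0 (by linarith [hs.2])
  have h3 : ω' s * ((s * ω' s - ω s) / ω' s - s) = - ω s := by field_simp; ring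
  linarith

lemma kappa_nonneg (hω : OmegaHyp ω ω' γ) {s : ℝ} (hs : s ∈ Ioo 0 π) : 0 ≤ s * ω' s / ω s :=
  div_nonneg (mul_nonneg hs.1.le (hω.deriv_nonneg hs)) (hω.pos hs.1 hs.2.le).le

lemma log_sub_le (hω : OmegaHyp ω ω' γ) {s t : ℝ} (ht : 0 < t) (hts : t ≤ s) (hs : s < π) :
    log (ω s) - log (ω t) ≤ s * ω' s / ω s * log (s / t) := by
  set k := s * ω' s / ω s
  have hs0 := ht.trans_le hts
  have hder : ∀ x ∈ Icc t s, HasDerivAt (fun x => log (ω x) - k * log x)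
      (ω' x / ω x - k * x⁻¹) x := fun x hx => by
    have hx' : x ∈ Ioo 0 π := ⟨ht.trans_le hx.1, hx.2.trans_lt hs⟩
    exact ((hω.hasDeriv hx').log (hω.pos hx'.1 hx'.2.le).ne').sub
      ((Real.hasDerivAt_log hx'.1.ne').const_mul k)
  have hanti : AntitoneOn (fun x => log (ω x) - k * log x) (Icc t s) := by
    refine antitoneOn_of_deriv_nonpos (convex_Icc _ _)
      (fun x hx => (hder x hx).continuousAt.continuousWithinAt)
      (fun x hx => (hder x (interior_subset hx)).differentiableAt.differentiableWithinAt)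
      fun x hx => ?_
    have hx := interior_subset hx
    rw [(hder x hx).deriv]
    have hx0 := ht.trans_le hx.1
    have h1 : x * ω' x / ω x ≤ k := hω.kappa_mono hx0 hx.2 hs
    have h2 : ω' x / ω x = x * ω' x / ω x * x⁻¹ := by field_simp
    rw [h2, ← sub_mul]
    exact mul_nonpos_of_nonpos_of_nonneg (by linarith) (inv_pos.2 hx0).le
  have := hanti (left_mem_Icc.2 hts) (right_mem_Icc.2 hts) hts
  simp only at this
  rw [log_div hs0.ne' ht.ne']
  linarith

lemma log_sub_le_of_ge (hω : OmegaHyp ω ω' γ) (hγ : 2 < γ) {s t : ℝ} (hs : s ∈ Ioo 0 π)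
    (ht : t ∈ Ioc 0 π) : log (ω t) - log (ω s) ≤ s * ω' s / ω s * (γ * ((t / s) ^ γ⁻¹ - 1)) := by
  have h1 := hω.pos hs.1 hs.2.le
  have h2 := hω.pos ht.1 ht.2
  rw [← log_div h2.ne' h1.ne']
  refine (log_le_sub_one_of_pos (div_pos h2 h1)).trans ?_
  have := hω.tangent' hγ hs ht
  rw [div_sub_one h1.ne', div_le_iff₀ h1]
  refine this.trans (le_of_eq ?_)
  field_simp

/-- The oscillation of `log ω` about a scale `s`. -/
lemma abs_log_sub_le (hω : OmegaHyp ω ω' γ) (hγ : 2 < γ) {s t ρ : ℝ} (hs : s ∈ Ioo 0 π)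
    (ht : t ∈ Ioc 0 π) (hρ : 0 ≤ ρ) (h1 : t ≤ s + ρ) (h2 : s - 3 * ρ ≤ t) :
    |log (ω t) - log (ω s)| ≤ s * ω' s / ω s *
      (6 * γ * (ρ / s) ^ (3/4 : ℝ) + {ρ | s / 6 < ρ}.indicator (fun _ => max 0 (log
          (s / t))) ρ) := by
  have hs0 := hs.1
  have hk := hω.kappa_nonneg hs
  have hrp : 0 ≤ (ρ / s) ^ (3/4 : ℝ) := by positivity
  have hind : 0 ≤ {ρ | s / 6 < ρ}.indicator (fun _ => max 0 (log (s / t))) ρ :=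
    indicator_nonneg (fun _ _ => le_max_left _ _) _
  have hγ1 : γ⁻¹ ≤ 3/4 := by
    rw [inv_le_comm₀ (by linarith) (by norm_num)]; linarith
  rw [abs_le]
  constructor
  · rcases le_total s t with hst | hst
    · have : log (ω s) ≤ log (ω t) := log_le_log (hω.pos hs0 hs.2.le) (hω.mono hs0 hst ht.2)
      have : 0 ≤ s * ω' s / ω s * (6 * γ * (ρ / s) ^ (3/4 : ℝ) +
        {ρ | s / 6 < ρ}.indicator (fun _ => max 0 (log (s / t))) ρ) :=
        mul_nonneg hk (by positivity)
      linarith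
    · have h3 := hω.log_sub_le ht.1 hst hs.2
      have h4 : log (s / t) ≤ 6 * γ * (ρ / s) ^ (3/4 : ℝ) +
          {ρ | s / 6 < ρ}.indicator (fun _ => max 0 (log (s / t))) ρ := by
        by_cases hr : s / 6 < ρ
        · rw [indicator_of_mem (by exact hr)]
          have : 0 ≤ 6 * γ * (ρ / s) ^ (3/4 : ℝ) := by positivity
          linarith [le_max_right 0 (log (s / t))]
        · rw [indicator_of_notMem (by exact hr)]
          rw [not_lt] at hr
          have ht2 : s / 2 ≤ t := by linarith
          have h5 : s / t - 1 ≤ 6 * (ρ / s) := by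
            rw [div_sub_one ht.1.ne', div_le_iff₀ ht.1, mul_div_assoc', div_mul_eq_mul_div,
              le_div_iff₀ hs0]
            nlinarith
          have h6 : ρ / s ≤ (ρ / s) ^ (3/4 : ℝ) := by
            have h7 : ρ / s ≤ 1 := (div_le_one hs0).2 (by linarith)
            rcases hρ.eq_or_lt with h | h
            · rw [← h, zero_div, zero_rpow (by norm_num)]
            · have := rpow_le_rpow_of_exponent_ge (div_pos h hs0) h7 (show (3/4:ℝ) ≤ 1 by norm_num)
              rwa [rpow_one] at this
          have h8 := log_le_sub_one_of_pos (div_pos hs0 ht.1)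
          nlinarith
      have := mul_le_mul_of_nonneg_left h4 hk
      linarith
  · refine (hω.log_sub_le_of_ge hγ hs ht).trans (mul_le_mul_of_nonneg_left ?_ hk)
    have h3 : (t / s) ^ γ⁻¹ ≤ 1 + (ρ / s) ^ (3/4 : ℝ) := by
      have hx : 0 ≤ ρ / s := by positivity
      calc (t / s) ^ γ⁻¹ ≤ (1 + ρ / s) ^ γ⁻¹ := by
            refine rpow_le_rpow (div_pos ht.1 hs0).le ?_ (inv_pos.2 (by linarith)).le
            rw [div_le_iff₀ hs0, add_mul, div_mul_cancel₀ _ hs0.ne']; linarith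
        _ ≤ (1 + ρ / s) ^ (3/4 : ℝ) := rpow_le_rpow_of_exponent_le (by linarith) hγ1
        _ ≤ 1 ^ (3/4 : ℝ) + (ρ / s) ^ (3/4 : ℝ) :=
            rpow_add_le_add_rpow zero_le_one hx (by norm_num) (by norm_num)
        _ = _ := by simp
    nlinarith

lemma weight_antitone (hω : OmegaHyp ω ω' γ) (hγ : 2 < γ) :
    AntitoneOn (fun s => s * ω' s ^ 2) (Ioo 0 π) := by
  intro s hs t ht hst
  have h1 := hω.deriv_le hγ hs.1 hst ht.2
  have hd := hω.deriv_nonneg hs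
  have hd' := hω.deriv_nonneg ht
  have hx : 0 < s / t := div_pos hs.1 ht.1
  have hx1 : s / t ≤ 1 := (div_le_one ht.1).2 hst
  have hγ1 : γ⁻¹ ≤ 1/2 := by
    rw [inv_le_comm₀ (by linarith) (by norm_num)]; linarith
  have h2 : (s / t) ^ (1 - γ⁻¹) ≤ (s / t) ^ (1/2 : ℝ) :=
    rpow_le_rpow_of_exponent_ge hx hx1 (by linarith)
  have h3 : ω' t ≤ ω' s * (s / t) ^ (1/2 : ℝ) := h1.trans (by gcongr)
  have h4 : ω' t ^ 2 ≤ ω' s ^ 2 * (s / t) := by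
    calc ω' t ^ 2 ≤ (ω' s * (s / t) ^ (1/2 : ℝ)) ^ 2 := by gcongr
      _ = ω' s ^ 2 * ((s / t) ^ (1/2 : ℝ)) ^ 2 := by ring
      _ = _ := by
        rw [← rpow_natCast ((s / t) ^ (1/2 : ℝ)), ← rpow_mul hx.le]; norm_num
  calc t * ω' t ^ 2 ≤ t * (ω' s ^ 2 * (s / t)) := by have := ht.1; gcongr
    _ = _ := by have := ht.1.ne'; field_simp

end OmegaHyp

section Herglotz

/-- The Herglotz integral of a boundary function. -/
noncomputable def herglotz (u : ℝ → ℝ) (z : ℂ) : ℂ :=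
  (((2 * π)⁻¹ : ℝ) : ℂ) * ∫ φ, ((cpt φ + z) / (cpt φ - z)) * ((u φ : ℝ) : ℂ) ∂circMeas

lemma cpt_sub_ne_zero {z : ℂ} (hz : ‖z‖ < 1) (φ : ℝ) : cpt φ - z ≠ 0 := by
  intro h
  rw [sub_eq_zero] at h
  rw [← h, norm_cpt] at hz
  exact lt_irrefl _ hz

lemma one_sub_norm_le (z : ℂ) (φ : ℝ) : 1 - ‖z‖ ≤ ‖cpt φ - z‖ := by
  have := norm_sub_norm_le (cpt φ) z
  rwa [norm_cpt] at this

lemma circleIntegral_eq (f : ℂ → ℂ) :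
    (∮ z in C(0, 1), f z) = Complex.I * ∫ φ, cpt φ * f (cpt φ) ∂circMeas := by
  rw [circleIntegral, intervalIntegral.integral_of_le (by positivity), ← integral_const_mul]
  refine integral_congr_ae (Eventually.of_forall fun φ => ?_)
  have : circleMap 0 1 φ = cpt φ := by simp [circleMap, cpt]
  simp only [deriv_circleMap, this, smul_eq_mul]
  ring

lemma integral_cpt_div {z : ℂ} (hz : ‖z‖ < 1) :
    ∫ φ, cpt φ / (cpt φ - z) ∂circMeas = 2 * π := by
  have h := circleIntegral.integral_sub_inv_of_mem_ball (c := 0) (R := 1) (w := z)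
      (by simpa using hz)
  rw [circleIntegral_eq, mul_comm] at h
  exact mul_right_cancel₀ Complex.I_ne_zero h

lemma continuous_cpt_div {z : ℂ} (hz : ‖z‖ < 1) (f : ℂ → ℂ) (hf : Continuous f) (n : ℕ) :
    Continuous fun φ => f (cpt φ) / (cpt φ - z) ^ n :=
  (hf.comp continuous_cpt).div (by fun_prop) fun φ => pow_ne_zero _ (cpt_sub_ne_zero hz φ)

instance : IsFiniteMeasure circMeas := ⟨by rw [circMeas_univ]; exact ENNReal.ofReal_lt_top⟩

lemma integrable_circMeas_of_continuous {f : ℝ → ℂ} (hf : Continuous f) : Integrable f circMeas :=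
  (hf.integrableOn_Icc (a := 0) (b := 2 * π)).mono_set Ioc_subset_Icc_self

lemma integral_herglotz_one {z : ℂ} (hz : ‖z‖ < 1) :
    ∫ φ, (cpt φ + z) / (cpt φ - z) ∂circMeas = 2 * π := by
  have h1 : ∀ φ, (cpt φ + z) / (cpt φ - z) = 2 * (cpt φ / (cpt φ - z)) - 1 := fun φ => by
    have := cpt_sub_ne_zero hz φ
    field_simp; ring
  simp_rw [h1]
  have hc : Continuous fun φ => cpt φ / (cpt φ - z) := by
    simpa using continuous_cpt_div hz id continuous_id 1
  rw [integral_sub ((integrable_circMeas_of_continuous hc).const_mul 2) (integrable_const _),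
    integral_const_mul, integral_cpt_div hz]
  simp [Measure.real, pi_pos.le]
  ring

lemma integrable_kernel_mul {K : ℝ → ℂ} (hK : Continuous K) {u : ℝ → ℝ}
    (hu : Integrable u circMeas) :
    Integrable (fun φ => K φ * (u φ : ℂ)) circMeas := by
  obtain ⟨B, hB⟩ := (isCompact_Icc (a := (0:ℝ)) (b := 2 * π)).exists_bound_of_continuousOn
    hK.continuousOn
  refine hu.ofReal.bdd_mul (c := B) hK.aestronglyMeasurable ?_
  exact (ae_restrict_mem measurableSet_Ioc).mono fun φ hφ => hB φ (Ioc_subset_Icc_self hφ)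

lemma continuous_herglotz_kernel {z : ℂ} (hz : ‖z‖ < 1) :
    Continuous fun φ => (cpt φ + z) / (cpt φ - z) := by
  simpa using continuous_cpt_div hz (fun w => w + z) (by fun_prop) 1

lemma hasDerivAt_herglotz {u : ℝ → ℝ} (hu : Integrable u circMeas) {z : ℂ} (hz : ‖z‖ < 1) :
    HasDerivAt (herglotz u)
      ((((2 * π)⁻¹ : ℝ) : ℂ) * ∫ φ, 2 * (cpt φ / (cpt φ - z) ^ 2) * (u φ : ℂ) ∂circMeas) z := by
  set ε := (1 - ‖z‖) / 2 with hε
  have hε0 : 0 < ε := by rw [hε]; linarith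
  refine HasDerivAt.const_mul _ ?_
  have hball : ∀ w ∈ Metric.ball z ε, ‖w‖ < 1 ∧ ∀ φ, ε ≤ ‖cpt φ - w‖ := by
    intro w hw
    have h1 : ‖w‖ < ‖z‖ + ε := by
      have := norm_le_norm_add_norm_sub' w z
      rw [Metric.mem_ball, dist_eq_norm] at hw
      linarith
    refine ⟨by rw [hε] at h1; linarith, fun φ => le_trans ?_ (one_sub_norm_le w φ)⟩
    rw [hε] at h1 ⊢; linarith
  refine (hasDerivAt_integral_of_dominated_loc_of_deriv_le (s := Metric.ball z ε)
    (bound := fun φ => 2 / ε ^ 2 * ‖u φ‖)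
    (F := fun w φ => ((cpt φ + w) / (cpt φ - w)) * (u φ : ℂ))
    (F' := fun w φ => 2 * (cpt φ / (cpt φ - w) ^ 2) * (u φ : ℂ))
    (Metric.ball_mem_nhds z hε0) ?_ ?_ ?_ ?_ ?_ ?_).2
  · filter_upwards [Metric.ball_mem_nhds z hε0] with w hw
    exact (integrable_kernel_mul (continuous_herglotz_kernel
        (hball w hw).1) hu).aestronglyMeasurable
  · exact integrable_kernel_mul (continuous_herglotz_kernel hz) hu
  · exact (integrable_kernel_mul
      (continuous_const.mul (continuous_cpt_div hz id continuous_id 2)) hu).aestronglyMeasurable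
  · refine Eventually.of_forall fun φ w hw => ?_
    have h := (hball w hw).2 φ
    simp only [norm_mul, norm_div, norm_pow, norm_cpt, Complex.norm_real, Complex.norm_ofNat]
    gcongr
    rw [mul_one_div]
    gcongr
  · exact hu.norm.const_mul _
  · refine Eventually.of_forall fun φ w hw => ?_
    have h := cpt_sub_ne_zero (hball w hw).1 φ
    have h1 := (((hasDerivAt_id w).const_add (cpt φ)).div ((hasDerivAt_id w).const_sub (cpt φ)) h)
    refine (h1.mul_const (u φ : ℂ)).congr_deriv ?_
    simp only [id]
    field_simp
    ring

lemma herglotz_const (c : ℝ) {z : ℂ} (hz : ‖z‖ < 1) : herglotz (fun _ => c) z = c := by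
  have hp : (π : ℂ) ≠ 0 := by exact_mod_cast pi_ne_zero
  rw [herglotz, integral_mul_const, integral_herglotz_one hz]
  push_cast
  field_simp

lemma herglotz_sub_const {u : ℝ → ℝ} (hu : Integrable u circMeas) (c : ℝ) {z : ℂ} (hz : ‖z‖ < 1) :
    herglotz (fun φ => u φ - c) z = herglotz u z - c := by
  rw [← herglotz_const c hz]
  simp only [herglotz]
  rw [← mul_sub, ← integral_sub (integrable_kernel_mul (continuous_herglotz_kernel hz) hu)
    (integrable_kernel_mul (continuous_herglotz_kernel hz) (integrable_const c))]
  congr 1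
  refine integral_congr_ae (Eventually.of_forall fun φ => ?_)
  push_cast; ring

lemma herglotz_re_kernel (φ : ℝ) {z : ℂ} :
    ((cpt φ + z) / (cpt φ - z)).re = (1 - ‖z‖ ^ 2) / ‖cpt φ - z‖ ^ 2 := by
  rw [Complex.div_re, ← Complex.normSq_eq_norm_sq (cpt φ - z), ← add_div]
  congr 1
  have h : (cpt φ).re ^ 2 + (cpt φ).im ^ 2 = 1 := by
    have := Complex.normSq_eq_norm_sq (cpt φ)
    rw [norm_cpt, Complex.normSq_apply] at this; linarith
  have h2 : ‖z‖ ^ 2 = z.re ^ 2 + z.im ^ 2 := by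
    rw [← Complex.normSq_eq_norm_sq, Complex.normSq_apply]; ring
  rw [h2, ← h]
  simp
  ring

lemma re_herglotz {u : ℝ → ℝ} (hu : Integrable u circMeas) {z : ℂ} (hz : ‖z‖ < 1) :
    (herglotz u z).re =
      (2 * π)⁻¹ * ∫ φ, (1 - ‖z‖ ^ 2) / ‖cpt φ - z‖ ^ 2 * u φ ∂circMeas := by
  rw [herglotz, Complex.re_ofReal_mul]
  congr 1
  have := integral_re (integrable_kernel_mul (continuous_herglotz_kernel hz) hu)
  simp only [RCLike.re_eq_complex_re] at this
  rw [← this]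
  refine integral_congr_ae (Eventually.of_forall fun φ => ?_)
  simp only [Complex.mul_re, Complex.ofReal_re, Complex.ofReal_im, mul_zero, sub_zero,
    herglotz_re_kernel]

/-- The quantity controlling the derivative of the Herglotz integral. -/
noncomputable def oscInt (u : ℝ → ℝ) (c : ℝ) (z : ℂ) : ℝ≥0∞ :=
  ∫⁻ φ, ENNReal.ofReal |u φ - c| * ENNReal.ofReal (‖cpt φ - z‖ ^ (-2 : ℝ)) ∂circMeas

lemma enorm_kernel_bound {K : ℝ → ℂ} {v : ℝ → ℝ} {b : ℝ} (hb : 0 ≤ b) {z : ℂ}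
    (hK : ∀ φ, ‖K φ‖ ≤ b * ‖cpt φ - z‖ ^ (-2 : ℝ)) :
    ‖∫ φ, K φ * (v φ : ℂ) ∂circMeas‖ₑ ≤ ENNReal.ofReal b * oscInt v 0 z := by
  refine (enorm_integral_le_lintegral_enorm _).trans ?_
  rw [oscInt, ← lintegral_const_mul' _ _ ENNReal.ofReal_ne_top]
  refine lintegral_mono fun φ => ?_
  rw [← ofReal_norm, ← ENNReal.ofReal_mul (abs_nonneg _), ← ENNReal.ofReal_mul hb, norm_mul,
    Complex.norm_real, sub_zero, Real.norm_eq_abs]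
  apply ENNReal.ofReal_le_ofReal
  nlinarith [hK φ, abs_nonneg (v φ)]

lemma oscInt_sub (u : ℝ → ℝ) (c : ℝ) (z : ℂ) : oscInt (fun φ => u φ - c) 0 z = oscInt u c z := by
  simp [oscInt]

lemma rpow_neg_two (x : ℝ) : x ^ (-2 : ℝ) = (x ^ 2)⁻¹ := by
  rw [show (-2 : ℝ) = ((-2 : ℤ) : ℝ) by norm_num, rpow_intCast, zpow_neg]
  rfl

lemma enorm_deriv_herglotz_le {u : ℝ → ℝ} (hu : Integrable u circMeas) (c : ℝ) {z : ℂ}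
    (hz : ‖z‖ < 1) : ‖deriv (herglotz u) z‖ₑ ≤ oscInt u c z := by
  have h1 := hasDerivAt_herglotz (hu.sub (integrable_const c)) hz
  have h2 : HasDerivAt (herglotz fun φ => u φ - c) (deriv (herglotz u) z) z := by
    have h3 := ((hasDerivAt_herglotz hu hz).differentiableAt.hasDerivAt).sub_const (c : ℂ)
    refine h3.congr_of_eventuallyEq ?_
    filter_upwards [(isOpen_lt continuous_norm continuous_const).mem_nhds hz] with w hw
    exact herglotz_sub_const hu c hw
  rw [h2.unique h1, enorm_mul, ← oscInt_sub]
  have h4 := enorm_kernel_bound (K := fun φ => 2 * (cpt φ / (cpt φ - z) ^ 2))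
    (v := fun φ => u φ - c) (b := 2) (by norm_num) (z := z) (fun φ => by
      rw [norm_mul, norm_div, norm_pow, norm_cpt, rpow_neg_two, Complex.norm_ofNat, one_div])
  refine (mul_le_mul_right h4 _).trans ?_
  rw [← mul_assoc, ← ofReal_norm, ← ENNReal.ofReal_mul (norm_nonneg _)]
  refine mul_le_of_le_one_left zero_le ?_
  rw [ENNReal.ofReal_le_one, Complex.norm_real, Real.norm_of_nonneg (by positivity)]
  rw [inv_mul_le_iff₀ (by positivity)]
  linarith [pi_gt_three]

lemma enorm_re_herglotz_sub_le {u : ℝ → ℝ} (hu : Integrable u circMeas) (c : ℝ) {z : ℂ} {δ : ℝ}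
    (hδ : 0 < δ) (hz : ‖z‖ = 1 - δ) :
    ‖(herglotz u z).re - c‖ₑ ≤ ENNReal.ofReal δ * oscInt u c z := by
  have hz1 : ‖z‖ < 1 := by linarith
  have hz0 : δ ≤ 1 := by linarith [norm_nonneg z]
  have h0 : (herglotz u z).re - c = (herglotz (fun φ => u φ - c) z).re := by
    rw [herglotz_sub_const hu c hz1]; simp
  have h6 := re_herglotz (u := fun φ => u φ - c) (hu.sub (integrable_const c)) hz1
  rw [h0, h6, ← oscInt_sub, enorm_mul]
  have h4 := enorm_kernel_bound (K := fun φ => (((1 - ‖z‖ ^ 2) / ‖cpt φ - z‖ ^ 2 : ℝ) : ℂ))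
    (v := fun φ => u φ - c) (b := 2 * δ) (by linarith) (z := z) (fun φ => by
      rw [Complex.norm_real, Real.norm_of_nonneg (div_nonneg (by nlinarith) (by positivity)),
        rpow_neg_two, ← div_eq_mul_inv]
      gcongr
      rw [hz]; nlinarith)
  have h5 : ‖∫ φ, (((1 - ‖z‖ ^ 2) / ‖cpt φ - z‖ ^ 2 : ℝ) : ℂ) * ((u φ - c : ℝ) : ℂ) ∂circMeas‖ₑ =
      ‖∫ φ, (1 - ‖z‖ ^ 2) / ‖cpt φ - z‖ ^ 2 * (u φ - c) ∂circMeas‖ₑ := by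
    simp_rw [← Complex.ofReal_mul]
    rw [integral_complex_ofReal, ← ofReal_norm, Complex.norm_real, ofReal_norm]
  rw [h5] at h4
  refine (mul_le_mul_right h4 _).trans ?_
  rw [← mul_assoc, ← ofReal_norm, ← ENNReal.ofReal_mul (norm_nonneg _)]
  gcongr
  rw [Real.norm_of_nonneg (by positivity), inv_mul_le_iff₀ (by positivity)]
  nlinarith [pi_gt_three]

end Herglotz

section Pointwise

variable {E : Set ℂ} {ω ω' : ℝ → ℝ} {C η γ : ℝ}

/-- The point of the disc at angle `θ` and at distance `δ` from the circle. -/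
noncomputable def diskPt (δ θ : ℝ) : ℂ := ((1 - δ : ℝ) : ℂ) * cpt θ

lemma norm_diskPt {δ : ℝ} (hδ : δ ≤ 1) (θ : ℝ) : ‖diskPt δ θ‖ = 1 - δ := by
  rw [diskPt, norm_mul, norm_cpt, mul_one, Complex.norm_real, Real.norm_of_nonneg (by linarith)]

lemma norm_cpt_sub_diskPt {δ : ℝ} (hδ : 0 ≤ δ) (θ : ℝ) : ‖cpt θ - diskPt δ θ‖ = δ := by
  rw [diskPt, show cpt θ - ((1 - δ : ℝ) : ℂ) * cpt θ = (δ : ℂ) * cpt θ by push_cast; ring,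
    norm_mul, norm_cpt, mul_one, Complex.norm_real, Real.norm_of_nonneg hδ]

@[fun_prop]
lemma continuous_diskPt : Continuous fun p : ℝ × ℝ => diskPt p.1 p.2 := by
  unfold diskPt; fun_prop

/-- The constant in the oscillation estimate. -/
noncomputable def oscConst (C η γ : ℝ) : ℝ := 180 * π * γ + 72 * C / η

lemma RegularSet.oscConst_pos (hE : RegularSet E C η) (hγ : 2 < γ) : 0 < oscConst C η γ := by
  have := hE.pos
  have := hE.exp_mem.1
  unfold oscConst
  positivity

lemma RegularSet.lintegral_indicator_log (hE : RegularSet E C η) {s : ℝ} (hs : 0 < s) (z : ℂ) :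
    ∫⁻ φ, {φ | s / 6 < ‖cpt φ - z‖}.indicator (fun φ => ENNReal.ofReal (log (s / dE E (cpt φ)))) φ *
      ENNReal.ofReal (‖cpt φ - z‖ ^ (-2 : ℝ)) ∂circMeas ≤ ENNReal.ofReal (72 * C / η / s) := by
  have hC := hE.pos
  have hη := hE.exp_mem.1
  have hm : MeasurableSet {φ | s / 6 < ‖cpt φ - z‖} := measurableSet_lt (by fun_prop) (by fun_prop)
  have := lintegral_shell (μ := circMeas) (p := 2) (δ := s / 6) (A := 6 * C / η)
    (G := {φ | s / 6 < ‖cpt φ - z‖}.indicator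
      (fun φ => ENNReal.ofReal (log (s / dE E (cpt φ))))) (ρ := fun φ => ‖cpt φ - z‖)
    (Measurable.indicator (by fun_prop) hm) (by fun_prop) (by positivity) (by norm_num)
    (by positivity) (fun φ hφ => ?_) (fun R hR => ?_)
  · refine this.trans (ENNReal.ofReal_le_ofReal (le_of_eq ?_))
    rw [show (1:ℝ) - 2 = -1 by norm_num, rpow_neg_one]
    field_simp; norm_num
  · by_contra h
    exact hφ (indicator_of_notMem (s := {φ | s / 6 < ‖cpt φ - z‖}) (fun h' => h (le_of_lt h')) _)
  · have hR0 : 0 < R := by linarith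
    calc _ ≤ ∫⁻ φ in {φ | ‖cpt φ - z‖ ≤ R}, ENNReal.ofReal (log (6 *
            R / dE E (cpt φ))) ∂circMeas := by
          refine lintegral_mono fun φ => (indicator_le_self _ _ φ).trans ?_
          apply ENNReal.ofReal_le_ofReal
          rcases (dE_nonneg E (cpt φ)).eq_or_lt with h | h
          · rw [← h]; simp
          · apply log_le_log (by positivity)
            gcongr; linarith
      _ ≤ ∫⁻ φ in {φ | ‖cpt φ - z‖ ≤ 6 * R}, ENNReal.ofReal (log (6 *
              R / dE E (cpt φ))) ∂circMeas := by
          refine lintegral_mono_set fun φ hφ => ?_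
          have h : ‖cpt φ - z‖ ≤ R := hφ
          show ‖cpt φ - z‖ ≤ 6 * R
          linarith
      _ ≤ _ := (hE.lintegral_log (by positivity) z).trans (ENNReal.ofReal_le_ofReal (le_of_eq
              (by ring)))

lemma RegularSet.oscInt_le (hE : RegularSet E C η) (hω : OmegaHyp ω ω' γ) (hγ : 2 < γ)
    {δ : ℝ} (hδ : 0 < δ) (hδ1 : δ ≤ 1) (θ : ℝ) {s : ℝ} (hs : s = dE E (cpt θ) + δ) :
    oscInt (fun φ => log (ω (dE E (cpt φ)))) (log (ω s)) (diskPt δ θ) ≤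
      ENNReal.ofReal (s * ω' s / ω s * (oscConst C η γ / s * (s / δ) ^ (1 / 4 : ℝ))) := by
  have hC := hE.pos
  have hη := hE.exp_mem.1
  have hd2 := dE_cpt_le_two hE θ
  have hd0 := dE_nonneg E (cpt θ)
  have hsI : s ∈ Ioo 0 π := ⟨by linarith, by linarith [pi_gt_three]⟩
  have hs0 := hsI.1
  set z := diskPt δ θ
  have hz : ‖z‖ = 1 - δ := norm_diskPt hδ1 θ
  have hzθ : ‖cpt θ - z‖ = δ := norm_cpt_sub_diskPt hδ.le θ
  have hκ := hω.kappa_nonneg hsI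
  set κ := s * ω' s / ω s
  have hρ : ∀ φ, δ ≤ ‖cpt φ - z‖ := fun φ => by
    have := one_sub_norm_le (z := z) φ
    linarith
  set G : ℝ → ℝ≥0∞ := fun φ => {φ | s / 6 < ‖cpt φ - z‖}.indicator
    (fun φ => ENNReal.ofReal (log (s / dE E (cpt φ)))) φ
  have hG : Measurable G := Measurable.indicator (by fun_prop)
    (measurableSet_lt (by fun_prop) (by fun_prop))
  have hpt : ∀ᵐ φ ∂circMeas, ENNReal.ofReal |log (ω (dE E (cpt φ))) - log (ω s)| *
      ENNReal.ofReal (‖cpt φ - z‖ ^ (-2 : ℝ)) ≤ ENNReal.ofReal κ *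
      (ENNReal.ofReal (6 * γ * s ^ (-(3 / 4) : ℝ)) * (1 *
          ENNReal.ofReal (‖cpt φ - z‖ ^ (-(5 / 4) : ℝ)))
        + G φ * ENNReal.ofReal (‖cpt φ - z‖ ^ (-2 : ℝ))) := by
    filter_upwards [hE.ae_pos] with φ hφ
    have hρφ := hρ φ
    have hρ0 : 0 < ‖cpt φ - z‖ := hδ.trans_le hρφ
    have h1 : dE E (cpt φ) ≤ s + ‖cpt φ - z‖ := by
      have a1 := dE_le_add E (cpt φ) z
      have a2 := dE_le_add E z (cpt θ)
      rw [norm_sub_rev, hzθ] at a2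
      linarith
    have h2 : s - 3 * ‖cpt φ - z‖ ≤ dE E (cpt φ) := by
      have a1 := dE_le_add E (cpt θ) (cpt φ)
      have a2 := norm_sub_le_norm_sub_add_norm_sub (cpt θ) z (cpt φ)
      rw [hzθ, norm_sub_rev z] at a2
      linarith
    have h3 := hω.abs_log_sub_le hγ hsI ⟨hφ, (dE_cpt_lt_pi hE φ).le⟩ (norm_nonneg (cpt φ - z)) h1 h2
    refine (mul_le_mul_left (ENNReal.ofReal_le_ofReal h3) _).trans ?_
    rw [ENNReal.ofReal_mul hκ, mul_assoc]
    gcongr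
    rw [ENNReal.ofReal_add (by positivity)
      (indicator_nonneg (fun _ _ => le_max_left _ _) _), add_mul]
    refine add_le_add ?_ (mul_le_mul_left ?_ _)
    · rw [one_mul, ← ENNReal.ofReal_mul (by positivity), ← ENNReal.ofReal_mul (by positivity)]
      refine ENNReal.ofReal_le_ofReal (le_of_eq ?_)
      rw [div_rpow hρ0.le hs0.le, rpow_neg hs0.le, mul_assoc (6 * γ) ((s ^ (3/4:ℝ))⁻¹),
        show (-(5/4):ℝ) = 3/4 + -2 by norm_num, rpow_add hρ0]
      ring
    · simp only [G, indicator, mem_ofPred_eq]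
      split_ifs
      · rw [ENNReal.ofReal_max]; simp
      · simp
  refine (lintegral_mono_ae hpt).trans ?_
  rw [lintegral_const_mul' _ _ ENNReal.ofReal_ne_top, lintegral_add_right _ (by fun_prop),
    lintegral_const_mul' _ _ ENNReal.ofReal_ne_top, ENNReal.ofReal_mul hκ]
  gcongr
  have t1 := lintegral_shell (μ := circMeas) (p := 5 / 4) (δ := δ) (A := 6 * π)
    (G := fun _ => 1) (ρ := fun φ => ‖cpt φ - z‖) (by fun_prop) (by fun_prop) hδ (by norm_num)
    (by positivity) (fun φ _ => hρ φ) (fun R hR => by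
      simpa using circMeas_closedBall_le z (hδ.le.trans hR))
  have t2 := hE.lintegral_indicator_log hs0 z
  refine (add_le_add (mul_le_mul_right t1 _) t2).trans ?_
  rw [← ENNReal.ofReal_mul (by positivity), ← ENNReal.ofReal_add (by positivity) (by positivity)]
  apply ENNReal.ofReal_le_ofReal
  have hge : 1 ≤ (s / δ) ^ (1 / 4 : ℝ) :=
    one_le_rpow (by rw [le_div_iff₀ hδ]; linarith) (by norm_num)
  have e1 : 6 * γ * s ^ (-(3 / 4) : ℝ) * (6 * π * (5 / 4 / (5 / 4 - 1)) * δ ^ (1 - 5 / 4 : ℝ)) =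
      180 * π * γ / s * (s / δ) ^ (1 / 4 : ℝ) := by
    rw [div_rpow hs0.le hδ.le, show (1 - 5 / 4 : ℝ) = -(1 / 4) by norm_num, rpow_neg hδ.le,
      show (-(3 / 4) : ℝ) = 1 / 4 - 1 by norm_num, rpow_sub hs0, rpow_one]
    field_simp; ring
  rw [e1, oscConst, add_div, add_mul]
  gcongr
  exact le_mul_of_one_le_right (by positivity) hge

end Pointwise

section OuterBounds

variable {E : Set ℂ} {C η γ : ℝ} {ω ω' : ℝ → ℝ}

lemma diskPt_mem {δ : ℝ} (hδ : 0 < δ) (hδ1 : δ ≤ 1) (θ : ℝ) : diskPt δ θ ∈ unitDisc := by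
  rw [unitDisc, mem_ball_zero_iff, norm_diskPt hδ1]; linarith

lemma exists_diskPt_eq {z : ℂ} (hz : z ∈ unitDisc) :
    ∃ δ θ, 0 < δ ∧ δ ≤ 1 ∧ z = diskPt δ θ := by
  rw [unitDisc, mem_ball_zero_iff] at hz
  refine ⟨1 - ‖z‖, Complex.arg z, by linarith, by linarith [norm_nonneg z], ?_⟩
  rw [diskPt, sub_sub_cancel, cpt_def, Complex.norm_mul_exp_arg_mul_I]

lemma outerFun_eq (ω : ℝ → ℝ) (E : Set ℂ) :
    outerFun ω E = fun z => Complex.exp (herglotz (fun φ => log (ω (dE E (cpt φ)))) z) := rfl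

lemma hasDerivAt_outerFun (hu : Integrable (fun φ => log (ω (dE E (cpt φ)))) circMeas) {z : ℂ}
    (hz : z ∈ unitDisc) : HasDerivAt (outerFun ω E)
      (outerFun ω E z * deriv (herglotz (fun φ => log (ω (dE E (cpt φ))))) z) z := by
  rw [unitDisc, mem_ball_zero_iff] at hz
  exact ((hasDerivAt_herglotz hu hz).differentiableAt.hasDerivAt).cexp

lemma differentiableOn_outerFun (hu : Integrable (fun φ => log (ω (dE E (cpt φ)))) circMeas) :
    DifferentiableOn ℂ (outerFun ω E) unitDisc := fun _ hz =>
  (hasDerivAt_outerFun hu hz).differentiableAt.differentiableWithinAt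

lemma RegularSet.add_mem (hE : RegularSet E C η) {δ : ℝ} (hδ : 0 < δ) (hδ1 : δ ≤ 1) (θ : ℝ) :
    dE E (cpt θ) + δ ∈ Ioo 0 π := by
  have hd2 := dE_cpt_le_two hE θ
  have hd0 := dE_nonneg E (cpt θ)
  exact ⟨by linarith, by linarith [pi_gt_three]⟩

lemma RegularSet.abs_log_norm_outerFun_le (hE : RegularSet E C η) (hω : OmegaHyp ω ω' γ)
    (hγ : 2 < γ) (hu : Integrable (fun φ => log (ω (dE E (cpt φ)))) circMeas)
    {δ : ℝ} (hδ : 0 < δ) (hδ1 : δ ≤ 1) (θ : ℝ) :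
    |log ‖outerFun ω E (diskPt δ θ)‖ - log (ω (dE E (cpt θ) + δ))| ≤
      oscConst C η γ * (δ / (dE E (cpt θ) + δ)) ^ (3 / 4 : ℝ) := by
  obtain ⟨s, hs⟩ : ∃ s, s = dE E (cpt θ) + δ := ⟨_, rfl⟩
  have hsI := hE.add_mem hδ hδ1 θ
  rw [← hs] at hsI ⊢
  have hs0 := hsI.1
  have hK := hE.oscConst_pos hγ
  have hκ := hω.kappa_nonneg hsI
  have hκ1 := hω.kappa_le_one hγ hsI
  rw [outerFun_eq, Complex.norm_exp, log_exp]
  have h1 := enorm_re_herglotz_sub_le hu (log (ω s)) hδ (norm_diskPt hδ1 θ)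
  have h2 := h1.trans (mul_le_mul_right (hE.oscInt_le hω hγ hδ hδ1 θ hs) _)
  rw [← ENNReal.ofReal_mul hδ.le, ← ofReal_norm, ENNReal.ofReal_le_ofReal_iff (by positivity),
    Real.norm_eq_abs] at h2
  refine h2.trans ?_
  set κ := s * ω' s / ω s
  have e : δ * (κ * (oscConst C η γ / s * (s / δ) ^ (1 / 4 : ℝ))) =
      κ * (oscConst C η γ * (δ / s) ^ (3 / 4 : ℝ)) := by
    rw [div_rpow hs0.le hδ.le, div_rpow hδ.le hs0.le, show (3 / 4 : ℝ) = 1 - 1 / 4 by norm_num,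
      rpow_sub hδ, rpow_sub hs0, rpow_one, rpow_one]
    have := rpow_pos_of_pos hs0 (1/4)
    have := rpow_pos_of_pos hδ (1/4)
    field_simp
  rw [e]
  exact mul_le_of_le_one_left (by positivity) hκ1

lemma RegularSet.norm_outerFun_le (hE : RegularSet E C η) (hω : OmegaHyp ω ω' γ)
    (hγ : 2 < γ) (hu : Integrable (fun φ => log (ω (dE E (cpt φ)))) circMeas)
    {δ : ℝ} (hδ : 0 < δ) (hδ1 : δ ≤ 1) (θ : ℝ) :
    ‖outerFun ω E (diskPt δ θ)‖ ≤ exp (oscConst C η γ) * ω (dE E (cpt θ) + δ) := by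
  have hsI := hE.add_mem hδ hδ1 θ
  have hd0 := dE_nonneg E (cpt θ)
  have hK := hE.oscConst_pos hγ
  have h1 := (abs_le.1 (hE.abs_log_norm_outerFun_le hω hγ hu hδ hδ1 θ)).2
  have hpos : 0 < ‖outerFun ω E (diskPt δ θ)‖ := by
    rw [outerFun_eq, Complex.norm_exp]; exact exp_pos _
  have hωp := hω.pos hsI.1 hsI.2.le
  have h2 : (δ / (dE E (cpt θ) + δ)) ^ (3 / 4 : ℝ) ≤ 1 :=
    rpow_le_one (by positivity) (by rw [div_le_one hsI.1]; linarith) (by norm_num)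
  rw [← log_le_log_iff hpos (by positivity), log_mul (exp_ne_zero _) hωp.ne', log_exp]
  nlinarith

lemma RegularSet.norm_outerFun_le_const (hE : RegularSet E C η) (hω : OmegaHyp ω ω' γ)
    (hγ : 2 < γ) (hu : Integrable (fun φ => log (ω (dE E (cpt φ)))) circMeas) {z : ℂ}
    (hz : z ∈ unitDisc) :
    ‖outerFun ω E z‖ ≤ exp (oscConst C η γ) * ω 3 := by
  obtain ⟨δ, θ, h1, h2, rfl⟩ := exists_diskPt_eq hz
  refine (hE.norm_outerFun_le hω hγ hu h1 h2 θ).trans ?_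
  gcongr
  exact hω.mono (hE.add_mem h1 h2 θ).1 (by linarith [dE_cpt_le_two hE θ]) pi_gt_three.le

lemma RegularSet.norm_deriv_outerFun_le (hE : RegularSet E C η) (hω : OmegaHyp ω ω' γ)
    (hγ : 2 < γ) (hu : Integrable (fun φ => log (ω (dE E (cpt φ)))) circMeas)
    {δ : ℝ} (hδ : 0 < δ) (hδ1 : δ ≤ 1) (θ : ℝ) :
    ‖deriv (outerFun ω E) (diskPt δ θ)‖ ≤ exp (oscConst C η γ) * oscConst C η γ *
      (ω' (dE E (cpt θ) + δ) * ((dE E (cpt θ) + δ) / δ) ^ (1 / 4 : ℝ)) := by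
  have hsI := hE.add_mem hδ hδ1 θ
  have hz := diskPt_mem hδ hδ1 θ
  have hK := hE.oscConst_pos hγ
  have h0 := hE.norm_outerFun_le hω hγ hu hδ hδ1 θ
  rw [(hasDerivAt_outerFun hu hz).deriv, norm_mul]
  obtain ⟨s, hs⟩ : ∃ s, s = dE E (cpt θ) + δ := ⟨_, rfl⟩
  rw [← hs] at hsI h0 ⊢
  have hs0 := hsI.1
  have hωp := hω.pos hsI.1 hsI.2.le
  have hκ := hω.kappa_nonneg hsI
  have h1 := (enorm_deriv_herglotz_le hu (log (ω s)) (mem_ball_zero_iff.1 hz)).trans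
    (hE.oscInt_le hω hγ hδ hδ1 θ hs)
  rw [← ofReal_norm, ENNReal.ofReal_le_ofReal_iff (by positivity)] at h1
  refine (mul_le_mul h0 h1 (norm_nonneg _) (by positivity)).trans (le_of_eq ?_)
  field_simp

end OuterBounds

section Radial

variable {E : Set ℂ} {C η γ : ℝ} {ω ω' : ℝ → ℝ}

lemma lintegral_Ioc_rpow {p a : ℝ} (hp : -1 < p) (ha : 0 ≤ a) :
    ∫⁻ x in Ioc 0 a, ENNReal.ofReal (x ^ p) = ENNReal.ofReal (a ^ (p + 1) / (p + 1)) := by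
  have h1 : IntervalIntegrable (fun x : ℝ => x ^ p) volume 0 a :=
    intervalIntegral.intervalIntegrable_rpow' hp
  rw [intervalIntegrable_iff_integrableOn_Ioc_of_le ha] at h1
  rw [← ofReal_integral_eq_lintegral_ofReal h1
    ((ae_restrict_mem measurableSet_Ioc).mono fun x hx => by
      have : 0 < x := hx.1
      positivity), ← intervalIntegral.integral_of_le ha, integral_rpow (Or.inl hp),
    zero_rpow (by linarith), sub_zero]

/-- The constant in the radial estimate. -/
noncomputable def radialConst (C η γ : ℝ) : ℝ :=
  (exp (oscConst C η γ) * oscConst C η γ) ^ 2 * (2 * (2 + (1 - 2 * γ⁻¹)⁻¹))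

lemma inv_gamma_lt (hγ : 2 < γ) : γ⁻¹ < 1 / 2 := by
  rw [inv_lt_comm₀ (by linarith) (by norm_num)]; linarith

lemma RegularSet.radialConst_pos (hE : RegularSet E C η) (hγ : 2 < γ) : 0 < radialConst C η γ := by
  have h1 := inv_gamma_lt hγ
  have h2 : 0 < 1 - 2 * γ⁻¹ := by linarith
  have := hE.oscConst_pos hγ
  unfold radialConst
  positivity

lemma OmegaHyp.shifted_deriv_le (hω : OmegaHyp ω ω' γ) (hγ : 2 < γ) {a δ : ℝ} (ha : 0 < a)
    (hδ : 0 < δ) (hs : a + δ < π) :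
    (ω' (a + δ) * ((a + δ) / δ) ^ (1 / 4 : ℝ)) ^ 2 ≤ 2 * ω' a ^ 2 *
      ((Ioc 0 a).indicator (fun δ => a ^ (1 / 2 : ℝ) * δ ^ (-(1 / 2) : ℝ)) δ +
       (Ioi a).indicator (fun δ => a ^ (2 - 2 * γ⁻¹) * δ ^ (-(2 - 2 * γ⁻¹))) δ) := by
  have hβ := inv_gamma_lt hγ
  have hs0 : 0 < a + δ := by linarith
  have h1 := hω.deriv_le hγ ha (by linarith : a ≤ a + δ) hs
  have h0 := hω.deriv_nonneg ⟨hs0, hs⟩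
  have ha0 := hω.deriv_nonneg (t := a) ⟨ha, by linarith⟩
  have e1 : (((a + δ) / δ) ^ (1 / 4 : ℝ)) ^ 2 = ((a + δ) / δ) ^ (1 / 2 : ℝ) := by
    rw [← rpow_natCast, ← rpow_mul (by positivity)]; norm_num
  rw [mul_pow, e1]
  have h2 : ω' (a + δ) ^ 2 ≤ ω' a ^ 2 * (a / (a + δ)) ^ (2 - 2 * γ⁻¹) := by
    calc ω' (a + δ) ^ 2 ≤ (ω' a * (a / (a + δ)) ^ (1 - γ⁻¹)) ^ 2 := by gcongr
      _ = _ := by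
        rw [mul_pow, ← rpow_natCast (_ ^ (1 - γ⁻¹)), ← rpow_mul (by positivity)]
        congr 2; push_cast; ring
  rcases le_or_gt δ a with h | h
  · rw [indicator_of_mem (show δ ∈ Ioc 0 a from ⟨hδ, h⟩),
      indicator_of_notMem (by simpa using h), add_zero]
    have h3 : (a / (a + δ)) ^ (2 - 2 * γ⁻¹) ≤ 1 :=
      rpow_le_one (by positivity) (by rw [div_le_one hs0]; linarith) (by linarith)
    have h4 : ((a + δ) / δ) ^ (1 / 2 : ℝ) ≤ 2 * (a ^ (1 / 2 : ℝ) * δ ^ (-(1 / 2) : ℝ)) := by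
      calc ((a + δ) / δ) ^ (1 / 2 : ℝ) ≤ (2 * a / δ) ^ (1 / 2 : ℝ) := by gcongr; linarith
        _ = 2 ^ (1 / 2 : ℝ) * (a ^ (1 / 2 : ℝ) * δ ^ (-(1 / 2) : ℝ)) := by
          rw [div_rpow (by positivity) hδ.le, mul_rpow (by norm_num) ha.le, rpow_neg hδ.le]; ring
        _ ≤ _ := by
          gcongr
          calc (2:ℝ) ^ (1 / 2 : ℝ) ≤ 2 ^ (1 : ℝ) := rpow_le_rpow_of_exponent_le (by norm_num)
                  (by norm_num)
            _ = 2 := rpow_one 2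
    calc _ ≤ ω' a ^ 2 * 1 * (2 * (a ^ (1 / 2 : ℝ) * δ ^ (-(1 / 2) : ℝ))) := by
          gcongr
          exact h2.trans (by gcongr)
      _ = _ := by ring
  · rw [indicator_of_notMem (fun h' : δ ∈ Ioc 0 a => absurd h'.2 (by linarith)),
      indicator_of_mem (by simpa using h), zero_add]
    have h3 : (a / (a + δ)) ^ (2 - 2 * γ⁻¹) ≤ a ^ (2 - 2 * γ⁻¹) * δ ^ (-(2 - 2 * γ⁻¹)) := by
      rw [rpow_neg hδ.le, ← div_eq_mul_inv (a ^ _), ← div_rpow ha.le hδ.le]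
      apply rpow_le_rpow (by positivity) _ (by linarith)
      gcongr; linarith
    have h4 : ((a + δ) / δ) ^ (1 / 2 : ℝ) ≤ 2 := by
      calc ((a + δ) / δ) ^ (1 / 2 : ℝ) ≤ 2 ^ (1 / 2 : ℝ) := by
            gcongr; rw [div_le_iff₀ hδ]; linarith
        _ ≤ 2 ^ (1 : ℝ) := rpow_le_rpow_of_exponent_le (by norm_num) (by norm_num)
        _ = 2 := rpow_one 2
    calc _ ≤ ω' a ^ 2 * (a ^ (2 - 2 * γ⁻¹) * δ ^ (-(2 - 2 * γ⁻¹))) * 2 := by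
          gcongr
          exact h2.trans (by gcongr)
      _ = _ := by ring

lemma RegularSet.lintegral_radial_le (hE : RegularSet E C η) (hω : OmegaHyp ω ω' γ)
    (hγ : 2 < γ) (hu : Integrable (fun φ => log (ω (dE E (cpt φ)))) circMeas) {θ : ℝ}
    (hθ : 0 < dE E (cpt θ)) :
    ∫⁻ δ in Ioc 0 1, ENNReal.ofReal (‖deriv (outerFun ω E) (diskPt δ θ)‖ ^ 2) ≤
      ENNReal.ofReal (radialConst C η γ * (dE E (cpt θ) * ω' (dE E (cpt θ)) ^ 2)) := by
  have hβ := inv_gamma_lt hγ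
  have hK := hE.oscConst_pos hγ
  obtain ⟨a, ha⟩ : ∃ a, a = dE E (cpt θ) := ⟨_, rfl⟩
  set B := exp (oscConst C η γ) * oscConst C η γ with hB
  have hB0 : 0 < B := by positivity
  rw [← ha] at hθ ⊢
  have hpt : ∀ δ ∈ Ioc (0:ℝ) 1, ENNReal.ofReal (‖deriv (outerFun ω E) (diskPt δ θ)‖ ^ 2) ≤
      ENNReal.ofReal (B ^ 2 * (2 * ω' a ^ 2)) *
      ((Ioc 0 a).indicator (fun δ => ENNReal.ofReal (a ^ (1 / 2 : ℝ)) *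
          ENNReal.ofReal (δ ^ (-(1 / 2) : ℝ))) δ +
       (Ioi a).indicator (fun δ => ENNReal.ofReal (a ^ (2 - 2 * γ⁻¹)) *
          ENNReal.ofReal (δ ^ (-(2 - 2 * γ⁻¹)))) δ) := by
    intro δ hδ
    have h1 := hE.norm_deriv_outerFun_le hω hγ hu hδ.1 hδ.2 θ
    have hs := hE.add_mem hδ.1 hδ.2 θ
    rw [← ha] at h1 hs
    have h2 := hω.shifted_deriv_le hγ hθ hδ.1 hs.2
    have h3 : ‖deriv (outerFun ω E) (diskPt δ θ)‖ ^ 2 ≤ B ^ 2 * (2 * ω' a ^ 2) *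
      ((Ioc 0 a).indicator (fun δ => a ^ (1 / 2 : ℝ) * δ ^ (-(1 / 2) : ℝ)) δ +
       (Ioi a).indicator (fun δ => a ^ (2 - 2 * γ⁻¹) * δ ^ (-(2 - 2 * γ⁻¹))) δ) := by
      calc _ ≤ (B * (ω' (a + δ) * ((a + δ) / δ) ^ (1 / 4 : ℝ))) ^ 2 := by gcongr
        _ = B ^ 2 * (ω' (a + δ) * ((a + δ) / δ) ^ (1 / 4 : ℝ)) ^ 2 := by ring
        _ ≤ B ^ 2 * _ := mul_le_mul_of_nonneg_left h2 (by positivity)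
        _ = _ := by ring
    refine (ENNReal.ofReal_le_ofReal h3).trans ?_
    rw [ENNReal.ofReal_mul (by positivity)]
    gcongr
    refine ENNReal.ofReal_add_le.trans (le_of_eq ?_)
    have hδ0 := hδ.1
    congr 1
    · simp only [indicator]
      split_ifs
      · rw [ENNReal.ofReal_mul (by positivity)]
      · simp
    · simp only [indicator]
      split_ifs
      · rw [ENNReal.ofReal_mul (by positivity)]
      · simp
  refine (setLIntegral_mono' measurableSet_Ioc hpt).trans ?_
  refine (lintegral_mono' Measure.restrict_le_self le_rfl).trans ?_
  rw [lintegral_const_mul' _ _ ENNReal.ofReal_ne_top, lintegral_add_left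
    (Measurable.indicator (by fun_prop) measurableSet_Ioc), lintegral_indicator measurableSet_Ioc,
    lintegral_indicator measurableSet_Ioi, lintegral_const_mul' _ _ ENNReal.ofReal_ne_top,
    lintegral_const_mul' _ _ ENNReal.ofReal_ne_top, lintegral_Ioc_rpow (by norm_num) hθ.le,
    lintegral_Ioi_rpow (by linarith) hθ]
  have hq : 0 < 1 - 2 * γ⁻¹ := by linarith
  rw [← ENNReal.ofReal_mul (by positivity), ← ENNReal.ofReal_mul (by positivity),
    ← ENNReal.ofReal_add (by positivity)
      (mul_nonneg (by positivity) (div_nonneg (by positivity) (by linarith))),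
    ← ENNReal.ofReal_mul (by positivity)]
  refine ENNReal.ofReal_le_ofReal (le_of_eq ?_)
  have e1 : a ^ (1 / 2 : ℝ) * (a ^ (-(1 / 2) + 1 : ℝ) / (-(1 / 2) + 1)) = 2 * a := by
    rw [mul_div_assoc', ← rpow_add hθ]; norm_num; ring
  have e2 : a ^ (2 - 2 * γ⁻¹) * (a ^ (-(2 - 2 * γ⁻¹) + 1) / (- -(2 - 2 * γ⁻¹) - 1)) =
      (1 - 2 * γ⁻¹)⁻¹ * a := by
    rw [mul_div_assoc', ← rpow_add hθ, show 2 - 2 * γ⁻¹ + (-(2 - 2 * γ⁻¹) + 1) = 1 by ring,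
      show - -(2 - 2 * γ⁻¹) - 1 = 1 - 2 * γ⁻¹ by ring, rpow_one]
    ring
  rw [e1, e2, radialConst, ← hB]
  ring

end Radial

section PlaneIntegrals

lemma lintegral_mul_sq_le {α : Type*} [MeasurableSpace α] (μ : Measure α) {f g : α → ℝ≥0∞}
    (hf : AEMeasurable f μ) (hg : AEMeasurable g μ) :
    (∫⁻ x, f x * g x ∂μ) ^ 2 ≤ (∫⁻ x, f x ^ 2 ∂μ) * ∫⁻ x, g x ^ 2 ∂μ := by
  have h := ENNReal.lintegral_mul_le_Lp_mul_Lq μ Real.HolderConjugate.two_two hf hg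
  simp only [Pi.mul_apply] at h
  calc _ ≤ _ := pow_le_pow_left₀ zero_le h 2
    _ = _ := by
      have e : ∀ x : ℝ≥0∞, (x ^ (1 / 2 : ℝ)) ^ 2 = x := fun x => by
        rw [← ENNReal.rpow_natCast, ← ENNReal.rpow_mul]; norm_num
      rw [mul_pow, e, e]
      simp

lemma lintegral_Ioc_eq_of_periodic {f : ℝ → ℝ≥0∞} (hf : Function.Periodic f (2 * π)) (t : ℝ) :
    ∫⁻ θ in Ioc t (t + 2 * π), f θ = ∫⁻ θ, f θ ∂circMeas := by
  have h := (isAddFundamentalDomain_Ioc two_pi_pos t).setLIntegral_eq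
    (isAddFundamentalDomain_Ioc two_pi_pos 0) f hf.map_vadd_zmultiples
  rw [h, zero_add]

lemma lintegral_circMeas_add {f : ℝ → ℝ≥0∞} (hf : Function.Periodic f (2 * π)) (t : ℝ) :
    ∫⁻ θ, f (θ + t) ∂circMeas = ∫⁻ θ, f θ ∂circMeas := by
  symm
  rw [← lintegral_Ioc_eq_of_periodic hf t, ← lintegral_indicator measurableSet_Ioc,
    ← lintegral_indicator measurableSet_Ioc, ← lintegral_add_right_eq_self _ t]
  refine lintegral_congr fun θ => ?_
  simp only [indicator, mem_Ioc]
  congr 1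
  rw [eq_iff_iff]
  constructor <;> rintro ⟨h1, h2⟩ <;> constructor <;> linarith

lemma lintegral_polar {G : ℂ → ℝ≥0∞} (hG : Measurable G) :
    ∫⁻ z, G z = ∫⁻ r in Ioi (0:ℝ), ENNReal.ofReal r * ∫⁻ θ, G ((r : ℂ) * cpt θ) ∂circMeas := by
  rw [← Complex.lintegral_comp_polarCoord_symm, polarCoord_target, Measure.volume_eq_prod,
    setLIntegral_prod]
  · refine setLIntegral_congr_fun measurableSet_Ioi fun r _ => ?_
    have hper : Function.Periodic (fun θ => G ((r : ℂ) * cpt θ)) (2 * π) := fun θ => by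
      simp only [cpt_periodic θ]
    have h := lintegral_Ioc_eq_of_periodic hper (-π)
    rw [show -π + 2 * π = π by ring] at h
    simp only [smul_eq_mul]
    rw [lintegral_const_mul' _ _ ENNReal.ofReal_ne_top, ← h, restrict_Ioo_eq_restrict_Ioc]
    congr 1
    refine lintegral_congr fun θ => ?_
    rw [Complex.polarCoord_symm_apply, cpt_def, Complex.exp_mul_I]
    push_cast
    rfl
  · apply Measurable.aemeasurable
    simp only [smul_eq_mul, Complex.polarCoord_symm_apply]
    fun_prop

lemma lintegral_unitDisc {G : ℂ → ℝ≥0∞} (hG : Measurable G) :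
    ∫⁻ z in unitDisc, G z =
      ∫⁻ δ in Ioc (0:ℝ) 1, ENNReal.ofReal (1 - δ) * ∫⁻ θ, G (diskPt δ θ) ∂circMeas := by
  have hm : MeasurableSet unitDisc := Metric.isOpen_ball.measurableSet
  rw [← lintegral_indicator hm, lintegral_polar (hG.indicator hm),
    ← lintegral_indicator measurableSet_Ioi, ← lintegral_indicator measurableSet_Ioc,
    ← lintegral_sub_left_eq_self _ 1]
  refine lintegral_congr_ae ?_
  have : ∀ᵐ x : ℝ, x ≠ 1 := by
    simp [ae_iff]
  filter_upwards [this] with δ hδ1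
  by_cases h : δ ∈ Ioc (0:ℝ) 1
  · have h2 : δ < 1 := lt_of_le_of_ne h.2 hδ1
    rw [indicator_of_mem h, indicator_of_mem (show 1 - δ ∈ Ioi (0:ℝ) from by simpa using h2)]
    congr 1
    refine lintegral_congr fun θ => ?_
    exact indicator_of_mem (diskPt_mem h.1 h.2 θ) _
  · rw [indicator_of_notMem h]
    by_cases h2 : 1 - δ ∈ Ioi (0:ℝ)
    · rw [indicator_of_mem h2]
      have h3 : δ ≤ 0 := by
        by_contra h4
        exact h ⟨by linarith, by have : 0 < 1 - δ := h2; linarith⟩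
      have h5 : ∀ θ, unitDisc.indicator G (((1 - δ : ℝ) : ℂ) * cpt θ) = 0 := fun θ => by
        apply indicator_of_notMem
        rw [unitDisc, mem_ball_zero_iff, norm_mul, norm_cpt, mul_one, Complex.norm_real,
          Real.norm_eq_abs, abs_of_nonneg (by linarith)]
        linarith
      simp only [h5, lintegral_zero, mul_zero]
    · rw [indicator_of_notMem h2]

/-- The sub-mean value property of `‖g‖²` on discs. -/
lemma enorm_sq_le_lintegral_ball {g : ℂ → ℂ} {z : ℂ} {r : ℝ} (hr : 0 < r)
    (hg : DifferentiableOn ℂ g (Metric.ball z r)) (hgm : Measurable g) :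
    ENNReal.ofReal (π * r ^ 2) * ‖g z‖ₑ ^ 2 ≤ ∫⁻ v in Metric.ball z r, ‖g v‖ₑ ^ 2 := by
  have hcirc : ∀ ρ ∈ Ioo 0 r, ENNReal.ofReal (2 * π) * ‖g z‖ₑ ^ 2 ≤
      ∫⁻ θ, ‖g (z + ρ * cpt θ)‖ₑ ^ 2 ∂circMeas := by
    intro ρ hρ
    have hd : DifferentiableOn ℂ (fun v => g v ^ 2) (Metric.closedBall z |ρ|) :=
      (hg.mono (by rw [abs_of_pos hρ.1]; exact Metric.closedBall_subset_ball hρ.2)).pow 2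
    have h1 := (hd.diffContOnCl_ball le_rfl).circleAverage
    rw [Real.circleAverage, intervalIntegral.integral_of_le two_pi_pos.le] at h1
    have h2 : (2 * π : ℝ) • g z ^ 2 = ∫ θ, g (z + ρ * cpt θ) ^ 2 ∂circMeas := by
      rw [← h1, smul_smul, mul_inv_cancel₀ (by positivity), one_smul]
      rfl
    have h3 := enorm_integral_le_lintegral_enorm (μ := circMeas) (fun θ => g (z + ρ * cpt θ) ^ 2)
    rw [← h2, enorm_smul, Real.enorm_of_nonneg (by positivity)] at h3
    simpa [enorm_pow] using h3
  have hball : MeasurableSet (Metric.ball z r) := Metric.isOpen_ball.measurableSet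
  have hG : Measurable ((Metric.ball z r).indicator fun v => ‖g v‖ₑ ^ 2) :=
    (by fun_prop : Measurable fun v => ‖g v‖ₑ ^ 2).indicator hball
  rw [← lintegral_indicator hball, ← lintegral_add_left_eq_self _ z, lintegral_polar (by fun_prop)]
  calc ENNReal.ofReal (π * r ^ 2) * ‖g z‖ₑ ^ 2
      = ∫⁻ ρ in Ioc 0 r, ENNReal.ofReal (ρ ^ (1:ℝ)) * (ENNReal.ofReal (2 * π) * ‖g z‖ₑ ^ 2) := by
        rw [lintegral_mul_const _ (by fun_prop), lintegral_Ioc_rpow (by norm_num) hr.le,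
          ← mul_assoc, ← ENNReal.ofReal_mul (by positivity)]
        congr 2
        rw [show (1:ℝ) + 1 = ((2:ℕ) : ℝ) by norm_num, rpow_natCast]
        push_cast; ring
    _ = ∫⁻ ρ in Ioo 0 r, ENNReal.ofReal (ρ ^ (1:ℝ)) * (ENNReal.ofReal (2 * π) * ‖g z‖ₑ ^ 2) := by
        rw [restrict_Ioo_eq_restrict_Ioc]
    _ ≤ ∫⁻ ρ in Ioo 0 r, ENNReal.ofReal ρ * ∫⁻ θ,
          (Metric.ball z r).indicator (fun v => ‖g v‖ₑ ^ 2) (z + ρ * cpt θ) ∂circMeas := by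
        refine setLIntegral_mono' measurableSet_Ioo fun ρ hρ => ?_
        rw [rpow_one]
        gcongr
        refine (hcirc ρ hρ).trans (lintegral_mono fun θ => ?_)
        rw [indicator_of_mem]
        rw [mem_ball_iff_norm, add_sub_cancel_left, norm_mul, norm_cpt, mul_one, Complex.norm_real,
          Real.norm_of_nonneg hρ.1.le]
        exact hρ.2
    _ ≤ _ := lintegral_mono_set fun ρ hρ => hρ.1

end PlaneIntegrals

section Carleson

variable {E : Set ℂ} {C η : ℝ}

lemma hasDerivAt_diskPt (s θ : ℝ) : HasDerivAt (fun s => diskPt s θ) (-cpt θ) s := by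
  have h : HasDerivAt (fun s : ℝ => ((1 - s : ℝ) : ℂ)) ((-1 : ℝ) : ℂ) s :=
    ((hasDerivAt_id s).const_sub 1).ofReal_comp
  simpa [diskPt] using h.mul_const (cpt θ)

lemma enorm_radial_sub_le {g : ℂ → ℂ} (hg : DifferentiableOn ℂ g unitDisc) {a b : ℝ} (ha : 0 < a)
    (hab : a ≤ b) (hb : b ≤ 1) (θ : ℝ) : ‖g (diskPt a θ) - g (diskPt b θ)‖ₑ ≤
      ∫⁻ s in Ioc a b, ‖deriv g (diskPt s θ)‖ₑ := by
  have hmem : ∀ s ∈ Icc a b, diskPt s θ ∈ unitDisc := fun s hs =>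
    diskPt_mem (ha.trans_le hs.1) (hs.2.trans hb) θ
  have hopen : IsOpen unitDisc := Metric.isOpen_ball
  have hd : ∀ s ∈ uIcc a b, HasDerivAt (fun s => g (diskPt s θ)) (deriv g (diskPt s θ) *
      -cpt θ) s := by
    intro s hs
    rw [uIcc_of_le hab] at hs
    have h1 := (hg.differentiableAt (hopen.mem_nhds (hmem s hs))).hasDerivAt
    exact h1.comp s (hasDerivAt_diskPt s θ)
  have hc : ContinuousOn (fun s => deriv g (diskPt s θ) * -cpt θ) (uIcc a b) := by
    rw [uIcc_of_le hab]
    refine ContinuousOn.mul ?_ continuousOn_const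
    exact (hg.deriv hopen).continuousOn.comp (by fun_prop) hmem
  have h := intervalIntegral.integral_eq_sub_of_hasDerivAt hd hc.intervalIntegrable
  rw [← enorm_neg, neg_sub, ← h, intervalIntegral.integral_of_le hab]
  refine (enorm_integral_le_lintegral_enorm _).trans (le_of_eq ?_)
  refine lintegral_congr fun s => ?_
  rw [enorm_mul, enorm_neg, ← ofReal_norm (cpt θ), norm_cpt, ENNReal.ofReal_one, mul_one]

lemma RegularSet.enorm_sub_sq_le {g : ℂ → ℂ} (hg : DifferentiableOn ℂ g unitDisc)
    (hm : ∀ s ∈ Ioc (0:ℝ) 1, nbhdMeas E s ≠ 0) {δ : ℝ} (hδ : δ ∈ Ioc (0:ℝ) 1) (θ : ℝ) :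
    ‖g (diskPt δ θ) - g 0‖ₑ ^ 2 ≤ (∫⁻ s in Ioc (0:ℝ) 1, (nbhdMeas E s)⁻¹) *
      ∫⁻ s in Ioc (0:ℝ) 1, nbhdMeas E s * ‖deriv g (diskPt s θ)‖ₑ ^ 2 := by
  have hmeas : Measurable (nbhdMeas E) := (nbhdMeas_mono E).measurable
  have h1 := enorm_radial_sub_le hg hδ.1 hδ.2 le_rfl θ
  have e : diskPt 1 θ = 0 := by simp [diskPt]
  rw [e] at h1
  have h2 : ‖g (diskPt δ θ) - g 0‖ₑ ≤ ∫⁻ s in Ioc (0:ℝ) 1,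
      (nbhdMeas E s) ^ (-(1 / 2) : ℝ) * (nbhdMeas E s ^ (1 / 2 : ℝ) * ‖deriv g (diskPt s θ)‖ₑ) := by
    refine (h1.trans (lintegral_mono_set (Ioc_subset_Ioc_left hδ.1.le))).trans (le_of_eq ?_)
    refine setLIntegral_congr_fun measurableSet_Ioc fun s hs => ?_
    rw [← mul_assoc, ← ENNReal.rpow_add _ _ (hm s hs)
      (((nbhdMeas_le E s).trans_lt ENNReal.ofReal_lt_top).ne)]
    norm_num
  have hdm : Measurable (deriv g) := measurable_deriv g
  calc _ ≤ _ := pow_le_pow_left₀ zero_le h2 2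
    _ ≤ _ := lintegral_mul_sq_le _ (by fun_prop) (by fun_prop)
    _ = _ := by
      have e1 : ∀ x : ℝ≥0∞, (x ^ (1 / 2 : ℝ)) ^ 2 = x := fun x => by
        rw [← ENNReal.rpow_natCast, ← ENNReal.rpow_mul]; norm_num
      have e2 : ∀ x : ℝ≥0∞, (x ^ (-(1 / 2) : ℝ)) ^ 2 = x⁻¹ := fun x => by
        rw [← ENNReal.rpow_natCast, ← ENNReal.rpow_mul, ← ENNReal.rpow_neg_one]; norm_num
      simp only [mul_pow, e1, e2]

lemma measurableSet_shadow :
    MeasurableSet {p : ℝ × ℂ | p.1 / 2 < 1 - ‖p.2‖ ∧ 1 - ‖p.2‖ < 3 * p.1 / 2} := by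
  have h1 : MeasurableSet {p : ℝ × ℂ | p.1 / 2 < 1 - ‖p.2‖} :=
    measurableSet_lt (by fun_prop) (by fun_prop)
  have h2 : MeasurableSet {p : ℝ × ℂ | 1 - ‖p.2‖ < 3 * p.1 / 2} :=
    measurableSet_lt (by fun_prop) (by fun_prop)
  exact h1.inter h2

lemma RegularSet.slice_le (hE : RegularSet E C η) {w : ℝ → ℝ} (hw : Measurable w)
    (hw0 : ∀ s, 0 ≤ w s) (hwa : AntitoneOn w (Ioo 0 π)) {g : ℂ → ℂ}
    (hg : DifferentiableOn ℂ g unitDisc) {s : ℝ} (hs : s ∈ Ioc (0:ℝ) 1) :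
    nbhdMeas E s * ∫⁻ θ, ENNReal.ofReal (w (dE E (cpt θ))) * ‖deriv g (diskPt s θ)‖ₑ ^ 2 ∂circMeas ≤
      (∫⁻ φ, ENNReal.ofReal (w (dE E (cpt φ))) ∂circMeas) *
      ∫⁻ v : ℂ, ENNReal.ofReal (6 * C / (π * s)) *
        {v : ℂ | s / 2 < 1 - ‖v‖ ∧ 1 - ‖v‖ < 3 * s / 2}.indicator
            (fun v => ‖deriv g v‖ₑ ^ 2) v := by
  have hC := hE.pos
  have hs0 := hs.1
  have hdm : Measurable (deriv g) := measurable_deriv g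
  have hopen : IsOpen unitDisc := Metric.isOpen_ball
  set D : ℂ → ℝ≥0∞ := fun v => ‖deriv g v‖ₑ ^ 2 with hD
  have hDm : Measurable D := by fun_prop
  set S := {v : ℂ | s / 2 < 1 - ‖v‖ ∧ 1 - ‖v‖ < 3 * s / 2} with hS
  have hSm : MeasurableSet S := measurableSet_shadow.preimage
      (measurable_const.prodMk measurable_id)
  set W : ℝ → ℝ≥0∞ := fun θ => ENNReal.ofReal (w (dE E (cpt θ))) with hW
  have hWm : Measurable W := by fun_prop
  have hk : ∀ θ, D (diskPt s θ) ≤ ENNReal.ofReal (4 / (π * s ^ 2)) *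
      ∫⁻ v : ℂ, (Metric.ball (diskPt s θ) (s / 2)).indicator D v := by
    intro θ
    have hsub : Metric.ball (diskPt s θ) (s / 2) ⊆ unitDisc := by
      intro v hv
      rw [unitDisc, mem_ball_zero_iff]
      rw [mem_ball_iff_norm] at hv
      have := norm_le_norm_add_norm_sub' v (diskPt s θ)
      rw [norm_diskPt hs.2] at this
      linarith
    have h := enorm_sq_le_lintegral_ball (half_pos hs0) ((hg.deriv hopen).mono hsub) hdm
    rw [lintegral_indicator Metric.isOpen_ball.measurableSet]
    calc D (diskPt s θ) = ENNReal.ofReal (4 / (π * s ^ 2)) *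
          (ENNReal.ofReal (π * (s / 2) ^ 2) * D (diskPt s θ)) := by
          rw [← mul_assoc, ← ENNReal.ofReal_mul (by positivity),
            show 4 / (π * s ^ 2) * (π * (s / 2) ^ 2) = 1 by field_simp; norm_num,
            ENNReal.ofReal_one, one_mul]
      _ ≤ _ := mul_le_mul_right h _
  have hind : ∀ θ v, (Metric.ball (diskPt s θ) (s / 2)).indicator D v ≤
      S.indicator D v * {p : ℝ × ℂ | ‖cpt p.1 - p.2‖ ≤ 3 * s / 2}.indicator 1 (θ, v) := by
    intro θ v
    by_cases hv : v ∈ Metric.ball (diskPt s θ) (s / 2)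
    · rw [indicator_of_mem hv]
      rw [mem_ball_iff_norm] at hv
      have a1 := norm_le_norm_add_norm_sub' v (diskPt s θ)
      have a2 := norm_le_norm_add_norm_sub' (diskPt s θ) v
      rw [norm_sub_rev _ v] at a2
      rw [norm_diskPt hs.2] at a1 a2
      have a3 := norm_sub_le_norm_sub_add_norm_sub (cpt θ) (diskPt s θ) v
      rw [norm_cpt_sub_diskPt hs0.le, norm_sub_rev (diskPt s θ) v] at a3
      rw [indicator_of_mem (show v ∈ S from ⟨by linarith, by linarith⟩),
        indicator_of_mem (show (θ, v) ∈ {p : ℝ × ℂ | ‖cpt p.1 - p.2‖ ≤ 3 * s / 2} from by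
          show ‖cpt θ - v‖ ≤ 3 * s / 2
          linarith)]
      simp
    · rw [indicator_of_notMem hv]; exact zero_le
  have hTm : MeasurableSet {p : ℝ × ℂ | ‖cpt p.1 - p.2‖ ≤ 3 * s / 2} :=
    measurableSet_le (by fun_prop) (by fun_prop)
  have hbox : ∀ v : ℂ, nbhdMeas E s * ∫⁻ θ, W θ *
      {p : ℝ × ℂ | ‖cpt p.1 - p.2‖ ≤ 3 * s / 2}.indicator 1 (θ, v) ∂circMeas ≤
      ENNReal.ofReal (C * (3 * s / 2)) * ∫⁻ φ, W φ ∂circMeas := by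
    intro v
    have h := hE.lintegral_box hw hw0 hwa (R := 3 * s / 2) (by positivity) v
    have e : ∫⁻ θ, W θ * {p : ℝ × ℂ | ‖cpt p.1 - p.2‖ ≤ 3 * s / 2}.indicator 1 (θ, v) ∂circMeas =
        ∫⁻ φ in {φ | ‖cpt φ - v‖ ≤ 3 * s / 2}, W φ ∂circMeas := by
      rw [← lintegral_indicator (measurableSet_cptBall v _)]
      refine lintegral_congr fun θ => ?_
      by_cases hθ : ‖cpt θ - v‖ ≤ 3 * s / 2 <;> simp [indicator, hθ]
    rw [e, mul_comm]
    exact (mul_le_mul_right (nbhdMeas_mono E (by linarith)) _).trans h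
  have hSD : Measurable (S.indicator D) := hDm.indicator hSm
  calc nbhdMeas E s * ∫⁻ θ, W θ * D (diskPt s θ) ∂circMeas
      ≤ nbhdMeas E s * ∫⁻ θ, W θ * (ENNReal.ofReal (4 / (π * s ^ 2)) * ∫⁻ v : ℂ, S.indicator D v *
        {p : ℝ × ℂ | ‖cpt p.1 - p.2‖ ≤ 3 * s / 2}.indicator 1 (θ, v)) ∂circMeas := by
        gcongr with θ
        exact (hk θ).trans (mul_le_mul_right (lintegral_mono (hind θ)) _)
    _ = nbhdMeas E s * (ENNReal.ofReal (4 / (π * s ^ 2)) * ∫⁻ θ, (∫⁻ v : ℂ, W θ * (S.indicator D v *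
        {p : ℝ × ℂ | ‖cpt p.1 - p.2‖ ≤ 3 * s / 2}.indicator 1 (θ, v))) ∂circMeas) := by
        rw [← lintegral_const_mul' _ _ ENNReal.ofReal_ne_top]
        congr 1
        refine lintegral_congr fun θ => ?_
        rw [lintegral_const_mul' _ _ ENNReal.ofReal_ne_top]
        ring
    _ = ENNReal.ofReal (4 / (π * s ^ 2)) * ∫⁻ v : ℂ, S.indicator D v * (nbhdMeas E s * ∫⁻ θ, W θ *
        {p : ℝ × ℂ | ‖cpt p.1 - p.2‖ ≤ 3 * s / 2}.indicator 1 (θ, v) ∂circMeas) := by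
        have hne : nbhdMeas E s ≠ ∞ := ((nbhdMeas_le E s).trans_lt ENNReal.ofReal_lt_top).ne
        rw [lintegral_lintegral_swap, mul_left_comm, ← lintegral_const_mul' _ _ hne]
        · congr 1
          refine lintegral_congr fun v => ?_
          have hT : Measurable fun θ : ℝ => {p : ℝ × ℂ | ‖cpt p.1 - p.2‖ ≤ 3 * s / 2}.indicator
              (1 : ℝ × ℂ → ℝ≥0∞) (θ, v) :=
            (measurable_one.indicator hTm).comp (measurable_id.prodMk measurable_const)
          have key : ∫⁻ θ, W θ * (S.indicator D v *
              {p : ℝ × ℂ | ‖cpt p.1 - p.2‖ ≤ 3 * s / 2}.indicator 1 (θ, v)) ∂circMeas =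
              S.indicator D v * ∫⁻ θ, W θ *
                {p : ℝ × ℂ | ‖cpt p.1 - p.2‖ ≤ 3 * s / 2}.indicator 1 (θ, v) ∂circMeas := by
            refine Eq.trans ?_ (lintegral_const_mul _ (hWm.mul hT))
            exact lintegral_congr fun θ => mul_left_comm _ _ _
          rw [key, mul_left_comm]
        · apply Measurable.aemeasurable
          exact (hWm.comp measurable_fst).mul ((hSD.comp measurable_snd).mul
            (measurable_one.indicator hTm))
    _ ≤ ENNReal.ofReal (4 / (π * s ^ 2)) * ∫⁻ v : ℂ, S.indicator D v *
          (ENNReal.ofReal (C * (3 * s / 2)) * ∫⁻ φ, W φ ∂circMeas) := by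
        exact mul_le_mul_right (lintegral_mono fun v => mul_le_mul_right (hbox v) _) _
    _ = _ := by
        rw [lintegral_mul_const _ hSD, lintegral_const_mul' _ _ ENNReal.ofReal_ne_top,
          show 6 * C / (π * s) = 4 / (π * s ^ 2) * (C * (3 * s / 2)) by field_simp; norm_num,
          ENNReal.ofReal_mul (p := 4 / (π * s ^ 2)) (by positivity)]
        ring

lemma lintegral_shadow_le {A : ℝ} (hA : 0 ≤ A) (D : ℂ → ℝ≥0∞) (hD : Measurable D) :
    ∫⁻ s in Ioc (0:ℝ) 1, ∫⁻ v : ℂ, ENNReal.ofReal (A / s) *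
      {v : ℂ | s / 2 < 1 - ‖v‖ ∧ 1 - ‖v‖ < 3 * s / 2}.indicator D v ≤
      ENNReal.ofReal (2 * A) * ∫⁻ v in unitDisc, D v := by
  have hm : MeasurableSet unitDisc := Metric.isOpen_ball.measurableSet
  have hTm := measurableSet_shadow
  rw [lintegral_lintegral_swap, ← lintegral_indicator hm,
    ← lintegral_const_mul' _ _ ENNReal.ofReal_ne_top]
  · refine lintegral_mono fun v => ?_
    by_cases hv : v ∈ unitDisc
    · rw [indicator_of_mem hv]
      rw [unitDisc, mem_ball_zero_iff] at hv
      set x := 1 - ‖v‖ with hx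
      have hx0 : 0 < x := by linarith
      calc _ ≤ ∫⁻ s, (Ioc (2 * x / 3) (2 * x)).indicator
              (fun _ => ENNReal.ofReal (A / (2 * x / 3)) * D v) s := by
            rw [← lintegral_indicator measurableSet_Ioc]
            refine lintegral_mono fun s => ?_
            by_cases hs : s / 2 < x ∧ x < 3 * s / 2
            · have hs1 : 2 * x / 3 < s := by linarith [hs.2]
              rw [indicator_of_mem (show s ∈ Ioc (2 * x / 3) (2 * x) from ⟨hs1,
                  by linarith [hs.1]⟩)]
              refine (indicator_le_self _ _ s).trans ?_
              simp only
              rw [indicator_of_mem (show v ∈ {v : ℂ | s / 2 < 1 - ‖v‖ ∧ 1 - ‖v‖ < 3 *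
                  s / 2} from hs)]
              gcongr
            · have e : {v : ℂ | s / 2 < 1 - ‖v‖ ∧ 1 - ‖v‖ < 3 * s / 2}.indicator D v = 0 :=
                indicator_of_notMem
                  (s := {v : ℂ | s / 2 < 1 - ‖v‖ ∧ 1 - ‖v‖ < 3 * s / 2}) hs _
              refine (indicator_le_self _ _ s).trans ?_
              simp only
              rw [e, mul_zero]
              exact zero_le
        _ = ENNReal.ofReal (2 * A) * D v := by
            rw [lintegral_indicator measurableSet_Ioc, lintegral_const, Measure.restrict_apply_univ,
              Real.volume_Ioc, mul_right_comm, ← ENNReal.ofReal_mul (by positivity)]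
            congr 2
            field_simp; norm_num
    · rw [indicator_of_notMem hv, mul_zero]
      rw [unitDisc, mem_ball_zero_iff] at hv
      rw [setLIntegral_congr_fun measurableSet_Ioc (g := fun _ => 0)]
      · simp
      · intro s hs
        have : ¬ (s / 2 < 1 - ‖v‖ ∧ 1 - ‖v‖ < 3 * s / 2) := fun h => by
          have := hs.1; linarith [h.1]
        simp [indicator, this]
  · have h1 : Measurable fun p : ℝ × ℂ =>
        {p : ℝ × ℂ | p.1 / 2 < 1 - ‖p.2‖ ∧ 1 - ‖p.2‖ < 3 * p.1 / 2}.indicator (fun p => D p.2) p :=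
      (hD.comp measurable_snd).indicator hTm
    have h2 : Measurable fun p : ℝ × ℂ => ENNReal.ofReal (A / p.1) := by fun_prop
    exact (h2.mul h1).aemeasurable

/-- A Carleson embedding for densities with controlled radial integrals. -/
lemma RegularSet.carleson (hE : RegularSet E C η) {w : ℝ → ℝ} (hw : Measurable w)
    (hw0 : ∀ s, 0 ≤ w s) (hwa : AntitoneOn w (Ioo 0 π)) {g : ℂ → ℂ}
    (hg : DifferentiableOn ℂ g unitDisc) (hm : ∀ s ∈ Ioc (0:ℝ) 1, nbhdMeas E s ≠ 0)
    {Φ : ℂ → ℝ≥0∞} (hΦm : Measurable Φ) (hΦ : ∀ᵐ θ ∂circMeas,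
      ∫⁻ δ in Ioc (0:ℝ) 1, Φ (diskPt δ θ) ≤ ENNReal.ofReal (w (dE E (cpt θ)))) :
    ∫⁻ z in unitDisc, ‖g z - g 0‖ₑ ^ 2 * Φ z ≤ (∫⁻ s in Ioc (0:ℝ) 1, (nbhdMeas E s)⁻¹) *
      ((∫⁻ φ, ENNReal.ofReal (w (dE E (cpt φ))) ∂circMeas) *
        (ENNReal.ofReal (2 * (6 * C / π)) * ∫⁻ z in unitDisc, ‖deriv g z‖ₑ ^ 2)) := by
  classical
  have hC := hE.pos
  have hmd : MeasurableSet unitDisc := Metric.isOpen_ball.measurableSet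
  have hdm : Measurable (deriv g) := measurable_deriv g
  have hmeas : Measurable (nbhdMeas E) := (nbhdMeas_mono E).measurable
  have hdp : Measurable fun p : ℝ × ℝ => diskPt p.1 p.2 := continuous_diskPt.measurable
  set g₁ : ℂ → ℂ := unitDisc.piecewise g (fun _ => 0) with hg₁
  have hg₁m : Measurable g₁ := hg.continuousOn.measurable_piecewise continuousOn_const hmd
  have hgg : ∀ z ∈ unitDisc, g₁ z = g z := fun z hz => piecewise_eq_of_mem _ _ _ hz
  set M := ∫⁻ s in Ioc (0:ℝ) 1, (nbhdMeas E s)⁻¹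
  set J : ℝ → ℝ≥0∞ := fun θ => ∫⁻ s in Ioc (0:ℝ) 1, nbhdMeas E s *
      ‖deriv g (diskPt s θ)‖ₑ ^ 2 with hJ
  have hJm : Measurable J := by
    apply Measurable.lintegral_prod_right'
      (f := fun p : ℝ × ℝ => nbhdMeas E p.2 * ‖deriv g (diskPt p.2 p.1)‖ₑ ^ 2)
    have h2 : Measurable fun p : ℝ × ℝ => diskPt p.2 p.1 := hdp.comp measurable_swap
    exact (hmeas.comp measurable_snd).mul ((hdm.comp h2).enorm.pow_const 2)
  calc ∫⁻ z in unitDisc, ‖g z - g 0‖ₑ ^ 2 * Φ z = ∫⁻ z in unitDisc, ‖g₁ z - g 0‖ₑ ^ 2 * Φ z :=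
        setLIntegral_congr_fun hmd fun z hz => by simp only [hgg z hz]
    _ = ∫⁻ δ in Ioc (0:ℝ) 1, ENNReal.ofReal (1 - δ) *
          ∫⁻ θ, ‖g₁ (diskPt δ θ) - g 0‖ₑ ^ 2 * Φ (diskPt δ θ) ∂circMeas :=
        lintegral_unitDisc (by fun_prop)
    _ ≤ ∫⁻ δ in Ioc (0:ℝ) 1, ∫⁻ θ, (M * J θ) * Φ (diskPt δ θ) ∂circMeas := by
        refine setLIntegral_mono' measurableSet_Ioc fun δ hδ => ?_
        refine mul_le_of_le_one_of_le (ENNReal.ofReal_le_one.2 (by linarith [hδ.1])) ?_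
        refine lintegral_mono fun θ => mul_le_mul_left ?_ _
        rw [hgg _ (diskPt_mem hδ.1 hδ.2 θ)]
        exact RegularSet.enorm_sub_sq_le hg hm hδ θ
    _ = ∫⁻ θ, (M * J θ) * (∫⁻ δ in Ioc (0:ℝ) 1, Φ (diskPt δ θ)) ∂circMeas := by
        rw [lintegral_lintegral_swap]
        · refine lintegral_congr fun θ => ?_
          rw [lintegral_const_mul]
          exact hΦm.comp (hdp.comp (measurable_id.prodMk measurable_const))
        · exact ((measurable_const.mul (hJm.comp measurable_snd)).mul
            (hΦm.comp hdp)).aemeasurable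
    _ ≤ ∫⁻ θ, M * (J θ * ENNReal.ofReal (w (dE E (cpt θ)))) ∂circMeas := by
        refine lintegral_mono_ae ?_
        filter_upwards [hΦ] with θ hθ
        rw [mul_assoc]
        gcongr
    _ = M * ∫⁻ s in Ioc (0:ℝ) 1, nbhdMeas E s *
          ∫⁻ θ, ENNReal.ofReal (w (dE E (cpt θ))) * ‖deriv g (diskPt s θ)‖ₑ ^ 2 ∂circMeas := by
        rw [lintegral_const_mul _ (by fun_prop)]
        congr 1
        have e1 : ∀ θ, J θ * ENNReal.ofReal (w (dE E (cpt θ))) = ∫⁻ s in Ioc (0:ℝ) 1,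
            nbhdMeas E s * (ENNReal.ofReal (w (dE E (cpt θ))) * ‖deriv g (diskPt s θ)‖ₑ ^ 2) := by
          intro θ
          rw [hJ, ← lintegral_mul_const' _ _ ENNReal.ofReal_ne_top]
          refine lintegral_congr fun s => ?_
          ring
        simp_rw [e1]
        rw [lintegral_lintegral_swap]
        · refine lintegral_congr fun s => ?_
          rw [lintegral_const_mul' _ _ ((nbhdMeas_le E s).trans_lt ENNReal.ofReal_lt_top).ne]
        · have h2 : Measurable fun p : ℝ × ℝ => diskPt p.2 p.1 := hdp.comp measurable_swap
          have h3 : Measurable fun p : ℝ × ℝ => ENNReal.ofReal (w (dE E (cpt p.1))) := by fun_prop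
          exact ((hmeas.comp measurable_snd).mul
            (h3.mul ((hdm.comp h2).enorm.pow_const 2))).aemeasurable
    _ ≤ M * ∫⁻ s in Ioc (0:ℝ) 1, (∫⁻ φ, ENNReal.ofReal (w (dE E (cpt φ))) ∂circMeas) *
      ∫⁻ v : ℂ, ENNReal.ofReal (6 * C / π / s) *
        {v : ℂ | s / 2 < 1 - ‖v‖ ∧ 1 - ‖v‖ < 3 * s / 2}.indicator
            (fun v => ‖deriv g v‖ₑ ^ 2) v := by
        refine mul_le_mul_right (setLIntegral_mono' measurableSet_Ioc fun s hs => ?_) _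
        rw [div_div]
        exact hE.slice_le hw hw0 hwa hg hs
    _ ≤ _ := by
        have hTm := measurableSet_shadow
        have hDm : Measurable fun v => ‖deriv g v‖ₑ ^ 2 := by fun_prop
        have h1 : Measurable fun p : ℝ × ℂ => ENNReal.ofReal (6 * C / π / p.1) *
            {p : ℝ × ℂ | p.1 / 2 < 1 - ‖p.2‖ ∧ 1 - ‖p.2‖ < 3 * p.1 / 2}.indicator
              (fun p => ‖deriv g p.2‖ₑ ^ 2) p :=
          Measurable.mul (by fun_prop) ((hDm.comp measurable_snd).indicator hTm)
        have h2 : Measurable fun s : ℝ => ∫⁻ v : ℂ, ENNReal.ofReal (6 * C / π / s) *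
            {v : ℂ | s / 2 < 1 - ‖v‖ ∧ 1 - ‖v‖ < 3 * s / 2}.indicator
              (fun v => ‖deriv g v‖ₑ ^ 2) v := h1.lintegral_prod_right'
        rw [lintegral_const_mul _ h2]
        gcongr
        exact lintegral_shadow_le (by positivity) _ hDm

end Carleson

noncomputable section

/-- The weight `s ω'(s)²` on `(0, π)`, extended by zero. -/
def derivWeight (ω : ℝ → ℝ) : ℝ → ℝ := (Ioo 0 π).indicator fun s => s * deriv ω s ^ 2

end

variable {ω ω' : ℝ → ℝ} {γ : ℝ} {E : Set ℂ} {C η : ℝ}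

lemma measurable_derivWeight (ω : ℝ → ℝ) : Measurable (derivWeight ω) :=
  (measurable_id.mul ((measurable_deriv ω).pow_const 2)).indicator measurableSet_Ioo

lemma derivWeight_nonneg (ω : ℝ → ℝ) (s : ℝ) : 0 ≤ derivWeight ω s :=
  indicator_nonneg (fun _ hs => mul_nonneg hs.1.le (sq_nonneg _)) s

lemma OmegaHyp.derivWeight_eq (hω : OmegaHyp ω ω' γ) {s : ℝ} (hs : s ∈ Ioo 0 π) :
    derivWeight ω s = s * ω' s ^ 2 := by
  rw [derivWeight, indicator_of_mem hs, (hω.hasDeriv hs).deriv]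

lemma OmegaHyp.antitoneOn_derivWeight (hω : OmegaHyp ω ω' γ) (hγ : 2 < γ) :
    AntitoneOn (derivWeight ω) (Ioo 0 π) := by
  intro s hs t ht hst
  rw [hω.derivWeight_eq hs, hω.derivWeight_eq ht]
  exact hω.weight_antitone hγ hs ht hst

lemma RegularSet.integrable_iff (hE : RegularSet E C η) (hω : OmegaHyp ω ω' γ) :
    Integrable (fun θ => dE E (cpt θ) * ω' (dE E (cpt θ)) ^ 2) circMeas ↔
      ∫⁻ θ, ENNReal.ofReal (derivWeight ω (dE E (cpt θ))) ∂circMeas ≠ ∞ := by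
  have hae : (fun θ => dE E (cpt θ) * ω' (dE E (cpt θ)) ^ 2) =ᵐ[circMeas]
      fun θ => derivWeight ω (dE E (cpt θ)) := by
    filter_upwards [hE.ae_pos] with θ hθ
    rw [hω.derivWeight_eq ⟨hθ, dE_cpt_lt_pi hE θ⟩]
  have hm : Measurable fun θ => derivWeight ω (dE E (cpt θ)) :=
    (measurable_derivWeight ω).comp (by fun_prop)
  rw [integrable_congr hae, ← lt_top_iff_ne_top, 
    ← hasFiniteIntegral_iff_ofReal (ae_of_all _ fun θ => derivWeight_nonneg ω _)]
  exact ⟨fun h => h.2, fun h => ⟨hm.aestronglyMeasurable, h⟩⟩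

lemma integrableOn_deriv_sq_iff (f : ℂ → ℂ) :
    IntegrableOn (fun z => ‖deriv f z‖ ^ 2) unitDisc volume ↔
      ∫⁻ z in unitDisc, ‖deriv f z‖ₑ ^ 2 ≠ ∞ := by
  have hm : Measurable fun z => ‖deriv f z‖ ^ 2 := (measurable_deriv f).norm.pow_const 2
  have e : ∀ z, ‖deriv f z‖ₑ ^ 2 = ENNReal.ofReal (‖deriv f z‖ ^ 2) := fun z => by
    rw [ENNReal.ofReal_pow (norm_nonneg _), ofReal_norm]
  simp_rw [e]
  rw [← lt_top_iff_ne_top, ← hasFiniteIntegral_iff_ofReal (ae_of_all _ fun θ => sq_nonneg _)]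
  exact ⟨fun h => h.2, fun h => ⟨hm.aestronglyMeasurable, h⟩⟩

lemma memDirichlet_const (c : ℂ) : MemDirichlet fun _ => c := by
  refine ⟨differentiableOn_const c, ⟨∫ θ in Ioc 0 (2 * π), ‖c‖ ^ 2, fun r _ => le_rfl⟩, ?_⟩
  simp

lemma ennreal_add_sq_le (a b : ℝ≥0∞) : (a + b) ^ 2 ≤ 2 * a ^ 2 + 2 * b ^ 2 := by
  rw [← mul_add]
  have h := ENNReal.rpow_add_le_mul_rpow_add_rpow a b (p := 2) one_le_two
  norm_num at h
  exact h

lemma integrableOn_norm_sq_circle {h : ℂ → ℂ} (hh : DifferentiableOn ℂ h unitDisc) {r : ℝ}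
    (hr : r ∈ Ioo (0:ℝ) 1) :
    IntegrableOn (fun θ => ‖h (r * cpt θ)‖ ^ 2) (Ioc 0 (2 * π)) volume := by
  have hmem : ∀ θ, (r : ℂ) * cpt θ ∈ unitDisc := fun θ => by
    rw [unitDisc, mem_ball_zero_iff, norm_mul, norm_cpt, Complex.norm_real, Real.norm_eq_abs,
      abs_of_pos hr.1, mul_one]
    exact hr.2
  have : Continuous fun θ => h (r * cpt θ) :=
    hh.continuousOn.comp_continuous (continuous_const.mul continuous_cpt) hmem
  exact ((this.norm.pow 2).continuousOn.integrableOn_Icc).mono_set Ioc_subset_Icc_self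

lemma memDirichlet_mul {f g : ℂ → ℂ} (hf : DifferentiableOn ℂ f unitDisc) {K : ℝ}
    (hK : ∀ z ∈ unitDisc, ‖f z‖ ≤ K) (hg : MemDirichlet g)
    (hf' : ∫⁻ z in unitDisc, ‖deriv f z‖ₑ ^ 2 ≠ ∞)
    (hfg : ∫⁻ z in unitDisc, ‖g z - g 0‖ₑ ^ 2 * ‖deriv f z‖ₑ ^ 2 ≠ ∞) :
    MemDirichlet fun z => f z * g z := by
  have hopen : IsOpen unitDisc := Metric.isOpen_ball
  have hmd : MeasurableSet unitDisc := hopen.measurableSet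
  obtain ⟨hgd, ⟨M, hM⟩, hgi⟩ := hg
  have hgi := (integrableOn_deriv_sq_iff g).1 hgi
  refine ⟨hf.mul hgd, ⟨K ^ 2 * M, fun r hr => ?_⟩, (integrableOn_deriv_sq_iff _).2 ?_⟩
  · have hmem : ∀ θ, (r : ℂ) * cpt θ ∈ unitDisc := fun θ => by
      rw [unitDisc, mem_ball_zero_iff, norm_mul, norm_cpt, Complex.norm_real, Real.norm_eq_abs,
        abs_of_pos hr.1, mul_one]
      exact hr.2
    calc ∫ θ in Ioc 0 (2 * π), ‖f (r * cpt θ) * g (r * cpt θ)‖ ^ 2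
        ≤ ∫ θ in Ioc 0 (2 * π), K ^ 2 * ‖g (r * cpt θ)‖ ^ 2 := by
          refine integral_mono (integrableOn_norm_sq_circle (hf.mul hgd) hr)
            ((integrableOn_norm_sq_circle hgd hr).const_mul _) fun θ => ?_
          simp only [norm_mul, mul_pow]
          gcongr
          exact hK _ (hmem θ)
      _ ≤ K ^ 2 * M := by
          rw [integral_const_mul]
          exact mul_le_mul_of_nonneg_left (hM r hr) (sq_nonneg K)
  · have hfm : Measurable fun z => ‖deriv f z‖ₑ ^ 2 := (measurable_deriv f).enorm.pow_const 2
    have hgm : Measurable fun z => ‖deriv g z‖ₑ ^ 2 := (measurable_deriv g).enorm.pow_const 2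
    have hle : ∫⁻ z in unitDisc, ‖deriv (fun z => f z * g z) z‖ₑ ^ 2 ≤
        ∫⁻ z in unitDisc, (4 * (‖g z - g 0‖ₑ ^ 2 * ‖deriv f z‖ₑ ^ 2) +
          (4 * ‖g 0‖ₑ ^ 2 * ‖deriv f z‖ₑ ^ 2 + 2 * ENNReal.ofReal K ^ 2 * ‖deriv g z‖ₑ ^ 2)) := by
      refine setLIntegral_mono' hmd fun z hz => ?_
      have h1 := hf.differentiableAt (hopen.mem_nhds hz)
      have h2 := hgd.differentiableAt (hopen.mem_nhds hz)
      rw [deriv_fun_mul h1 h2]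
      have hg2 : ‖g z‖ₑ ^ 2 ≤ 2 * ‖g z - g 0‖ₑ ^ 2 + 2 * ‖g 0‖ₑ ^ 2 := by
        refine le_trans ?_ (ennreal_add_sq_le _ _)
        gcongr
        simpa using enorm_add_le (g z - g 0) (g 0)
      have hf2 : ‖f z‖ₑ ≤ ENNReal.ofReal K := by
        rw [← ofReal_norm]; exact ENNReal.ofReal_le_ofReal (hK z hz)
      calc ‖deriv f z * g z + f z * deriv g z‖ₑ ^ 2
          ≤ 2 * ‖deriv f z * g z‖ₑ ^ 2 + 2 * ‖f z * deriv g z‖ₑ ^ 2 := by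
            refine le_trans ?_ (ennreal_add_sq_le _ _)
            gcongr
            exact enorm_add_le _ _
        _ = 2 * (‖g z‖ₑ ^ 2 * ‖deriv f z‖ₑ ^ 2) + 2 * ‖f z‖ₑ ^ 2 * ‖deriv g z‖ₑ ^ 2 := by
            rw [enorm_mul, enorm_mul]; ring
        _ ≤ 2 * ((2 * ‖g z - g 0‖ₑ ^ 2 + 2 * ‖g 0‖ₑ ^ 2) * ‖deriv f z‖ₑ ^ 2) +
              2 * ENNReal.ofReal K ^ 2 * ‖deriv g z‖ₑ ^ 2 := by gcongr
        _ = _ := by ring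
    refine (hle.trans_lt ?_).ne
    rw [lintegral_add_right, lintegral_add_left (hfm.const_mul _),
        lintegral_const_mul' _ _ (by simp),
      lintegral_const_mul _ hfm, lintegral_const_mul _ hgm]
    · refine ENNReal.add_lt_top.2 ⟨ENNReal.mul_lt_top (by simp) hfg.lt_top,
        ENNReal.add_lt_top.2 ⟨ENNReal.mul_lt_top ?_ hf'.lt_top,
          ENNReal.mul_lt_top ?_ hgi.lt_top⟩⟩
      · exact ENNReal.mul_lt_top (by simp) (by simp)
      · exact ENNReal.mul_lt_top (by simp) (by simp)
    · exact (hfm.const_mul _).add (hgm.const_mul _)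

lemma RegularSet.isMultiplierD_outerFun (hE : RegularSet E C η) (hω : OmegaHyp ω ω' γ)
    (hγ : 2 < γ) (hu : Integrable (fun φ => log (ω (dE E (cpt φ)))) circMeas)
    (hm : ∀ s ∈ Ioc (0:ℝ) 1, nbhdMeas E s ≠ 0)
    (hcap : ∫⁻ s in Ioc (0:ℝ) 1, (nbhdMeas E s)⁻¹ ≠ ∞)
    (hw : ∫⁻ θ, ENNReal.ofReal (derivWeight ω (dE E (cpt θ))) ∂circMeas ≠ ∞) :
    IsMultiplierD (outerFun ω E) := by
  have hR := hE.radialConst_pos hγ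
  have hdm : Measurable fun z => ‖deriv (outerFun ω E) z‖ₑ ^ 2 :=
    (measurable_deriv _).enorm.pow_const 2
  set w : ℝ → ℝ := fun s => radialConst C η γ * derivWeight ω s with hwdef
  have hwm : Measurable w := (measurable_derivWeight ω).const_mul _
  have hw0 : ∀ s, 0 ≤ w s := fun s => mul_nonneg hR.le (derivWeight_nonneg ω s)
  have hwa : AntitoneOn w (Ioo 0 π) := fun s hs t ht hst =>
    mul_le_mul_of_nonneg_left (hω.antitoneOn_derivWeight hγ hs ht hst) hR.le
  have hwi : ∫⁻ θ, ENNReal.ofReal (w (dE E (cpt θ))) ∂circMeas ≠ ∞ := by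
    simp only [hwdef, ENNReal.ofReal_mul hR.le]
    rw [lintegral_const_mul' _ _ ENNReal.ofReal_ne_top]
    exact ENNReal.mul_ne_top ENNReal.ofReal_ne_top hw
  have hrad : ∀ᵐ θ ∂circMeas, ∫⁻ δ in Ioc (0:ℝ) 1, ‖deriv (outerFun ω E) (diskPt δ θ)‖ₑ ^ 2 ≤
      ENNReal.ofReal (w (dE E (cpt θ))) := by
    filter_upwards [hE.ae_pos] with θ hθ
    have := hE.lintegral_radial_le hω hγ hu hθ
    rw [← hω.derivWeight_eq ⟨hθ, dE_cpt_lt_pi hE θ⟩] at this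
    simpa only [ENNReal.ofReal_pow (norm_nonneg _), ofReal_norm] using this
  have henergy : ∫⁻ z in unitDisc, ‖deriv (outerFun ω E) z‖ₑ ^ 2 ≠ ∞ := by
    refine (lt_of_le_of_lt ?_ hwi.lt_top).ne
    rw [lintegral_unitDisc hdm]
    calc _ ≤ ∫⁻ δ in Ioc (0:ℝ) 1, ∫⁻ θ, ‖deriv (outerFun ω E) (diskPt δ θ)‖ₑ ^ 2 ∂circMeas :=
          setLIntegral_mono' measurableSet_Ioc fun δ hδ =>
            mul_le_of_le_one_of_le (ENNReal.ofReal_le_one.2 (by linarith [hδ.1])) le_rfl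
      _ = ∫⁻ θ, (∫⁻ δ in Ioc (0:ℝ) 1, ‖deriv (outerFun ω E) (diskPt δ θ)‖ₑ ^ 2) ∂circMeas :=
          lintegral_lintegral_swap (hdm.comp continuous_diskPt.measurable).aemeasurable
      _ ≤ _ := lintegral_mono_ae hrad
  intro g hg
  refine memDirichlet_mul (differentiableOn_outerFun hu)
    (fun z hz => hE.norm_outerFun_le_const hω hγ hu hz) hg henergy ?_
  refine (lt_of_le_of_lt (hE.carleson hwm hw0 hwa hg.1 hm hdm hrad) ?_).ne
  refine ENNReal.mul_lt_top hcap.lt_top (ENNReal.mul_lt_top hwi.lt_top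
    (ENNReal.mul_lt_top ENNReal.ofReal_lt_top ?_))
  exact ((integrableOn_deriv_sq_iff g).1 hg.2.2).lt_top

lemma IsMultiplierD.memDirichlet {f : ℂ → ℂ} (hf : IsMultiplierD f) : MemDirichlet f := by
  simpa using hf _ (memDirichlet_const 1)

noncomputable section

/-- The boundary modulus `ω(dist(·, E))`, set to zero on `E`. -/
def boundaryModulus (ω : ℝ → ℝ) (E : Set ℂ) (θ : ℝ) : ℝ := (Ioc 0 π).indicator ω (dE E (cpt θ))

end

section Boundary

variable {ω ω' : ℝ → ℝ} {γ : ℝ} {E : Set ℂ} {C η : ℝ}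

lemma OmegaHyp.measurable_boundaryModulus (hω : OmegaHyp ω ω' γ) (E : Set ℂ) :
    Measurable (boundaryModulus ω E) := by
  classical
  have : Measurable ((Ioc 0 π).indicator ω) := by
    rw [← piecewise_eq_indicator]
    exact hω.1.measurable_piecewise continuousOn_const measurableSet_Ioc
  exact this.comp (by fun_prop)

lemma boundaryModulus_periodic (ω : ℝ → ℝ) (E : Set ℂ) :
    Function.Periodic (boundaryModulus ω E) (2 * π) := fun θ => by
  simp only [boundaryModulus, cpt_periodic θ]

lemma diskPt_periodic (δ : ℝ) : Function.Periodic (diskPt δ) (2 * π) := fun θ => by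
  simp only [diskPt, cpt_periodic θ]

lemma hasDerivAt_cpt (θ : ℝ) : HasDerivAt cpt (cpt θ * Complex.I) θ := by
  have h : HasDerivAt (fun θ : ℝ => (θ : ℂ) * Complex.I) (((1 : ℝ) : ℂ) * Complex.I) θ :=
    ((hasDerivAt_id θ).ofReal_comp).mul_const _
  have := h.cexp
  rw [Complex.ofReal_one, one_mul] at this
  exact this

lemma hasDerivAt_diskPt_slant (s θ σ : ℝ) : HasDerivAt (fun s => diskPt s (θ + σ * s))
    (-cpt (θ + σ * s) + ((1 - s : ℝ) : ℂ) * (σ * (cpt (θ + σ * s) * Complex.I))) s := by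
  have h : HasDerivAt (fun s : ℝ => ((1 - s : ℝ) : ℂ)) ((-1 : ℝ) : ℂ) s :=
    ((hasDerivAt_id s).const_sub 1).ofReal_comp
  have h1 : HasDerivAt (fun s : ℝ => θ + σ * s) σ s := by
    simpa using ((hasDerivAt_id s).const_mul σ).const_add θ
  have h2 : HasDerivAt (fun s : ℝ => cpt (θ + σ * s))
      (σ • (cpt (θ + σ * s) * Complex.I)) s := HasDerivAt.scomp (g₁ := cpt)
          (h := fun s : ℝ => θ + σ * s) s
        (hasDerivAt_cpt (θ + σ * s)) h1
  refine (h.fun_mul h2).congr_deriv ?_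
  simp

lemma enorm_slant_sub_le {g : ℂ → ℂ} (hg : DifferentiableOn ℂ g unitDisc) {a b : ℝ} (ha : 0 < a)
    (hab : a ≤ b) (hb : b ≤ 1) (θ : ℝ) {σ : ℝ} (hσ : |σ| ≤ 1) :
    ‖g (diskPt a (θ + σ * a)) - g (diskPt b (θ + σ * b))‖ₑ ≤
      ∫⁻ s in Ioc a b, 2 * ‖deriv g (diskPt s (θ + σ * s))‖ₑ := by
  have hmem : ∀ s ∈ Icc a b, diskPt s (θ + σ * s) ∈ unitDisc := fun s hs =>
    diskPt_mem (ha.trans_le hs.1) (hs.2.trans hb) _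
  have hopen : IsOpen unitDisc := Metric.isOpen_ball
  set v : ℝ → ℂ := fun s =>
    -cpt (θ + σ * s) + ((1 - s : ℝ) : ℂ) * (σ * (cpt (θ + σ * s) * Complex.I)) with hv
  have hcpt := continuous_cpt
  have hvc : Continuous v := by fun_prop
  have hd : ∀ s ∈ uIcc a b, HasDerivAt (fun s => g (diskPt s (θ + σ * s)))
      (deriv g (diskPt s (θ + σ * s)) * v s) s := by
    intro s hs
    rw [uIcc_of_le hab] at hs
    have h1 := (hg.differentiableAt (hopen.mem_nhds (hmem s hs))).hasDerivAt
    exact h1.comp s (hasDerivAt_diskPt_slant s θ σ)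
  have hc : ContinuousOn (fun s => deriv g (diskPt s (θ + σ * s)) * v s) (uIcc a b) := by
    rw [uIcc_of_le hab]
    refine ContinuousOn.mul ?_ hvc.continuousOn
    exact (hg.deriv hopen).continuousOn.comp (by fun_prop) hmem
  have h := intervalIntegral.integral_eq_sub_of_hasDerivAt hd hc.intervalIntegrable
  rw [← enorm_neg, neg_sub, ← h, intervalIntegral.integral_of_le hab]
  refine (enorm_integral_le_lintegral_enorm _).trans ?_
  refine setLIntegral_mono' measurableSet_Ioc fun s hs => ?_
  rw [enorm_mul, mul_comm]
  refine mul_le_mul_left ?_ _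
  rw [← ofReal_norm, show (2 : ℝ≥0∞) = ENNReal.ofReal 2 by simp]
  refine ENNReal.ofReal_le_ofReal ?_
  refine (norm_add_le _ _).trans ?_
  rw [norm_neg, norm_mul, norm_mul, norm_mul, norm_cpt, Complex.norm_I, Complex.norm_real,
    Complex.norm_real, Real.norm_eq_abs, Real.norm_eq_abs, abs_of_nonneg (by linarith [hs.2])]
  nlinarith [hs.1, hs.2, abs_nonneg σ]

lemma RegularSet.tendsto_norm_outerFun (hE : RegularSet E C η) (hω : OmegaHyp ω ω' γ)
    (hγ : 2 < γ) (hu : Integrable (fun φ => log (ω (dE E (cpt φ)))) circMeas) {θ : ℝ}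
    (hθ : 0 < dE E (cpt θ)) (σ : ℝ) :
    Tendsto (fun s => ‖outerFun ω E (diskPt s (θ + σ * s))‖) (𝓝[>] 0)
      (𝓝 (boundaryModulus ω E θ)) := by
  have hmem : dE E (cpt θ) ∈ Ioo 0 π := ⟨hθ, dE_cpt_lt_pi hE θ⟩
  rw [boundaryModulus, indicator_of_mem (Ioo_subset_Ioc_self hmem)]
  have hcont : Tendsto (fun s => dE E (cpt (θ + σ * s)) + s) (𝓝[>] 0) (𝓝 (dE E (cpt θ))) := by
    have : Continuous fun s => dE E (cpt (θ + σ * s)) + s :=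
      ((continuous_dE E).comp (continuous_cpt.comp (by fun_prop))).add continuous_id
    simpa using (this.tendsto 0).mono_left nhdsWithin_le_nhds
  have hlog : Tendsto (fun s => log (ω (dE E (cpt (θ + σ * s)) + s))) (𝓝[>] 0)
      (𝓝 (log (ω (dE E (cpt θ))))) :=
    ((hω.hasDeriv hmem).continuousAt.tendsto.comp hcont).log (hω.pos hmem.1 hmem.2.le).ne'
  have herr : Tendsto (fun s => oscConst C η γ * (s / (dE E (cpt (θ + σ * s)) + s)) ^ (3 / 4 : ℝ))
      (𝓝[>] 0) (𝓝 0) := by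
    have h1 : Tendsto (fun s : ℝ => s / (dE E (cpt (θ + σ * s)) + s)) (𝓝[>] 0) (𝓝 0) := by
      have := (tendsto_id.mono_left (nhdsWithin_le_nhds (a := (0:ℝ)) (s := Ioi 0))).div hcont hθ.ne'
      rw [zero_div] at this
      exact this
    have h2 := h1.rpow_const (p := (3 / 4 : ℝ)) (Or.inr (by norm_num))
    rw [zero_rpow (by norm_num)] at h2
    simpa using h2.const_mul (oscConst C η γ)
  have hev : ∀ᶠ s in 𝓝[>] (0:ℝ), s ∈ Ioc (0:ℝ) 1 := Ioc_mem_nhdsGT one_pos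
  have hdiff : Tendsto (fun s => log ‖outerFun ω E (diskPt s (θ + σ * s))‖ -
      log (ω (dE E (cpt (θ + σ * s)) + s))) (𝓝[>] 0) (𝓝 0) := by
    refine squeeze_zero_norm' ?_ herr
    filter_upwards [hev] with s hs
    exact hE.abs_log_norm_outerFun_le hω hγ hu hs.1 hs.2 _
  have hsum := (hdiff.add hlog).rexp
  rw [zero_add, exp_log (hω.pos hmem.1 hmem.2.le)] at hsum
  refine hsum.congr fun s => ?_
  rw [sub_add_cancel, exp_log]
  exact norm_pos_iff.2 (Complex.exp_ne_zero _)

lemma RegularSet.enorm_boundary_sub_le (hE : RegularSet E C η) (hω : OmegaHyp ω ω' γ)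
    (hγ : 2 < γ) (hu : Integrable (fun φ => log (ω (dE E (cpt φ)))) circMeas) {θ : ℝ}
    (hθ : 0 < dE E (cpt θ)) {σ : ℝ} (hσ : |σ| ≤ 1) {b : ℝ} (hb : b ∈ Ioc (0:ℝ) 1) :
    ‖boundaryModulus ω E θ - ‖outerFun ω E (diskPt b (θ + σ * b))‖‖ₑ ≤
      ∫⁻ s in Ioc 0 b, 2 * ‖deriv (outerFun ω E) (diskPt s (θ + σ * s))‖ₑ := by
  have h := ((hE.tendsto_norm_outerFun hω hγ hu hθ σ).sub_const
    ‖outerFun ω E (diskPt b (θ + σ * b))‖).enorm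
  refine le_of_tendsto h ?_
  filter_upwards [Ioc_mem_nhdsGT hb.1] with a ha
  calc _ ≤ ‖outerFun ω E (diskPt a (θ + σ * a)) - outerFun ω E (diskPt b (θ + σ * b))‖ₑ := by
        rw [← ofReal_norm, ← ofReal_norm (_ - _ : ℂ)]
        exact ENNReal.ofReal_le_ofReal (abs_norm_sub_norm_le _ _)
    _ ≤ _ := enorm_slant_sub_le (differentiableOn_outerFun hu) ha.1 ha.2 hb.2 θ hσ
    _ ≤ _ := lintegral_mono_set (Ioc_subset_Ioc_left ha.1.le)

lemma RegularSet.ae_pos_add (hE : RegularSet E C η) (t : ℝ) :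
    ∀ᵐ θ ∂circMeas, 0 < dE E (cpt (θ + t)) := by
  set f : ℝ → ℝ≥0∞ := fun θ => {θ : ℝ | dE E (cpt θ) ≤ 0}.indicator 1 θ with hf
  have hm : MeasurableSet {θ : ℝ | dE E (cpt θ) ≤ 0} := measurableSet_dE_le E 0
  have hper : Function.Periodic f (2 * π) := fun θ => by
    simp only [hf, indicator_apply, mem_ofPred_eq, cpt_periodic θ, Pi.one_apply]
  have h := lintegral_circMeas_add hper t
  have h0 : ∫⁻ θ, f θ ∂circMeas = 0 := by
    rw [lintegral_eq_zero_iff (measurable_one.indicator hm)]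
    filter_upwards [hE.ae_pos] with θ hθ
    simp [hθ]
  have hfm : Measurable fun θ => f (θ + t) :=
    (measurable_one.indicator hm).comp (measurable_add_const t)
  rw [h0, lintegral_eq_zero_iff hfm] at h
  filter_upwards [h] with θ hθ
  by_contra hn
  simp [hf, not_lt.1 hn] at hθ

end Boundary

section Douglas

variable {ω ω' : ℝ → ℝ} {γ : ℝ} {E : Set ℂ} {C η : ℝ}

lemma lintegral_leg_sq_le {q : ℝ × ℝ → ℝ≥0∞} (hq : Measurable q)
    (hper : ∀ s, Function.Periodic (fun θ => q (s, θ)) (2 * π)) {b : ℝ} (hb : 0 ≤ b) (τ σ : ℝ) :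
    ∫⁻ θ, (∫⁻ s in Ioc 0 b, q (s, θ + τ + σ * s)) ^ 2 ∂circMeas ≤
      ENNReal.ofReal (2 * b ^ (1 / 2 : ℝ)) * ∫⁻ s in Ioc 0 b, ENNReal.ofReal (s ^ (1 / 2 : ℝ)) *
        ∫⁻ θ, q (s, θ) ^ 2 ∂circMeas := by
  have hm : Measurable fun p : ℝ × ℝ => q (p.2, p.1 + τ + σ * p.2) :=
    hq.comp (measurable_snd.prodMk (by fun_prop))
  have hm1 : ∀ θ, Measurable fun s : ℝ => q (s, θ + τ + σ * s) := fun θ =>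
    hq.comp (measurable_id.prodMk (by fun_prop))
  have hpt : ∀ θ, (∫⁻ s in Ioc 0 b, q (s, θ + τ + σ * s)) ^ 2 ≤
      ENNReal.ofReal (2 * b ^ (1 / 2 : ℝ)) *
        ∫⁻ s in Ioc 0 b, ENNReal.ofReal (s ^ (1 / 2 : ℝ)) * q (s, θ + τ + σ * s) ^ 2 := by
    intro θ
    have e1 : ∫⁻ s in Ioc 0 b, q (s, θ + τ + σ * s) = ∫⁻ s in Ioc 0 b,
        ENNReal.ofReal (s ^ (-(1 / 4) : ℝ)) *
          (ENNReal.ofReal (s ^ (1 / 4 : ℝ)) * q (s, θ + τ + σ * s)) := by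
      refine setLIntegral_congr_fun measurableSet_Ioc fun s hs => ?_
      have hs0 : 0 < s := hs.1
      rw [← mul_assoc, ← ENNReal.ofReal_mul (by positivity), ← rpow_add hs0]
      norm_num
    rw [e1]
    refine (lintegral_mul_sq_le _ (by fun_prop) ((Measurable.mul (by fun_prop)
      (hm1 θ)).aemeasurable)).trans (le_of_eq ?_)
    have e2 : ∫⁻ s in Ioc 0 b, ENNReal.ofReal (s ^ (-(1 / 4) : ℝ)) ^ 2 =
        ENNReal.ofReal (2 * b ^ (1 / 2 : ℝ)) := by
      rw [setLIntegral_congr_fun (g := fun s => ENNReal.ofReal (s ^ (-(1 / 2) : ℝ)))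
        measurableSet_Ioc fun s hs => ?_]
      · rw [lintegral_Ioc_rpow (by norm_num) hb]
        congr 1
        norm_num
        ring
      · have hs0 : 0 < s := hs.1
        simp only
        rw [← ENNReal.ofReal_pow (by positivity), ← rpow_natCast, ← rpow_mul hs0.le]
        norm_num
    rw [e2]
    congr 1
    refine setLIntegral_congr_fun measurableSet_Ioc fun s hs => ?_
    have hs0 : 0 < s := hs.1
    rw [Pi.mul_apply, mul_pow, ← ENNReal.ofReal_pow (by positivity), ← rpow_natCast,
        ← rpow_mul hs0.le]
    norm_num
  calc _ ≤ ∫⁻ θ, ENNReal.ofReal (2 * b ^ (1 / 2 : ℝ)) * (∫⁻ s in Ioc 0 b,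
          ENNReal.ofReal (s ^ (1 / 2 : ℝ)) * q (s, θ + τ + σ * s) ^ 2) ∂circMeas :=
        lintegral_mono hpt
    _ = _ := by
        rw [lintegral_const_mul' _ _ ENNReal.ofReal_ne_top, lintegral_lintegral_swap]
        · congr 1
          refine lintegral_congr fun s => ?_
          rw [lintegral_const_mul' _ _ ENNReal.ofReal_ne_top]
          congr 1
          have hp2 : Function.Periodic (fun θ => q (s, θ) ^ 2) (2 * π) := fun θ => by
            have := hper s θ
            simp only at this ⊢
            rw [this]
          have := lintegral_circMeas_add hp2 (τ + σ * s)
          simpa only [add_assoc] using this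
        · have h1 : Measurable fun p : ℝ × ℝ => ENNReal.ofReal (p.2 ^ (1 / 2 : ℝ)) := by fun_prop
          exact (h1.mul (hm.pow_const 2)).aemeasurable

lemma lintegral_hardy_le {Q : ℝ → ℝ≥0∞} (hQ : Measurable Q) :
    ∫⁻ t in Ioc (0:ℝ) 1, ENNReal.ofReal (t ^ (-2 : ℝ)) * (ENNReal.ofReal (2 *
        (t / 2) ^ (1 / 2 : ℝ)) *
      ∫⁻ s in Ioc 0 (t / 2), ENNReal.ofReal (s ^ (1 / 2 : ℝ)) * Q s) ≤
      4 * ∫⁻ s in Ioc (0:ℝ) (1 / 2), Q s := by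
  have hS : MeasurableSet {p : ℝ × ℝ | p.2 < p.1} := measurableSet_lt (by fun_prop) (by fun_prop)
  calc _ ≤ ∫⁻ t in Ioc (0:ℝ) 1, ∫⁻ s in Ioc (0:ℝ) (1 / 2), {p : ℝ × ℝ | p.2 < p.1}.indicator
          (fun p => ENNReal.ofReal (2 * p.1 ^ (-(3 / 2) : ℝ)) *
            (ENNReal.ofReal (p.2 ^ (1 / 2 : ℝ)) * Q p.2)) (t, s) := by
        refine setLIntegral_mono' measurableSet_Ioc fun t ht => ?_
        have ht0 : 0 < t := ht.1
        rw [← mul_assoc, ← ENNReal.ofReal_mul (by positivity),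
            ← lintegral_const_mul' _ _ ENNReal.ofReal_ne_top,
          ← lintegral_indicator measurableSet_Ioc, ← lintegral_indicator measurableSet_Ioc]
        refine lintegral_mono fun s => ?_
        by_cases hs : s ∈ Ioc 0 (t / 2)
        · rw [indicator_of_mem hs, indicator_of_mem (show s ∈ Ioc (0:ℝ) (1 / 2) from
            ⟨hs.1, hs.2.trans (by linarith [ht.2])⟩),
            indicator_of_mem (show (t, s) ∈ {p : ℝ × ℝ | p.2 < p.1} from by
              show s < t
              linarith [hs.2])]
          refine mul_le_mul_left (ENNReal.ofReal_le_ofReal ?_) _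
          have h1 : (t / 2) ^ (1 / 2 : ℝ) ≤ t ^ (1 / 2 : ℝ) :=
            rpow_le_rpow (by linarith) (by linarith) (by norm_num)
          have h2 : t ^ (-(3 / 2) : ℝ) = t ^ (-2 : ℝ) * t ^ (1 / 2 : ℝ) := by
            rw [← rpow_add ht0]; norm_num
          have h3 : 0 ≤ t ^ (-2 : ℝ) := by positivity
          simp only
          rw [h2]
          nlinarith
        · rw [indicator_of_notMem hs]; exact zero_le
    _ = ∫⁻ s in Ioc (0:ℝ) (1 / 2), ∫⁻ t in Ioc (0:ℝ) 1, {p : ℝ × ℝ | p.2 < p.1}.indicator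
          (fun p => ENNReal.ofReal (2 * p.1 ^ (-(3 / 2) : ℝ)) *
            (ENNReal.ofReal (p.2 ^ (1 / 2 : ℝ)) * Q p.2)) (t, s) := by
        refine lintegral_lintegral_swap (Measurable.aemeasurable ?_)
        have h1 : Measurable fun p : ℝ × ℝ => ENNReal.ofReal (2 * p.1 ^ (-(3 / 2) : ℝ)) :=
            by fun_prop
        have h2 : Measurable fun p : ℝ × ℝ => ENNReal.ofReal (p.2 ^ (1 / 2 : ℝ)) := by fun_prop
        exact (h1.mul (h2.mul (hQ.comp measurable_snd))).indicator hS
    _ ≤ ∫⁻ s in Ioc (0:ℝ) (1 / 2), 4 * Q s := by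
        refine setLIntegral_mono' measurableSet_Ioc fun s hs => ?_
        have hs0 : 0 < s := hs.1
        calc _ ≤ ∫⁻ t in Ioi s, ENNReal.ofReal (t ^ (-(3 / 2) : ℝ)) *
              (ENNReal.ofReal (2 * s ^ (1 / 2 : ℝ)) * Q s) := by
              rw [← lintegral_indicator measurableSet_Ioc, ← lintegral_indicator measurableSet_Ioi]
              refine lintegral_mono fun t => ?_
              by_cases ht : s < t
              · have ht0 : 0 < t := hs0.trans ht
                rw [indicator_of_mem (show t ∈ Ioi s from ht)]
                refine (indicator_le_self _ _ t).trans ?_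
                simp only
                rw [indicator_of_mem (show (t, s) ∈ {p : ℝ × ℝ | p.2 < p.1} from ht),
                  ENNReal.ofReal_mul zero_le_two, ENNReal.ofReal_mul zero_le_two]
                exact le_of_eq (by ring)
              · refine (indicator_le_self _ _ t).trans ?_
                simp only
                rw [indicator_of_notMem (show (t, s) ∉ {p : ℝ × ℝ | p.2 < p.1} from ht)]
                exact zero_le
          _ = 4 * Q s := by
              rw [lintegral_mul_const _ (by fun_prop), lintegral_Ioi_rpow (by norm_num) hs0,
                  ← mul_assoc,
                ← ENNReal.ofReal_mul (by norm_num; positivity)]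
              congr 1
              rw [show (4 : ℝ≥0∞) = ENNReal.ofReal 4 by norm_num]
              congr 1
              have : s ^ (-(3 / 2) + 1 : ℝ) * s ^ (1 / 2 : ℝ) = 1 := by
                rw [← rpow_add hs0]; norm_num
              rw [div_mul_eq_mul_div, mul_left_comm, this]
              norm_num
    _ = _ := lintegral_const_mul' _ _ (by norm_num)

lemma RegularSet.lintegral_diff_le (hE : RegularSet E C η) (hω : OmegaHyp ω ω' γ)
    (hγ : 2 < γ) (hu : Integrable (fun φ => log (ω (dE E (cpt φ)))) circMeas) :
    ∫⁻ t in Ioc (0:ℝ) 1, ENNReal.ofReal (t ^ (-2 : ℝ)) *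
      ∫⁻ θ, ‖boundaryModulus ω E (θ + t) - boundaryModulus ω E θ‖ₑ ^ 2 ∂circMeas ≤
      128 * ∫⁻ z in unitDisc, ‖deriv (outerFun ω E) z‖ₑ ^ 2 := by
  set F := outerFun ω E with hF
  have hdm : Measurable (deriv F) := measurable_deriv _
  have hdp : Measurable fun p : ℝ × ℝ => diskPt p.1 p.2 := continuous_diskPt.measurable
  set q : ℝ × ℝ → ℝ≥0∞ := fun p => 2 * ‖deriv F (diskPt p.1 p.2)‖ₑ with hq
  have hqm : Measurable q := (hdm.comp hdp).enorm.const_mul 2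
  have hper : ∀ s, Function.Periodic (fun θ => q (s, θ)) (2 * π) := fun s θ => by
    simp only [hq, diskPt_periodic s θ]
  set Q : ℝ → ℝ≥0∞ := fun s => ∫⁻ θ, q (s, θ) ^ 2 ∂circMeas with hQ
  have hQm : Measurable Q := (hqm.pow_const 2).lintegral_prod_right'
  set G := boundaryModulus ω E with hG
  have hfix : ∀ t ∈ Ioc (0:ℝ) 1, ∫⁻ θ, ‖G (θ + t) - G θ‖ₑ ^ 2 ∂circMeas ≤
      4 * (ENNReal.ofReal (2 * (t / 2) ^ (1 / 2 : ℝ)) *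
        ∫⁻ s in Ioc 0 (t / 2), ENNReal.ofReal (s ^ (1 / 2 : ℝ)) * Q s) := by
    intro t ht
    have hb : t / 2 ∈ Ioc (0:ℝ) 1 := ⟨half_pos ht.1, by linarith [ht.2]⟩
    have hpt : ∀ᵐ θ ∂circMeas, ‖G (θ + t) - G θ‖ₑ ^ 2 ≤
        2 * (∫⁻ s in Ioc 0 (t / 2), q (s, θ + t + (-1) * s)) ^ 2 +
          2 * (∫⁻ s in Ioc 0 (t / 2), q (s, θ + 0 + 1 * s)) ^ 2 := by
      filter_upwards [hE.ae_pos, hE.ae_pos_add t] with θ h1 h2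
      refine le_trans ?_ (ennreal_add_sq_le _ _)
      refine pow_le_pow_left₀ zero_le ?_ 2
      have a1 := hE.enorm_boundary_sub_le hω hγ hu h2 (σ := -1) (by simp) hb
      have a2 := hE.enorm_boundary_sub_le hω hγ hu h1 (σ := 1) (by simp) hb
      rw [← hF, ← hG] at a1 a2
      rw [show θ + t + -1 * (t / 2) = θ + 1 * (t / 2) by ring] at a1
      simp only [add_zero, hq]
      refine le_trans ?_ (add_le_add a1 a2)
      rw [← sub_sub_sub_cancel_right (G (θ + t)) (G θ) ‖F (diskPt (t / 2) (θ + 1 * (t / 2)))‖]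
      exact enorm_sub_le
    refine (lintegral_mono_ae hpt).trans ?_
    have hmA : ∀ τ σ : ℝ, Measurable fun θ => (∫⁻ s in Ioc 0 (t / 2), q (s,
        θ + τ + σ * s)) ^ 2 := by
      intro τ σ
      exact (Measurable.lintegral_prod_right' (f := fun p : ℝ × ℝ => q (p.2, p.1 + τ + σ * p.2))
        (hqm.comp (measurable_snd.prodMk (by fun_prop)))).pow_const 2
    rw [lintegral_add_left ((hmA _ _).const_mul 2), lintegral_const_mul _ (hmA _ _),
      lintegral_const_mul _ (hmA _ _)]
    refine (add_le_add (mul_le_mul_right (lintegral_leg_sq_le hqm hper hb.1.le _ _) _)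
      (mul_le_mul_right (lintegral_leg_sq_le hqm hper hb.1.le _ _) _)).trans (le_of_eq ?_)
    rw [← add_mul]
    norm_num
    rfl
  calc _ ≤ ∫⁻ t in Ioc (0:ℝ) 1, 4 * (ENNReal.ofReal (t ^ (-2 : ℝ)) *
          (ENNReal.ofReal (2 * (t / 2) ^ (1 / 2 : ℝ)) *
            ∫⁻ s in Ioc 0 (t / 2), ENNReal.ofReal (s ^ (1 / 2 : ℝ)) * Q s)) := by
        refine setLIntegral_mono' measurableSet_Ioc fun t ht => ?_
        rw [mul_left_comm]
        exact mul_le_mul_right (hfix t ht) _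
    _ ≤ 4 * (4 * ∫⁻ s in Ioc (0:ℝ) (1 / 2), Q s) := by
        rw [lintegral_const_mul' _ _ (by norm_num)]
        exact mul_le_mul_right (lintegral_hardy_le hQm) _
    _ ≤ 4 * (4 * (8 * ∫⁻ z in unitDisc, ‖deriv F z‖ₑ ^ 2)) := by
        gcongr
        rw [lintegral_unitDisc (hdm.enorm.pow_const 2), ← lintegral_const_mul' _ _ (by norm_num)]
        refine le_trans ?_ (lintegral_mono_set (Ioc_subset_Ioc_right (by norm_num :
            (1 / 2 : ℝ) ≤ 1)))
        refine setLIntegral_mono' measurableSet_Ioc fun s hs => ?_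
        have e : Q s = 4 * ∫⁻ θ, ‖deriv F (diskPt s θ)‖ₑ ^ 2 ∂circMeas := by
          simp only [hQ, hq, mul_pow]
          rw [lintegral_const_mul' _ _ (by norm_num)]
          norm_num
        rw [e, ← mul_assoc]
        refine mul_le_mul_left ?_ _
        rw [show (4 : ℝ≥0∞) = ENNReal.ofReal 4 by norm_num, show
            (8 : ℝ≥0∞) = ENNReal.ofReal 8 by norm_num,
          ← ENNReal.ofReal_mul (by norm_num)]
        exact ENNReal.ofReal_le_ofReal (by linarith [hs.2])
    _ = _ := by rw [← mul_assoc, ← mul_assoc]; norm_num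

end Douglas

section Converse

variable {ω ω' : ℝ → ℝ} {γ : ℝ} {E : Set ℂ} {C η : ℝ}

lemma RegularSet.exists_signed_nearest (hE : RegularSet E C η) (θ : ℝ) :
    ∃ σ x : ℝ, |σ| = 1 ∧ 0 ≤ x ∧ 2 / π * x ≤ dE E (cpt θ) ∧ dE E (cpt θ) ≤ x ∧
      ∀ t ∈ Icc 0 x, dE E (cpt (θ + σ * t)) ≤ x - t := by
  obtain ⟨w, hw, h⟩ := hE.compact.exists_infDist_eq_dist hE.nonempty (cpt θ)
  have hn := hE.norm_eq w hw
  set a := Complex.arg (w / cpt θ) with ha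
  have hwn : ‖w / cpt θ‖ = 1 := by rw [norm_div, hn, norm_cpt, div_one]
  have hwe : w = cpt (θ + a) := by
    have h1 := Complex.norm_mul_exp_arg_mul_I (w / cpt θ)
    rw [hwn, Complex.ofReal_one, one_mul, ← ha] at h1
    rw [cpt_add, cpt.eq_1 a, h1, mul_div_cancel₀ _ (cpt_ne_zero θ)]
  have hapi : |a| ≤ π := Complex.abs_arg_le_pi _
  have hd : dE E (cpt θ) = 2 * sin (|a| / 2) := by
    rw [dE, h, dist_eq_norm, hwe, norm_cpt_sub]
    congr 1
    rw [show (θ - (θ + a)) / 2 = -(a / 2) by ring, sin_neg, abs_neg]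
    rcases le_total 0 a with h0 | h0
    · rw [abs_of_nonneg h0] at hapi ⊢
      exact abs_of_nonneg (sin_nonneg_of_nonneg_of_le_pi (by linarith) (by linarith [pi_pos]))
    · rw [abs_of_nonpos h0] at hapi ⊢
      rw [neg_div, sin_neg]
      exact abs_of_nonpos (sin_nonpos_of_nonpos_of_neg_pi_le (by linarith) (by linarith [pi_pos]))
  obtain ⟨σ, hσ, hσa⟩ : ∃ σ : ℝ, |σ| = 1 ∧ a = σ * |a| := by
    rcases le_total 0 a with h0 | h0
    · exact ⟨1, by simp, by rw [abs_of_nonneg h0, one_mul]⟩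
    · exact ⟨-1, by simp, by rw [abs_of_nonpos h0]; ring⟩
  refine ⟨σ, |a|, hσ, abs_nonneg a, ?_, ?_, fun t ht => ?_⟩
  · have := mul_le_sin (x := |a| / 2) (by positivity) (by linarith)
    rw [hd]; linarith
  · have := sin_le (x := |a| / 2) (by positivity)
    rw [hd]; linarith
  · refine (dE_le_norm hw).trans ?_
    rw [hwe]
    refine (norm_cpt_sub_le _ _).trans (le_of_eq ?_)
    have : θ + σ * t - (θ + a) = σ * (t - |a|) := by
      nth_rewrite 1 [hσa]; ring
    rw [this, abs_mul, hσ, one_mul, abs_of_nonpos (by linarith [ht.2])]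
    ring

lemma RegularSet.deriv_mul_le (hE : RegularSet E C η) (hω : OmegaHyp ω ω' γ) (hγ : 2 < γ)
    {θ φ a : ℝ} (ha : 0 ≤ a) (h : a < dE E (cpt θ)) (hφ : dE E (cpt φ) ≤ dE E (cpt θ) - a) :
    ω' (dE E (cpt θ)) * a ≤ boundaryModulus ω E θ - boundaryModulus ω E φ := by
  have hmem : dE E (cpt θ) ∈ Ioo 0 π := ⟨ha.trans_lt h, dE_cpt_lt_pi hE θ⟩
  have hs : dE E (cpt θ) - a ∈ Ioc 0 π := ⟨by linarith, by linarith [hmem.2]⟩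
  have h1 := hω.tangent_line hγ hmem hs
  have h2 : boundaryModulus ω E φ ≤ ω (dE E (cpt θ) - a) := by
    by_cases h0 : dE E (cpt φ) ∈ Ioc 0 π
    · rw [boundaryModulus, indicator_of_mem h0]
      exact hω.mono h0.1 hφ hs.2
    · rw [boundaryModulus, indicator_of_notMem h0]
      exact (hω.pos hs.1 hs.2).le
  rw [boundaryModulus, indicator_of_mem (Ioo_subset_Ioc_self hmem)]
  linarith

lemma RegularSet.derivWeight_le_lintegral (hE : RegularSet E C η) (hω : OmegaHyp ω ω' γ)
    (hγ : 2 < γ) {θ σ x : ℝ} (hθ : 0 < dE E (cpt θ)) (hx1 : x ≤ 1)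
    (h1 : 2 / π * x ≤ dE E (cpt θ)) (h2 : dE E (cpt θ) ≤ x)
    (h3 : ∀ t ∈ Icc 0 x, dE E (cpt (θ + σ * t)) ≤ x - t) :
    ENNReal.ofReal (derivWeight ω (dE E (cpt θ))) ≤ 200 *
      ∫⁻ t in Ioc (0:ℝ) 1, ENNReal.ofReal (t ^ (-2 : ℝ)) *
        ‖boundaryModulus ω E (θ + σ * t) - boundaryModulus ω E θ‖ₑ ^ 2 := by
  have hx0 : 0 < x := hθ.trans_le h2
  have hmem : dE E (cpt θ) ∈ Ioo 0 π := ⟨hθ, dE_cpt_lt_pi hE θ⟩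
  have hpos := hω.deriv_nonneg hmem
  rw [hω.derivWeight_eq hmem]
  set D := ω' (dE E (cpt θ)) with hD
  have hpi : 63 / 100 ≤ 2 / π := by
    rw [le_div_iff₀ pi_pos]; linarith [pi_lt_d2]
  have h4 : 63 / 100 * x ≤ dE E (cpt θ) := (mul_le_mul_of_nonneg_right hpi hx0.le).trans h1
  have hlow : ∀ t ∈ Ioc (x / 2) x, ENNReal.ofReal (D ^ 2 / 100) ≤ ENNReal.ofReal (t ^ (-2 : ℝ)) *
      ‖boundaryModulus ω E (θ + σ * t) - boundaryModulus ω E θ‖ₑ ^ 2 := by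
    intro t ht
    have ht0 : 0 < t := by linarith [ht.1]
    have h5 := hE.deriv_mul_le hω hγ (θ := θ) (φ := θ + σ * t) (a := t / 10) (by linarith)
      (by linarith [ht.2]) ((h3 t ⟨ht0.le, ht.2⟩).trans (by linarith [ht.1]))
    rw [← hD] at h5
    rw [← ofReal_norm, ← ENNReal.ofReal_pow (norm_nonneg _), ← ENNReal.ofReal_mul (by positivity)]
    refine ENNReal.ofReal_le_ofReal ?_
    rw [Real.norm_eq_abs, sq_abs, rpow_neg ht0.le, show (2:ℝ) = ((2:ℕ):ℝ) by norm_num,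
      rpow_natCast, inv_mul_eq_div, le_div_iff₀ (by positivity)]
    have h6 : 0 ≤ D * (t / 10) := by positivity
    nlinarith
  calc ENNReal.ofReal (dE E (cpt θ) * D ^ 2)
      ≤ 200 * (ENNReal.ofReal (D ^ 2 / 100) * ENNReal.ofReal (x - x / 2)) := by
        rw [← ENNReal.ofReal_mul (by positivity), show
            (200 : ℝ≥0∞) = ENNReal.ofReal 200 by norm_num,
          ← ENNReal.ofReal_mul (by norm_num)]
        refine ENNReal.ofReal_le_ofReal ?_
        nlinarith [mul_le_mul_of_nonneg_right h2 (sq_nonneg D)]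
    _ = 200 * ∫⁻ t in Ioc (x / 2) x, ENNReal.ofReal (D ^ 2 / 100) := by
        rw [lintegral_const, Measure.restrict_apply_univ, Real.volume_Ioc]
    _ ≤ 200 * ∫⁻ t in Ioc (x / 2) x, ENNReal.ofReal (t ^ (-2 : ℝ)) *
        ‖boundaryModulus ω E (θ + σ * t) - boundaryModulus ω E θ‖ₑ ^ 2 :=
        mul_le_mul_right (setLIntegral_mono' measurableSet_Ioc hlow) _
    _ ≤ _ := mul_le_mul_right (lintegral_mono_set (Ioc_subset_Ioc (by linarith) hx1)) _

lemma RegularSet.lintegral_derivWeight_ne_top (hE : RegularSet E C η) (hω : OmegaHyp ω ω' γ)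
    (hγ : 2 < γ) (hu : Integrable (fun φ => log (ω (dE E (cpt φ)))) circMeas)
    (hF : ∫⁻ z in unitDisc, ‖deriv (outerFun ω E) z‖ₑ ^ 2 ≠ ∞) :
    ∫⁻ θ, ENNReal.ofReal (derivWeight ω (dE E (cpt θ))) ∂circMeas ≠ ∞ := by
  set G := boundaryModulus ω E with hG
  have hGm : Measurable G := hω.measurable_boundaryModulus E
  set T : ℝ → ℝ → ℝ≥0∞ := fun σ θ => ∫⁻ t in Ioc (0:ℝ) 1, ENNReal.ofReal (t ^ (-2 : ℝ)) *
    ‖G (θ + σ * t) - G θ‖ₑ ^ 2 with hT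
  have hjm : ∀ σ : ℝ, Measurable fun p : ℝ × ℝ => ENNReal.ofReal (p.2 ^ (-2 : ℝ)) *
      ‖G (p.1 + σ * p.2) - G p.1‖ₑ ^ 2 := by
    intro σ
    have h1 : Measurable fun p : ℝ × ℝ => G (p.1 + σ * p.2) := hGm.comp (by fun_prop)
    have h2 : Measurable fun p : ℝ × ℝ => G p.1 := hGm.comp measurable_fst
    have h3 : Measurable fun p : ℝ × ℝ => ENNReal.ofReal (p.2 ^ (-2 : ℝ)) := by fun_prop
    exact h3.mul ((h1.sub h2).enorm.pow_const 2)
  have hTm : ∀ σ, Measurable (T σ) := fun σ => (hjm σ).lintegral_prod_right'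
  have hswap : ∀ σ, ∫⁻ θ, T σ θ ∂circMeas = ∫⁻ t in Ioc (0:ℝ) 1, ENNReal.ofReal (t ^ (-2 : ℝ)) *
      ∫⁻ θ, ‖G (θ + σ * t) - G θ‖ₑ ^ 2 ∂circMeas := by
    intro σ
    rw [hT, lintegral_lintegral_swap (hjm σ).aemeasurable]
    exact lintegral_congr fun t => lintegral_const_mul' _ _ ENNReal.ofReal_ne_top
  have hdouglas := hE.lintegral_diff_le hω hγ hu
  have hfin : ∀ σ : ℝ, |σ| = 1 → ∫⁻ θ, T σ θ ∂circMeas < ∞ := by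
    have h1 : ∫⁻ θ, T 1 θ ∂circMeas < ∞ := by
      rw [hswap]
      simp only [one_mul]
      exact hdouglas.trans_lt (ENNReal.mul_lt_top (by norm_num) hF.lt_top)
    intro σ hσ
    rcases (abs_eq zero_le_one).1 hσ with rfl | rfl
    · exact h1
    · rw [hswap] at h1 ⊢
      refine lt_of_eq_of_lt (lintegral_congr fun t => ?_) h1
      congr 1
      have hp : Function.Periodic (fun θ => ‖G (θ + -1 * t) - G θ‖ₑ ^ 2) (2 * π) := fun θ => by
        have h5 := boundaryModulus_periodic ω E (θ + -1 * t)
        have h6 := boundaryModulus_periodic ω E θ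
        rw [← hG] at h5 h6
        simp only
        rw [show θ + 2 * π + -1 * t = θ + -1 * t + 2 * π by ring, h5, h6]
      rw [← lintegral_circMeas_add hp t]
      refine lintegral_congr fun θ => ?_
      rw [show θ + t + -1 * t = θ by ring, ← enorm_neg, neg_sub, one_mul]
  have hpt : ∀ᵐ θ ∂circMeas, ENNReal.ofReal (derivWeight ω (dE E (cpt θ))) ≤
      ENNReal.ofReal (derivWeight ω (1 / 2)) + 200 * (T 1 θ + T (-1) θ) := by
    filter_upwards [hE.ae_pos] with θ hθ
    obtain ⟨σ, x, hσ, hx0, h1, h2, h3⟩ := hE.exists_signed_nearest θ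
    rcases le_or_gt x 1 with hx1 | hx1
    · refine le_trans ?_ le_add_self
      refine (hE.derivWeight_le_lintegral hω hγ hθ hx1 h1 h2 h3).trans ?_
      refine mul_le_mul_right ?_ _
      rcases (abs_eq zero_le_one).1 hσ with rfl | rfl
      · exact le_self_add
      · exact le_add_self
    · refine le_trans (ENNReal.ofReal_le_ofReal ?_) le_self_add
      have hp : 1 / 2 ≤ 2 / π := by
        rw [div_le_div_iff₀ two_pos pi_pos]; linarith [pi_lt_d2]
      refine hω.antitoneOn_derivWeight hγ ⟨by norm_num, by linarith [pi_gt_three]⟩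
        ⟨hθ, dE_cpt_lt_pi hE θ⟩ ?_
      nlinarith
  refine ((lintegral_mono_ae hpt).trans_lt ?_).ne
  rw [lintegral_add_left measurable_const, lintegral_const,
    lintegral_const_mul' _ _ (by norm_num), lintegral_add_left (hTm 1), circMeas_univ]
  exact ENNReal.add_lt_top.2 ⟨ENNReal.mul_lt_top ENNReal.ofReal_lt_top ENNReal.ofReal_lt_top,
    ENNReal.mul_lt_top (by norm_num)
      (ENNReal.add_lt_top.2 ⟨hfin 1 (by simp), hfin (-1) (by simp)⟩)⟩

end Converse

section Capacity

lemma nbhdMeas_ne_zero {ξ : ℕ → ℝ} (hξ : ∀ n, ξ n ∈ Ioo (0 : ℝ) (1 / 2)) {t : ℝ}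
    (ht : t ∈ Ioc (0 : ℝ) 1) : nbhdMeas (gCantorSet ξ) t ≠ 0 := by
  intro h0
  obtain ⟨n, -, hn⟩ := exists_generation hξ ht.1 ht.2
  have h := ofReal_le_nbhdMeas hξ hn
  rw [h0, mul_zero, nonpos_iff_eq_zero, ENNReal.ofReal_eq_zero] at h
  exact h.not_gt ht.1

lemma toReal_nbhdMeas (E : Set ℂ) (t : ℝ) : (nbhdMeas E t).toReal = EtMeas E t := by
  rw [nbhdMeas, Measure.restrict_apply (measurableSet_dE_le E t), inter_comm]
  rfl

lemma lintegral_inv_nbhdMeas_ne_top {E : Set ℂ}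
    (hm : ∀ t ∈ Ioc (0 : ℝ) 1, nbhdMeas E t ≠ 0)
    (hcap : IntegrableOn (fun t => (EtMeas E t)⁻¹) (Ioc (0 : ℝ) 1) volume) :
    ∫⁻ t in Ioc (0 : ℝ) 1, (nbhdMeas E t)⁻¹ ≠ ∞ := by
  refine ne_of_eq_of_ne (setLIntegral_congr_fun measurableSet_Ioc fun t ht => ?_) hcap.2.ne
  have hfin : nbhdMeas E t ≠ ∞ := ((nbhdMeas_le E t).trans_lt ENNReal.ofReal_lt_top).ne
  have hpos := ENNReal.toReal_pos (hm t ht) hfin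
  change _ = ‖(EtMeas E t)⁻¹‖ₑ
  rw [← toReal_nbhdMeas, Real.enorm_of_nonneg (inv_nonneg.2 hpos.le),
    ENNReal.ofReal_inv_of_pos hpos, ENNReal.ofReal_toReal hfin]

end Capacity

end

/-- For a generalized Cantor set `E` with `limsup ζ_n < 1/2` and positive
logarithmic capacity (`∫_0^1 dt/|E_t| < ∞`), the following are equivalent:
`f_{ω,E} ∈ 𝒟`, `f_{ω,E} ∈ 𝓜(𝒟)`, and `∫_𝕋 dist(ζ,E)ω'(dist(ζ,E))² |dζ| < ∞`. -/
theorem statement18 (ξ : ℕ → ℝ) (hξ : ∀ n, ξ n ∈ Set.Ioo (0:ℝ) (1/2))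
    (hlim : Filter.limsup ξ Filter.atTop < 1/2)
    (hcap : IntegrableOn (fun t => (EtMeas (gCantorSet ξ) t)⁻¹) (Set.Ioc (0:ℝ) 1) volume)
    (ω ω' : ℝ → ℝ) (γ : ℝ) (hγ : 2 < γ) (hω : OmegaHyp ω ω' γ)
    (hlog : LogOmegaInt ω (gCantorSet ξ)) :
    (MemDirichlet (outerFun ω (gCantorSet ξ)) ↔
      IntegrableOn
        (fun θ => dE (gCantorSet ξ) (cpt θ) * (ω' (dE (gCantorSet ξ) (cpt θ))) ^ 2)
        (Set.Ioc 0 (2 * π)) volume) ∧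
    (IsMultiplierD (outerFun ω (gCantorSet ξ)) ↔
      IntegrableOn
        (fun θ => dE (gCantorSet ξ) (cpt θ) * (ω' (dE (gCantorSet ξ) (cpt θ))) ^ 2)
        (Set.Ioc 0 (2 * π)) volume) := by
  obtain ⟨C, η, hE⟩ := exists_regularSet hξ hlim
  have hm : ∀ t ∈ Ioc (0 : ℝ) 1, nbhdMeas (gCantorSet ξ) t ≠ 0 := fun _ => nbhdMeas_ne_zero hξ
  have hmul : IntegrableOn
      (fun θ => dE (gCantorSet ξ) (cpt θ) * (ω' (dE (gCantorSet ξ) (cpt θ))) ^ 2)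
      (Ioc 0 (2 * π)) volume → IsMultiplierD (outerFun ω (gCantorSet ξ)) := fun h =>
    hE.isMultiplierD_outerFun hω hγ hlog hm (lintegral_inv_nbhdMeas_ne_top hm hcap)
      ((hE.integrable_iff hω).1 h)
  have hint : MemDirichlet (outerFun ω (gCantorSet ξ)) → IntegrableOn
      (fun θ => dE (gCantorSet ξ) (cpt θ) * (ω' (dE (gCantorSet ξ) (cpt θ))) ^ 2)
      (Ioc 0 (2 * π)) volume := fun h =>
    (hE.integrable_iff hω).2
      (hE.lintegral_derivWeight_ne_top hω hγ hlog ((integrableOn_deriv_sq_iff _).1 h.2.2))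
  exact ⟨⟨hint, fun h => (hmul h).memDirichlet⟩, ⟨fun h => hint h.memDirichlet, hmul⟩⟩
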